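/- Let Γ be a piecewise Dini-smooth Jordan curve with l ≥ 1 corners z_1,…,z_l and associated exterior angles λ_1π,…,λ_lπ, and set Λ_k := max{λ_k, 2−λ_k} for k = 1,…,l. Then limsup_{n→∞} ‖F_n‖_Γ ≤ max_{1≤k≤l} Λ_k, where F_n is the n-th Faber polynomial of Γ. -/

import Mathlib

open Filter Topology MeasureTheory Set

noncomputable section

/-- The supremum norm of `f` over the set `Γ`. -/
def supNorm (Γ : Set ℂ) (f : ℂ → ℂ) : ℝ := sSup ((fun z => ‖f z‖) '' Γ)

/-- `Γ` is a Jordan curve: the image of a continuous `2π`-periodic map `ℝ → ℂ` that is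
injective modulo the period. -/
def IsJordanCurve (Γ : Set ℂ) : Prop :=
  ∃ f : ℝ → ℂ, Continuous f ∧ Function.Periodic f (2 * Real.pi) ∧
    (∀ s t : ℝ, f s = f t → ∃ n : ℤ, t - s = n * (2 * Real.pi)) ∧
    Γ = Set.range f

/-- The modulus of continuity of `g` on the interval `[a, b]`, evaluated at `t`. -/
def modCont (g : ℝ → ℂ) (a b t : ℝ) : ℝ :=
  sSup {d : ℝ | ∃ s₁ ∈ Set.Icc a b, ∃ s₂ ∈ Set.Icc a b, |s₁ - s₂| ≤ t ∧ d = ‖g s₁ - g s₂‖}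

/-- `γ`, with derivative `γ'`, parametrizes a Dini-smooth Jordan arc on `[a, b]`:
`γ'` is continuous and nonvanishing on `[a, b]` and its modulus of continuity `ω`
satisfies `∫₀¹ ω(t)/t dt < ∞`. -/
structure IsDiniSmoothArc (γ γ' : ℝ → ℂ) (a b : ℝ) : Prop where
  lt : a < b
  inj : Set.InjOn γ (Set.Icc a b)
  deriv : ∀ s ∈ Set.Icc a b, HasDerivWithinAt γ (γ' s) (Set.Icc a b) s
  cont : ContinuousOn γ' (Set.Icc a b)
  nonzero : ∀ s ∈ Set.Icc a b, γ' s ≠ 0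
  dini : MeasureTheory.IntegrableOn (fun t => modCont γ' a b t / t) (Set.Ioc (0 : ℝ) 1)

/-- A piecewise Dini-smooth Jordan curve: a Jordan curve which is the union of finitely many
Dini-smooth arcs. -/
def IsPiecewiseDiniSmoothJordanCurve (Γ : Set ℂ) : Prop :=
  IsJordanCurve Γ ∧
    ∃ (N : ℕ) (γ γ' : Fin N → ℝ → ℂ) (a b : Fin N → ℝ),
      (∀ i, IsDiniSmoothArc (γ i) (γ' i) (a i) (b i)) ∧
      Γ = ⋃ i, γ i '' Set.Icc (a i) (b i)

/-- The unbounded connected component `Ω` of the complement of `Γ` (in the finite plane). -/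
def exteriorDomain (Γ : Set ℂ) : Set ℂ :=
  {z | z ∈ Γᶜ ∧ ¬ Bornology.IsBounded (connectedComponentIn Γᶜ z)}

/-- `φ` is the canonical exterior conformal map of `Γ` onto `{|w| > 1}` with `φ(∞) = ∞` and
`φ(z)/z → c⁻¹` as `z → ∞`; the constant `c` is then the logarithmic capacity of `Γ`. -/
structure IsExteriorMap (Γ : Set ℂ) (φ : ℂ → ℂ) (c : ℝ) : Prop where
  cpos : 0 < c
  diff : DifferentiableOn ℂ φ (exteriorDomain Γ)
  bij : Set.BijOn φ (exteriorDomain Γ) {w : ℂ | 1 < ‖w‖}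
  tendsto : Filter.Tendsto (fun z => φ z / z)
    (Bornology.cobounded ℂ ⊓ Filter.principal (exteriorDomain Γ)) (nhds ((c : ℂ)⁻¹))

/-- `F` is the `n`-th Faber polynomial of `Γ`: the unique polynomial with
`φ(z)^n − F(z) → 0` as `z → ∞` in the exterior domain. -/
def IsFaberPoly (Γ : Set ℂ) (φ : ℂ → ℂ) (n : ℕ) (F : Polynomial ℂ) : Prop :=
  Filter.Tendsto (fun z => φ z ^ n - F.eval z)
    (Bornology.cobounded ℂ ⊓ Filter.principal (exteriorDomain Γ)) (nhds 0)

/-- `ψ` is the inverse of `φ`, extended to a homeomorphism of `{|w| ≥ 1}` onto the closure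
of the exterior domain; on the unit circle it parametrizes `Γ`. -/
structure IsExteriorParam (Γ : Set ℂ) (φ ψ : ℂ → ℂ) : Prop where
  cont : ContinuousOn ψ {w : ℂ | 1 ≤ ‖w‖}
  inj : Set.InjOn ψ {w : ℂ | 1 ≤ ‖w‖}
  inv : ∀ w : ℂ, 1 < ‖w‖ → ψ w ∈ exteriorDomain Γ ∧ φ (ψ w) = w
  boundary : ∀ w : ℂ, ‖w‖ = 1 → ψ w ∈ Γ
  boundary_surj : ∀ z ∈ Γ, ∃ w : ℂ, ‖w‖ = 1 ∧ ψ w = z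

/-- `T` is the `n`-th Chebyshev polynomial of `Γ`: the monic polynomial of degree `n`
minimizing the supremum norm over `Γ`. -/
def IsChebyshevPoly (Γ : Set ℂ) (n : ℕ) (T : Polynomial ℂ) : Prop :=
  T.Monic ∧ T.natDegree = n ∧
    ∀ P : Polynomial ℂ, P.Monic → P.natDegree = n →
      supNorm Γ (fun z => T.eval z) ≤ supNorm Γ (fun z => P.eval z)

/-- `v` is a secant-argument function of `Γ = ψ(unit circle)` at `θ` (relative to `α` with
`α < θ < α + 2π`): a bounded-variation branch of `t ↦ arg (ψ(e^{it}) − ψ(e^{iθ}))` on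
`[α, α + 2π]`, continuous on `[α, θ)` and on `(θ, α + 2π]`, normalized by `v θ = v(θ+)`
and by requiring the jump `v(θ+) − v(θ−)` to lie in `[0, 2π]`. -/
structure IsSecantArg (ψ : ℂ → ℂ) (θ α : ℝ) (v : ℝ → ℝ) : Prop where
  hα : α < θ
  hθ : θ < α + 2 * Real.pi
  bv : BoundedVariationOn v (Set.Icc α (α + 2 * Real.pi))
  contBefore : ContinuousOn v (Set.Ico α θ)
  contAfter : ContinuousOn v (Set.Ioc θ (α + 2 * Real.pi))
  rightCont : ContinuousWithinAt v (Set.Ici θ) θ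
  jump_mem : ∃ L : ℝ, Filter.Tendsto v (nhdsWithin θ (Set.Iio θ)) (nhds L) ∧
    v θ - L ∈ Set.Icc 0 (2 * Real.pi)
  branch : ∀ t ∈ Set.Icc α (α + 2 * Real.pi), t ≠ θ →
    Complex.exp (Complex.I * (v t : ℂ))
      = (ψ (Complex.exp (Complex.I * (t : ℂ))) - ψ (Complex.exp (Complex.I * (θ : ℂ))))
        / ((‖ψ (Complex.exp (Complex.I * (t : ℂ))) - ψ (Complex.exp (Complex.I * (θ : ℂ)))‖ : ℂ))

/-- The exterior angle of `Γ = ψ(unit circle)` at the boundary point `ψ(e^{iθ})` equals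
`lam * π`, expressed through the jump `v(θ+) − v(θ−) = lam * π` of a secant-argument
function at `θ`. -/
def HasExteriorAngleAt (ψ : ℂ → ℂ) (θ lam : ℝ) : Prop :=
  ∃ (α : ℝ) (v : ℝ → ℝ), IsSecantArg ψ θ α v ∧
    Filter.Tendsto v (nhdsWithin θ (Set.Iio θ)) (nhds (v θ - lam * Real.pi))

/-- The set `Θ_Γ = {θ_k + 2πj}` of corner parameters modulo `2π`. -/
def cornerSet {l : ℕ} (θk : Fin l → ℝ) : Set ℝ :=
  {x | ∃ (k : Fin l) (j : ℤ), x = θk k + j * (2 * Real.pi)}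

/-- `(μp, μn)` realizes the Lebesgue–Stieltjes (signed) measure `dv` of `v` on `(α, β]`:
both are finite measures and `μp − μn` has the increments of `v`. -/
structure IsLSPair (v : ℝ → ℝ) (α β : ℝ) (μp μn : MeasureTheory.Measure ℝ) : Prop where
  finp : MeasureTheory.IsFiniteMeasure μp
  finn : MeasureTheory.IsFiniteMeasure μn
  incr : ∀ s t : ℝ, α ≤ s → s ≤ t → t ≤ β →
    (μp (Set.Ioc s t)).toReal - (μn (Set.Ioc s t)).toReal = v t - v s


/-- First-order Taylor bound for a curve whose velocity varies by at most `C` between the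
two parameters. -/
lemma norm_sub_sub_smul_le {γ γ' : ℝ → ℂ} {a b : ℝ} {s₀ s C : ℝ}
    (hd : ∀ s ∈ Icc a b, HasDerivWithinAt γ (γ' s) (Icc a b) s)
    (h0 : s₀ ∈ Icc a b) (hs : s ∈ Icc a b)
    (hC : ∀ t ∈ uIcc s₀ s, ‖γ' t - γ' s₀‖ ≤ C) :
    ‖γ s - γ s₀ - (s - s₀) • γ' s₀‖ ≤ C * |s - s₀| := by
  have hsub : uIcc s₀ s ⊆ Icc a b := uIcc_subset_Icc h0 hs
  have := (convex_uIcc s₀ s).norm_image_sub_le_of_norm_hasDerivWithin_le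
    (f := fun t => γ t - t • γ' s₀) (f' := fun t => γ' t - γ' s₀) (C := C)
    (fun t ht => ?_) hC left_mem_uIcc right_mem_uIcc
  · rw [Real.norm_eq_abs] at this
    refine le_trans (le_of_eq ?_) this
    congr 1
    simp only [Complex.real_smul]
    push_cast
    ring
  · have h2 : HasDerivWithinAt (fun t : ℝ => t • γ' s₀) ((1 : ℝ) • γ' s₀) (uIcc s₀ s) t :=
      (hasDerivWithinAt_id t _).smul_const _
    rw [one_smul] at h2
    exact ((hd t (hsub ht)).mono hsub).sub h2

lemma sq_norm_add_smul_ge {y p : ℂ} {x : ℝ} (h : 0 ≤ x * (y * (starRingEnd ℂ) p).re) :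
    ‖y‖ ^ 2 + ‖p‖ ^ 2 * x ^ 2 ≤ ‖y + x • p‖ ^ 2 := by
  have : ‖y + x • p‖ ^ 2 = ‖y‖ ^ 2 + ‖p‖ ^ 2 * x ^ 2 + 2 * (x * (y * (starRingEnd ℂ) p).re) := by
    simp only [← Complex.normSq_eq_norm_sq, Complex.normSq_apply, Complex.real_smul]
    simp
    ring
  linarith

/-- Lower bound for the distance from `z` along a nearly straight curve. -/
lemma sqrt_le_norm_sub {y p r : ℂ} {x η : ℝ} (hη : 0 ≤ η)
    (h : 0 ≤ x * (y * (starRingEnd ℂ) p).re) (hr : ‖r‖ ≤ η * ‖p‖ * |x|) :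
    (1 - η) * Real.sqrt (‖y‖ ^ 2 + ‖p‖ ^ 2 * x ^ 2) ≤ ‖y + x • p + r‖ := by
  have h1 : Real.sqrt (‖y‖ ^ 2 + ‖p‖ ^ 2 * x ^ 2) ≤ ‖y + x • p‖ :=
    Real.sqrt_le_iff.2 ⟨norm_nonneg _, sq_norm_add_smul_ge h⟩
  have h2 : ‖p‖ * |x| ≤ Real.sqrt (‖y‖ ^ 2 + ‖p‖ ^ 2 * x ^ 2) := by
    apply Real.le_sqrt_of_sq_le
    rw [mul_pow, sq_abs]
    nlinarith [sq_nonneg ‖y‖]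
  have h3 : ‖y + x • p‖ - ‖r‖ ≤ ‖y + x • p + r‖ := by
    have := norm_sub_norm_le (y + x • p) (-r)
    simpa using this
  nlinarith

/-- The angular velocity of a nearly straight curve seen from a point, up to an error. -/
lemma abs_im_div_sub_le {y p r e : ℂ} {x η κ W : ℝ} (hη : 0 ≤ η) (hη' : η ≤ 1 / 2)
    (hκ : 0 < κ) (hκp : κ ≤ ‖p‖) (hx : x ≠ 0)
    (h : 0 ≤ x * (y * (starRingEnd ℂ) p).re) (hr : ‖r‖ ≤ η * ‖p‖ * |x|)
    (hrW : ‖r‖ ≤ W * |x|) (he : ‖e‖ ≤ W) :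
    |((p + e) / (y + x • p + r)).im -
      (p * (starRingEnd ℂ) y).im / ‖y + x • p + r‖ ^ 2| ≤ 6 / κ * (W / |x|) := by
  set ρ := ‖y + x • p + r‖ with hρ
  have hx' : 0 < |x| := abs_pos.2 hx
  have hp : 0 < ‖p‖ := hκ.trans_le hκp
  have hW : 0 ≤ W := (norm_nonneg e).trans he
  have hρ1 : ‖p‖ * |x| ≤ 2 * ρ := by
    have h1 := sqrt_le_norm_sub hη h hr
    have h2 : ‖p‖ * |x| ≤ Real.sqrt (‖y‖ ^ 2 + ‖p‖ ^ 2 * x ^ 2) := by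
      apply Real.le_sqrt_of_sq_le
      rw [mul_pow, sq_abs]
      nlinarith [sq_nonneg ‖y‖]
    have h3 : 0 < ‖p‖ * |x| := by positivity
    rw [← hρ] at h1
    nlinarith
  have hρ0 : 0 < ρ := by
    have : 0 < ‖p‖ * |x| := by positivity
    linarith
  have key : ((p + e) / (y + x • p + r)).im - (p * (starRingEnd ℂ) y).im / ρ ^ 2 =
      ((p * (starRingEnd ℂ) r).im + (e * (starRingEnd ℂ) (y + x • p + r)).im) / ρ ^ 2 := by
    have : (p + e) / (y + x • p + r) =
        ((p + e) * (starRingEnd ℂ) (y + x • p + r)) / ((ρ ^ 2 : ℝ) : ℂ) := by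
      have hne : y + x • p + r ≠ 0 := norm_pos_iff.1 hρ0
      have hmul := Complex.mul_conj (y + x • p + r)
      rw [Complex.normSq_eq_norm_sq, ← hρ] at hmul
      rw [← hmul]
      have hne2 : (starRingEnd ℂ) (y + x • p + r) ≠ 0 := (map_ne_zero _).2 hne
      field_simp
    rw [this, Complex.div_ofReal_im, ← sub_div]
    congr 1
    simp
    ring
  rw [key, abs_div, abs_of_pos (by positivity : 0 < ρ ^ 2), div_le_iff₀ (by positivity)]
  have b1 : |(p * (starRingEnd ℂ) r).im| ≤ ‖p‖ * (W * |x|) := by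
    refine (Complex.abs_im_le_norm _).trans ?_
    rw [norm_mul, Complex.norm_conj]
    gcongr
  have b2 : |(e * (starRingEnd ℂ) (y + x • p + r)).im| ≤ W * ρ := by
    refine (Complex.abs_im_le_norm _).trans ?_
    rw [norm_mul, Complex.norm_conj]
    gcongr
  refine (abs_add_le _ _).trans ((add_le_add b1 b2).trans ?_)
  have c1 : ‖p‖ * (W * |x|) + W * ρ ≤ 3 * (W * ρ) := by nlinarith
  have c2 : κ * |x| ≤ 2 * ρ := le_trans (by gcongr) hρ1
  have c3 : 6 / κ * (W / |x|) * ρ ^ 2 = 3 * (W * ρ) * ((2 * ρ) / (κ * |x|)) := by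
    field_simp
    ring
  rw [c3]
  refine c1.trans (le_mul_of_one_le_right (by positivity) ?_)
  rwa [one_le_div (by positivity)]

/-- A parametrization with Dini-continuous velocity `vel` on `[a, b]` of the part of the curve
`E` between the parameters `p` and `q`; `τ` is the change of parameter. -/
structure Piece (E : ℝ → ℂ) (p q : ℝ) where
  vel : ℝ → ℂ
  a : ℝ
  b : ℝ
  τ : ℝ → ℝ
  ω : ℝ → ℝ
  lt : a < b
  mono : StrictMonoOn τ (Icc a b)
  cont : ContinuousOn τ (Icc a b)
  τ_a : τ a = p
  τ_b : τ b = q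
  hasDeriv : ∀ s ∈ Icc a b, HasDerivWithinAt (fun s => E (τ s)) (vel s) (Icc a b) s
  cont_vel : ContinuousOn vel (Icc a b)
  vel_ne : ∀ s ∈ Icc a b, vel s ≠ 0
  ω_mono : MonotoneOn ω (Ici 0)
  ω_int : IntegrableOn (fun t => ω t / t) (Ioc (0 : ℝ) 1)
  ω_bound : ∀ s ∈ Icc a b, ∀ t ∈ Icc a b, ‖vel s - vel t‖ ≤ ω |s - t|

namespace Piece

variable {E : ℝ → ℂ} {p q : ℝ}

/-- The piece obtained by restricting the parameter interval. -/
def sub (P : Piece E p q) (a' b' : ℝ) (ha : P.a ≤ a') (h : a' < b') (hb : b' ≤ P.b) :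
    Piece E (P.τ a') (P.τ b') where
  vel := P.vel
  a := a'
  b := b'
  τ := P.τ
  ω := P.ω
  lt := h
  mono := P.mono.mono (Icc_subset_Icc ha hb)
  cont := P.cont.mono (Icc_subset_Icc ha hb)
  τ_a := rfl
  τ_b := rfl
  hasDeriv := fun s hs => (P.hasDeriv s (Icc_subset_Icc ha hb hs)).mono (Icc_subset_Icc ha hb)
  cont_vel := P.cont_vel.mono (Icc_subset_Icc ha hb)
  vel_ne := fun s hs => P.vel_ne s (Icc_subset_Icc ha hb hs)
  ω_mono := P.ω_mono
  ω_int := P.ω_int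
  ω_bound := fun s hs t ht =>
    P.ω_bound s (Icc_subset_Icc ha hb hs) t (Icc_subset_Icc ha hb ht)

lemma left_mem (P : Piece E p q) : P.a ∈ Icc P.a P.b := left_mem_Icc.2 P.lt.le

lemma right_mem (P : Piece E p q) : P.b ∈ Icc P.a P.b := right_mem_Icc.2 P.lt.le

lemma param_lt (P : Piece E p q) : p < q := by
  have := P.mono P.left_mem P.right_mem P.lt
  rwa [P.τ_a, P.τ_b] at this

lemma mapsTo (P : Piece E p q) : MapsTo P.τ (Icc P.a P.b) (Icc p q) := fun s hs => by
  have h1 := P.mono.monotoneOn P.left_mem hs hs.1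
  have h2 := P.mono.monotoneOn hs P.right_mem hs.2
  rw [P.τ_a] at h1
  rw [P.τ_b] at h2
  exact ⟨h1, h2⟩

lemma surjOn (P : Piece E p q) : SurjOn P.τ (Icc P.a P.b) (Icc p q) := by
  have := intermediate_value_Icc P.lt.le P.cont
  rwa [P.τ_a, P.τ_b] at this

lemma cont_curve (P : Piece E p q) : ContinuousOn (fun s => E (P.τ s)) (Icc P.a P.b) :=
  fun s hs => (P.hasDeriv s hs).continuousWithinAt

/-- The angular velocity of the piece as seen from `z`. -/
def kernel (P : Piece E p q) (z : ℂ) (s : ℝ) : ℝ := (P.vel s / (E (P.τ s) - z)).im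

lemma cont_kernel (P : Piece E p q) {z : ℂ} (hz : ∀ s ∈ Icc P.a P.b, E (P.τ s) ≠ z) :
    ContinuousOn (P.kernel z) (Icc P.a P.b) :=
  Complex.continuous_im.comp_continuousOn
    (P.cont_vel.div (P.cont_curve.sub continuousOn_const) fun s hs => sub_ne_zero.2 (hz s hs))

/-- Quantitative near-straightness of a piece. -/
structure Straight (P : Piece E p q) (κ η ε : ℝ) : Prop where
  κ_pos : 0 < κ
  κ_le : ∀ s ∈ Icc P.a P.b, κ ≤ ‖P.vel s‖
  η_nonneg : 0 ≤ η
  η_le : η ≤ 1 / 2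
  vel_close : ∀ s ∈ Icc P.a P.b, ∀ t ∈ Icc P.a P.b, ‖P.vel s - P.vel t‖ ≤ η * κ
  len : P.b - P.a ≤ 1
  dini : 12 / κ * ∫ t in (0 : ℝ)..(P.b - P.a), P.ω t / t ≤ ε

lemma ω_nonneg (P : Piece E p q) {t : ℝ} (ht : 0 ≤ t) : 0 ≤ P.ω t := by
  have h := P.ω_bound _ P.left_mem _ P.left_mem
  simp only [sub_self, norm_zero, abs_zero] at h
  exact h.trans (P.ω_mono self_mem_Ici ht ht)

lemma intervalIntegrable_ω (P : Piece E p q) {x : ℝ} (hx : 0 ≤ x) (hx1 : x ≤ 1) :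
    IntervalIntegrable (fun t => P.ω t / t) volume 0 x :=
  (intervalIntegrable_iff_integrableOn_Ioc_of_le hx).2
    (P.ω_int.mono_set (Ioc_subset_Ioc_right hx1))

lemma integral_ω_mono (P : Piece E p q) {x y : ℝ} (hx : 0 ≤ x) (hxy : x ≤ y) (hy : y ≤ 1) :
    ∫ t in (0 : ℝ)..x, P.ω t / t ≤ ∫ t in (0 : ℝ)..y, P.ω t / t :=
  intervalIntegral.integral_mono_interval le_rfl hx hxy
    ((ae_restrict_iff' measurableSet_Ioc).2 (Eventually.of_forall fun _ ht =>
      div_nonneg (P.ω_nonneg ht.1.le) ht.1.le))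
    (P.intervalIntegrable_ω (hx.trans hxy) hy)

lemma integral_ω_abs (P : Piece E p q) (hlen : P.b - P.a ≤ 1) {s₀ : ℝ}
    (h0 : s₀ ∈ Icc P.a P.b) :
    IntervalIntegrable (fun s => P.ω |s - s₀| / |s - s₀|) volume P.a P.b ∧
    ∫ s in P.a..P.b, P.ω |s - s₀| / |s - s₀| ≤
      2 * ∫ t in (0 : ℝ)..(P.b - P.a), P.ω t / t := by
  have hr : 0 ≤ P.b - s₀ := sub_nonneg.2 h0.2
  have hl : 0 ≤ s₀ - P.a := sub_nonneg.2 h0.1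
  have hr1 : P.b - s₀ ≤ P.b - P.a := by linarith [h0.1]
  have hl1 : s₀ - P.a ≤ P.b - P.a := by linarith [h0.2]
  have er : EqOn (fun s => P.ω (s - s₀) / (s - s₀)) (fun s => P.ω |s - s₀| / |s - s₀|)
      (uIoc s₀ P.b) := fun s hs => by
    rw [uIoc_of_le h0.2] at hs
    simp only [abs_of_nonneg (sub_nonneg.2 hs.1.le)]
  have el : EqOn (fun s => P.ω (s₀ - s) / (s₀ - s)) (fun s => P.ω |s - s₀| / |s - s₀|)
      (uIoc P.a s₀) := fun s hs => by
    rw [uIoc_of_le h0.1] at hs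
    simp only [abs_sub_comm s s₀, abs_of_nonneg (sub_nonneg.2 hs.2)]
  have ir : IntervalIntegrable (fun s => P.ω |s - s₀| / |s - s₀|) volume s₀ P.b := by
    have := (P.intervalIntegrable_ω hr (hr1.trans hlen)).comp_sub_right s₀
    rw [zero_add, sub_add_cancel] at this
    exact this.congr er
  have il : IntervalIntegrable (fun s => P.ω |s - s₀| / |s - s₀|) volume P.a s₀ := by
    have := (P.intervalIntegrable_ω hl (hl1.trans hlen)).comp_sub_left s₀
    rw [sub_zero, sub_sub_cancel] at this
    exact this.symm.congr el
  refine ⟨il.trans ir, ?_⟩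
  rw [← intervalIntegral.integral_add_adjacent_intervals il ir, two_mul]
  refine add_le_add ?_ ?_
  · rw [← intervalIntegral.integral_congr_uIoo fun s hs => el (Ioo_subset_Ioc_self hs),
      intervalIntegral.integral_comp_sub_left (fun t => P.ω t / t), sub_self]
    exact P.integral_ω_mono hl hl1 hlen
  · rw [← intervalIntegral.integral_congr_uIoo fun s hs => er (Ioo_subset_Ioc_self hs),
      intervalIntegral.integral_comp_sub_right (fun t => P.ω t / t), sub_self]
    exact P.integral_ω_mono hr hr1 hlen

section Straight

variable {P : Piece E p q} {κ η ε : ℝ}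

lemma Straight.taylor (hP : P.Straight κ η ε) {s₀ s : ℝ} (h0 : s₀ ∈ Icc P.a P.b)
    (hs : s ∈ Icc P.a P.b) :
    ‖E (P.τ s) - E (P.τ s₀) - (s - s₀) • P.vel s₀‖ ≤ η * ‖P.vel s₀‖ * |s - s₀| ∧
    ‖E (P.τ s) - E (P.τ s₀) - (s - s₀) • P.vel s₀‖ ≤ P.ω |s - s₀| * |s - s₀| := by
  have hsub : uIcc s₀ s ⊆ Icc P.a P.b := uIcc_subset_Icc h0 hs
  constructor
  · refine (norm_sub_sub_smul_le P.hasDeriv h0 hs fun t ht =>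
      hP.vel_close t (hsub ht) s₀ h0).trans ?_
    have := hP.κ_le s₀ h0
    have := hP.η_nonneg
    gcongr
  · refine norm_sub_sub_smul_le P.hasDeriv h0 hs fun t ht => ?_
    refine (P.ω_bound t (hsub ht) s₀ h0).trans
      (P.ω_mono (mem_Ici.2 (abs_nonneg _)) (mem_Ici.2 (abs_nonneg _)) ?_)
    exact abs_sub_left_of_mem_uIcc ht

lemma Straight.dist_ge (hP : P.Straight κ η ε) {s₀ s : ℝ} {z : ℂ} (h0 : s₀ ∈ Icc P.a P.b)
    (hs : s ∈ Icc P.a P.b)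
    (h : 0 ≤ (s - s₀) * ((E (P.τ s₀) - z) * (starRingEnd ℂ) (P.vel s₀)).re) :
    (1 - η) * Real.sqrt (‖E (P.τ s₀) - z‖ ^ 2 + ‖P.vel s₀‖ ^ 2 * (s - s₀) ^ 2) ≤
      ‖E (P.τ s) - z‖ := by
  have := sqrt_le_norm_sub hP.η_nonneg h (hP.taylor h0 hs).1
  convert this using 2
  ring

lemma Straight.kernel_approx (hP : P.Straight κ η ε) {s₀ : ℝ} {z : ℂ} (h0 : s₀ ∈ Icc P.a P.b)
    (h : ∀ s ∈ Icc P.a P.b,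
      0 ≤ (s - s₀) * ((E (P.τ s₀) - z) * (starRingEnd ℂ) (P.vel s₀)).re)
    (hz : ∀ s ∈ Icc P.a P.b, E (P.τ s) ≠ z) :
    ∫ s in P.a..P.b, |P.kernel z s -
      (P.vel s₀ * (starRingEnd ℂ) (E (P.τ s₀) - z)).im / ‖E (P.τ s) - z‖ ^ 2| ≤ ε := by
  obtain ⟨hi, hle⟩ := P.integral_ω_abs hP.len h0
  have hκ := hP.κ_pos
  calc _ ≤ ∫ s in P.a..P.b, 6 / κ * (P.ω |s - s₀| / |s - s₀|) := by
        refine intervalIntegral.integral_mono_on P.lt.le ?_ (hi.const_mul _) ?_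
        · apply ContinuousOn.intervalIntegrable_of_Icc P.lt.le
          refine ((P.cont_kernel hz).sub (continuousOn_const.div
            ((P.cont_curve.sub continuousOn_const).norm.pow 2) fun s hs => ?_)).abs
          exact pow_ne_zero _ (norm_ne_zero_iff.2 (sub_ne_zero.2 (hz s hs)))
        · intro s hs
          rcases eq_or_ne s s₀ with rfl | hne
          · simp only [kernel, sub_self, abs_zero, div_zero, mul_zero]
            rw [div_eq_mul_inv (P.vel s), Complex.inv_def, ← mul_assoc, Complex.im_mul_ofReal,
              Complex.normSq_eq_norm_sq, ← div_eq_mul_inv, sub_self, abs_zero]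
          · have key := abs_im_div_sub_le (e := P.vel s - P.vel s₀) hP.η_nonneg hP.η_le hκ
              (hP.κ_le s₀ h0) (sub_ne_zero.2 hne) (h s hs) (hP.taylor h0 hs).1
              (hP.taylor h0 hs).2 (P.ω_bound s hs s₀ h0)
            have e1 : E (P.τ s₀) - z + (s - s₀) • P.vel s₀ +
              (E (P.τ s) - E (P.τ s₀) - (s - s₀) • P.vel s₀) = E (P.τ s) - z := by ring
            rw [e1, add_sub_cancel] at key
            exact key
    _ ≤ 12 / κ * ∫ t in (0 : ℝ)..(P.b - P.a), P.ω t / t := by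
        rw [intervalIntegral.integral_const_mul]
        calc _ ≤ 6 / κ * (2 * ∫ t in (0 : ℝ)..(P.b - P.a), P.ω t / t) := by gcongr
          _ = _ := by ring
    _ ≤ ε := hP.dini

end Straight
end Piece

lemma integral_poisson_type {m d : ℝ} (hd : 0 < d) (s₀ a b : ℝ) :
    ∫ s in a..b, m * d / (d ^ 2 + m ^ 2 * (s - s₀) ^ 2) =
      Real.arctan (m * (b - s₀) / d) - Real.arctan (m * (a - s₀) / d) := by
  have hpos : ∀ s : ℝ, 0 < d ^ 2 + m ^ 2 * (s - s₀) ^ 2 := fun s => by positivity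
  refine intervalIntegral.integral_eq_sub_of_hasDerivAt
    (f := fun s => Real.arctan (m * (s - s₀) / d)) (fun s _ => ?_) ?_
  · have h1 : HasDerivAt (fun s : ℝ => m * (s - s₀) / d) (m * 1 / d) s :=
      (((hasDerivAt_id s).sub_const s₀).const_mul m).div_const d
    refine h1.arctan.congr_deriv ?_
    have := (hpos s).ne'
    have h2 : 1 + (m * (s - s₀) / d) ^ 2 ≠ 0 := by positivity
    rw [div_mul_div_comm, div_eq_div_iff (by positivity) this]
    field_simp
  · refine Continuous.intervalIntegrable ?_ _ _
    exact continuous_const.div (by fun_prop) fun s => (hpos s).ne'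

lemma continuous_poisson_type {m d : ℝ} (hd : 0 < d) (s₀ : ℝ) :
    Continuous fun s => m * d / (d ^ 2 + m ^ 2 * (s - s₀) ^ 2) :=
  continuous_const.div (by fun_prop) fun s => by positivity

namespace Piece

variable {E : ℝ → ℂ} {p q : ℝ}

/-- The angular velocity of the piece seen from any point off the piece has essentially
constant sign and total mass essentially at most `π`. -/
def Small (P : Piece E p q) (ε : ℝ) : Prop :=
  ∀ z, (∀ s ∈ Icc P.a P.b, E (P.τ s) ≠ z) →
    (∫ s in P.a..P.b, |P.kernel z s|) ≤ |∫ s in P.a..P.b, P.kernel z s| + ε ∧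
    (∫ s in P.a..P.b, |P.kernel z s|) ≤ Real.pi + ε

variable {P : Piece E p q} {κ η ε : ℝ}

lemma exists_nearest (P : Piece E p q) (z : ℂ) :
    ∃ s₀ ∈ Icc P.a P.b, ∀ s ∈ Icc P.a P.b,
      0 ≤ (s - s₀) * ((E (P.τ s₀) - z) * (starRingEnd ℂ) (P.vel s₀)).re := by
  have hc : ContinuousOn (fun s => ‖E (P.τ s) - z‖ ^ 2) (Icc P.a P.b) :=
    (P.cont_curve.sub continuousOn_const).norm.pow 2
  obtain ⟨s₀, h0, hmin⟩ := isCompact_Icc.exists_isMinOn ⟨_, P.left_mem⟩ hc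
  refine ⟨s₀, h0, fun s hs => ?_⟩
  have hd := ((P.hasDeriv s₀ h0).sub_const z).norm_sq
  have := (hmin.localize).hasFDerivWithinAt_nonneg hd.hasFDerivWithinAt (y := s - s₀)
    (sub_mem_posTangentConeAt_of_segment_subset ((convex_Icc _ _).segment_subset h0 hs))
  simp only [ContinuousLinearMap.toSpanSingleton_apply, Complex.inner, smul_eq_mul] at this
  have e : (P.vel s₀ * (starRingEnd ℂ) (E (P.τ s₀) - z)).re =
      ((E (P.τ s₀) - z) * (starRingEnd ℂ) (P.vel s₀)).re := by
    simp [Complex.mul_re]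
    ring
  rw [e] at this
  linarith

lemma Straight.small {ε' : ℝ} (hP : P.Straight κ η ε) (h1 : 2 * ε ≤ ε')
    (h2 : Real.pi / (1 - η) ^ 2 + ε ≤ Real.pi + ε') : P.Small ε' := by
  intro z hz
  obtain ⟨s₀, h0, h⟩ := P.exists_nearest z
  have happ := hP.kernel_approx h0 h hz
  set A := (P.vel s₀ * (starRingEnd ℂ) (E (P.τ s₀) - z)).im with hA
  set g : ℝ → ℝ := fun s => A / ‖E (P.τ s) - z‖ ^ 2 with hg
  have hη : 0 < 1 - η := by linarith [hP.η_le]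
  have hgc : ContinuousOn g (Icc P.a P.b) :=
    continuousOn_const.div ((P.cont_curve.sub continuousOn_const).norm.pow 2) fun s hs =>
      pow_ne_zero _ (norm_ne_zero_iff.2 (sub_ne_zero.2 (hz s hs)))
  have hgi : IntervalIntegrable g volume P.a P.b := hgc.intervalIntegrable_of_Icc P.lt.le
  have hkc := P.cont_kernel hz
  have hki : IntervalIntegrable (P.kernel z) volume P.a P.b :=
    hkc.intervalIntegrable_of_Icc P.lt.le
  have hdi : IntervalIntegrable (fun s => |P.kernel z s - g s|) volume P.a P.b :=
    (hki.sub hgi).abs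
  have hd0 : 0 < ‖E (P.τ s₀) - z‖ := norm_pos_iff.2 (sub_ne_zero.2 (hz s₀ h0))
  have hgabs : ∫ s in P.a..P.b, |g s| = |∫ s in P.a..P.b, g s| := by
    have e1 : ∀ s, |g s| = |A| * (1 / ‖E (P.τ s) - z‖ ^ 2) := fun s => by
      simp only [hg, abs_div, abs_pow, abs_norm]
      ring
    have e2 : ∀ s, g s = A * (1 / ‖E (P.τ s) - z‖ ^ 2) := fun s => by simp only [hg]; ring
    simp only [e1]
    simp only [e2]
    rw [intervalIntegral.integral_const_mul, intervalIntegral.integral_const_mul, abs_mul,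
      abs_of_nonneg (a := ∫ s in P.a..P.b, (1 / ‖E (P.τ s) - z‖ ^ 2))]
    exact intervalIntegral.integral_nonneg P.lt.le fun s _ => by positivity
  have hgpi : ∫ s in P.a..P.b, |g s| ≤ Real.pi / (1 - η) ^ 2 := by
    have hm : 0 < ‖P.vel s₀‖ := norm_pos_iff.2 (P.vel_ne s₀ h0)
    calc ∫ s in P.a..P.b, |g s|
        ≤ ∫ s in P.a..P.b, (1 / (1 - η) ^ 2) * (‖P.vel s₀‖ * ‖E (P.τ s₀) - z‖ /
          (‖E (P.τ s₀) - z‖ ^ 2 + ‖P.vel s₀‖ ^ 2 * (s - s₀) ^ 2)) := by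
          refine intervalIntegral.integral_mono_on P.lt.le hgi.abs
            ((continuous_poisson_type hd0 s₀).intervalIntegrable _ _ |>.const_mul _) ?_
          intro s hs
          have hge := hP.dist_ge h0 hs (h s hs)
          have hs0 : 0 < ‖E (P.τ s₀) - z‖ ^ 2 + ‖P.vel s₀‖ ^ 2 * (s - s₀) ^ 2 := by positivity
          have hsq : (1 - η) ^ 2 *
              (‖E (P.τ s₀) - z‖ ^ 2 + ‖P.vel s₀‖ ^ 2 * (s - s₀) ^ 2) ≤ ‖E (P.τ s) - z‖ ^ 2 := by
            have := pow_le_pow_left₀ (by positivity) hge 2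
            rwa [mul_pow, Real.sq_sqrt hs0.le] at this
          have hAle : |A| ≤ ‖P.vel s₀‖ * ‖E (P.τ s₀) - z‖ := by
            refine (Complex.abs_im_le_norm _).trans ?_
            rw [norm_mul, Complex.norm_conj]
          simp only [hg, abs_div, abs_pow, abs_norm]
          rw [div_mul_div_comm, one_mul]
          gcongr
      _ = 1 / (1 - η) ^ 2 * (Real.arctan (‖P.vel s₀‖ * (P.b - s₀) / ‖E (P.τ s₀) - z‖) -
          Real.arctan (‖P.vel s₀‖ * (P.a - s₀) / ‖E (P.τ s₀) - z‖)) := by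
          rw [intervalIntegral.integral_const_mul, integral_poisson_type hd0]
      _ ≤ 1 / (1 - η) ^ 2 * Real.pi := by
          gcongr
          linarith [Real.arctan_lt_pi_div_two (‖P.vel s₀‖ * (P.b - s₀) / ‖E (P.τ s₀) - z‖),
            Real.neg_pi_div_two_lt_arctan (‖P.vel s₀‖ * (P.a - s₀) / ‖E (P.τ s₀) - z‖)]
      _ = _ := by ring
  have hk1 : ∫ s in P.a..P.b, |P.kernel z s| ≤ (∫ s in P.a..P.b, |g s|) + ε := by
    calc _ ≤ ∫ s in P.a..P.b, (|g s| + |P.kernel z s - g s|) := by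
          refine intervalIntegral.integral_mono_on P.lt.le hki.abs (hgi.abs.add hdi) fun s _ => ?_
          have := abs_add_le (g s) (P.kernel z s - g s)
          rwa [add_sub_cancel] at this
      _ = (∫ s in P.a..P.b, |g s|) + ∫ s in P.a..P.b, |P.kernel z s - g s| :=
          intervalIntegral.integral_add hgi.abs hdi
      _ ≤ _ := by gcongr
  have hk2 : |∫ s in P.a..P.b, g s| ≤ |∫ s in P.a..P.b, P.kernel z s| + ε := by
    have e := intervalIntegral.integral_sub hki hgi
    have h3 := (intervalIntegral.abs_integral_le_integral_abs (μ := volume)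
      (f := fun s => P.kernel z s - g s) P.lt.le).trans happ
    rw [e] at h3
    have := abs_sub_abs_le_abs_sub (∫ s in P.a..P.b, g s) (∫ s in P.a..P.b, P.kernel z s)
    rw [abs_sub_comm] at this
    linarith
  exact ⟨by linarith, by linarith⟩

lemma exists_straight (P : Piece E p q) (hη : 0 < η) (hη' : η ≤ 1 / 2) (hε : 0 < ε) :
    ∃ κ, ∃ δ > 0, ∀ a' b' (ha : P.a ≤ a') (h : a' < b') (hb : b' ≤ P.b), b' - a' ≤ δ →
      (P.sub a' b' ha h hb).Straight κ η ε := by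
  obtain ⟨s₁, h1, hmin⟩ := isCompact_Icc.exists_isMinOn ⟨_, P.left_mem⟩ P.cont_vel.norm
  set κ := ‖P.vel s₁‖ with hκ
  have hκ0 : 0 < κ := norm_pos_iff.2 (P.vel_ne s₁ h1)
  have huc := isCompact_Icc.uniformContinuousOn_of_continuous P.cont_vel
  obtain ⟨δ₁, hδ₁, hd1⟩ := Metric.uniformContinuousOn_iff.1 huc (η * κ) (by positivity)
  have hI : ContinuousOn (fun x => ∫ t in (0 : ℝ)..x, P.ω t / t) (uIcc 0 1) :=
    intervalIntegral.continuousOn_primitive_interval'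
      (P.intervalIntegrable_ω zero_le_one le_rfl) left_mem_uIcc
  have hI0 := hI 0 left_mem_uIcc
  rw [ContinuousWithinAt, intervalIntegral.integral_same, uIcc_of_le zero_le_one] at hI0
  obtain ⟨δ₂, hδ₂, hd2⟩ := Metric.tendsto_nhdsWithin_nhds.1 hI0 (κ * ε / 12) (by positivity)
  refine ⟨κ, min (δ₁ / 2) (min (δ₂ / 2) 1), by positivity, fun a' b' ha h hb hlen => ?_⟩
  have l1 : b' - a' ≤ δ₁ / 2 := hlen.trans (min_le_left _ _)
  have l2 : b' - a' ≤ δ₂ / 2 := hlen.trans ((min_le_right _ _).trans (min_le_left _ _))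
  have l3 : b' - a' ≤ 1 := hlen.trans ((min_le_right _ _).trans (min_le_right _ _))
  have hsub := Icc_subset_Icc ha hb
  refine ⟨hκ0, fun s hs => hmin (hsub hs), hη.le, hη', fun s hs t ht => ?_, l3, ?_⟩
  · have := hd1 s (hsub hs) t (hsub ht) ?_
    · rw [dist_eq_norm] at this
      exact this.le
    · rw [Real.dist_eq, abs_lt]
      have h1 : a' ≤ s := hs.1
      have h2 : s ≤ b' := hs.2
      have h3 : a' ≤ t := ht.1
      have h4 : t ≤ b' := ht.2
      constructor <;> linarith
  · have := hd2 (x := b' - a') ⟨by linarith, l3⟩ (by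
      rw [Real.dist_eq, sub_zero, abs_of_pos (by linarith)]
      linarith)
    rw [Real.dist_eq, sub_zero] at this
    have h3 := (le_abs_self _).trans this.le
    change 12 / κ * (∫ t in (0 : ℝ)..(b' - a'), P.ω t / t) ≤ ε
    calc _ ≤ 12 / κ * (κ * ε / 12) := by gcongr
      _ = ε := by field_simp

lemma exists_small (P : Piece E p q) (hε : 0 < ε) :
    ∃ δ > 0, ∀ a' b' (ha : P.a ≤ a') (h : a' < b') (hb : b' ≤ P.b), b' - a' ≤ δ →
      (P.sub a' b' ha h hb).Small ε := by
  have hcont : Tendsto (fun η : ℝ => Real.pi / (1 - η) ^ 2) (𝓝[>] 0) (𝓝 Real.pi) := by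
    have : ContinuousAt (fun η : ℝ => Real.pi / (1 - η) ^ 2) 0 :=
      continuousAt_const.div (by fun_prop) (by norm_num)
    have h2 := this.tendsto
    simp only [sub_zero, one_pow, div_one] at h2
    exact h2.mono_left nhdsWithin_le_nhds
  have h1 : ∀ᶠ η in 𝓝[>] (0 : ℝ), Real.pi / (1 - η) ^ 2 < Real.pi + ε / 2 :=
    hcont.eventually_lt_const (by linarith)
  have h2 : ∀ᶠ η in 𝓝[>] (0 : ℝ), η ∈ Ioo (0 : ℝ) (1 / 2) := Ioo_mem_nhdsGT (by norm_num)
  obtain ⟨η, hη1, hη2⟩ := (h1.and h2).exists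
  obtain ⟨κ, δ, hδ, H⟩ := P.exists_straight hη2.1 hη2.2.le (half_pos hε)
  exact ⟨δ, hδ, fun a' b' ha h hb hl =>
    (H a' b' ha h hb hl).small (by linarith) (by linarith)⟩

lemma Straight.curve_ne (hP : P.Straight κ η ε) {s₀ h σ : ℝ} (h0 : s₀ ∈ Icc P.a P.b)
    (hh : 0 < h) (hσ : σ ≠ 0) (s : ℝ) (hs : s ∈ Icc P.a P.b) :
    E (P.τ s) ≠ E (P.τ s₀) - σ * h * Complex.I * P.vel s₀ := by
  have hv := norm_pos_iff.2 (P.vel_ne s₀ h0)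
  have := hP.dist_ge h0 hs (z := E (P.τ s₀) - σ * h * Complex.I * P.vel s₀) (by
    apply le_of_eq
    simp
    ring_nf
    simp)
  rw [sub_sub_cancel] at this
  have h1 : 0 < 1 - η := by linarith [hP.η_le]
  have h2 : 0 < ‖(σ : ℂ) * h * Complex.I * P.vel s₀‖ := by
    refine norm_pos_iff.2 ?_
    simp [hσ, hh.ne', P.vel_ne s₀ h0]
  have h3 : 0 < (1 - η) * √(‖(σ : ℂ) * h * Complex.I * P.vel s₀‖ ^ 2 +
      ‖P.vel s₀‖ ^ 2 * (s - s₀) ^ 2) := by positivity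
  exact sub_ne_zero.1 (norm_pos_iff.1 (h3.trans_le this))

/-- On the two sides of a smooth point the piece is seen under angles of opposite sign. -/
lemma Straight.side (hP : P.Straight κ η ε) {s₀ h σ : ℝ} (h0 : s₀ ∈ Icc P.a P.b)
    (hh : 0 < h) (hσ : σ ^ 2 = 1) (ha : h ≤ s₀ - P.a) (hb : h ≤ P.b - s₀) :
    σ * ∫ s in P.a..P.b, P.kernel (E (P.τ s₀) - σ * h * Complex.I * P.vel s₀) s ≤
      ε - Real.pi / 16 := by
  have hσ0 : σ ≠ 0 := by rintro rfl; norm_num at hσ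
  have hσ1 : |σ| = 1 := by
    rw [← sq_abs] at hσ
    exact (pow_eq_one_iff_of_nonneg (abs_nonneg σ) two_ne_zero).1 hσ
  have hv := norm_pos_iff.2 (P.vel_ne s₀ h0)
  set v := ‖P.vel s₀‖ with hvdef
  set z := E (P.τ s₀) - σ * h * Complex.I * P.vel s₀ with hzdef
  have hz := hP.curve_ne h0 hh hσ0
  have hy : E (P.τ s₀) - z = σ * h * Complex.I * P.vel s₀ := by rw [hzdef]; ring
  have hyn : ‖E (P.τ s₀) - z‖ = h * v := by
    rw [hy]
    simp [hσ1, abs_of_pos hh, hvdef]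
  have hre : ∀ s ∈ Icc P.a P.b,
      0 ≤ (s - s₀) * ((E (P.τ s₀) - z) * (starRingEnd ℂ) (P.vel s₀)).re := fun s _ => by
    rw [hy]
    apply le_of_eq
    simp
    ring_nf
    simp
  have hA : (P.vel s₀ * (starRingEnd ℂ) (E (P.τ s₀) - z)).im = -(σ * (h * v ^ 2)) := by
    rw [hy, hvdef, ← Complex.normSq_eq_norm_sq, Complex.normSq_apply]
    simp
    ring
  have happ := hP.kernel_approx h0 hre hz
  rw [hA] at happ
  set g : ℝ → ℝ := fun s => -(σ * (h * v ^ 2)) / ‖E (P.τ s) - z‖ ^ 2 with hg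
  have hgc : ContinuousOn g (Icc P.a P.b) :=
    continuousOn_const.div ((P.cont_curve.sub continuousOn_const).norm.pow 2) fun s hs =>
      pow_ne_zero _ (norm_ne_zero_iff.2 (sub_ne_zero.2 (hz s hs)))
  have hgi : IntervalIntegrable g volume P.a P.b := hgc.intervalIntegrable_of_Icc P.lt.le
  have hki : IntervalIntegrable (P.kernel z) volume P.a P.b :=
    (P.cont_kernel hz).intervalIntegrable_of_Icc P.lt.le
  have h1 : |σ * ((∫ s in P.a..P.b, P.kernel z s) - ∫ s in P.a..P.b, g s)| ≤ ε := by
    rw [abs_mul, hσ1, one_mul, ← intervalIntegral.integral_sub hki hgi]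
    exact (intervalIntegral.abs_integral_le_integral_abs P.lt.le).trans happ
  have h2 : ∫ s in P.a..P.b, (1 / 8) * (1 * h / (h ^ 2 + 1 ^ 2 * (s - s₀) ^ 2)) ≤
      ∫ s in P.a..P.b, -σ * g s := by
    refine intervalIntegral.integral_mono_on P.lt.le
      (((continuous_poisson_type hh s₀).intervalIntegrable _ _).const_mul _)
      (hgi.const_mul _) fun s hs => ?_
    have ht := (hP.taylor h0 hs).1
    have hx := abs_nonneg (s - s₀)
    have hρ : ‖E (P.τ s) - z‖ ≤ v * (h + 3 / 2 * |s - s₀|) := by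
      have e1 : E (P.τ s) - z = (E (P.τ s₀) - z) + (s - s₀) • P.vel s₀ +
          (E (P.τ s) - E (P.τ s₀) - (s - s₀) • P.vel s₀) := by ring
      have t1 := norm_add_le ((E (P.τ s₀) - z) + (s - s₀) • P.vel s₀)
        (E (P.τ s) - E (P.τ s₀) - (s - s₀) • P.vel s₀)
      have t2 := norm_add_le (E (P.τ s₀) - z) ((s - s₀) • P.vel s₀)
      rw [← e1] at t1
      rw [hyn, norm_smul, Real.norm_eq_abs] at t2
      have t3 : η * v * |s - s₀| ≤ 1 / 2 * v * |s - s₀| := by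
        have := hP.η_le
        gcongr
      change _ ≤ η * v * |s - s₀| at ht
      change _ ≤ _ + |s - s₀| * v at t2
      linarith
    have hpos : 0 < ‖E (P.τ s) - z‖ := norm_pos_iff.2 (sub_ne_zero.2 (hz s hs))
    have hρ2 : ‖E (P.τ s) - z‖ ^ 2 ≤ 8 * v ^ 2 * (h ^ 2 + 1 ^ 2 * (s - s₀) ^ 2) := by
      have := pow_le_pow_left₀ hpos.le hρ 2
      refine this.trans ?_
      rw [mul_pow, ← sq_abs (s - s₀)]
      nlinarith [sq_nonneg (h - |s - s₀|), sq_nonneg v, mul_nonneg (sq_nonneg v)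
        (sq_nonneg (h - |s - s₀|)), mul_nonneg (sq_nonneg v) (sq_nonneg h),
        mul_nonneg (sq_nonneg v) (sq_nonneg |s - s₀|)]
    have e2 : -σ * g s = h * v ^ 2 / ‖E (P.τ s) - z‖ ^ 2 := by
      simp only [hg]
      rw [← mul_div_assoc]
      congr 1
      linear_combination (h * v ^ 2) * hσ
    rw [e2, div_mul_div_comm, div_le_div_iff₀ (by positivity) (by positivity)]
    nlinarith
  rw [intervalIntegral.integral_const_mul, integral_poisson_type hh,
    intervalIntegral.integral_const_mul] at h2
  have h3 : Real.pi / 4 ≤ Real.arctan (1 * (P.b - s₀) / h) := by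
    rw [← Real.arctan_one]
    exact Real.arctan_strictMono.monotone ((one_le_div hh).2 (by linarith))
  have h4 : Real.arctan (1 * (P.a - s₀) / h) ≤ -(Real.pi / 4) := by
    rw [← Real.arctan_one, ← Real.arctan_neg]
    exact Real.arctan_strictMono.monotone ((div_le_iff₀ hh).2 (by linarith))
  have h5 := (le_abs_self _).trans h1
  linarith
end Piece

/-- A transitive relation between reals that holds locally to the right and to the left of every
point holds between any two points. -/
lemma rel_of_local {R : ℝ → ℝ → Prop} (htrans : ∀ p q r, p < q → q < r → R p q → R q r → R p r)
    (hr : ∀ x, ∃ η > 0, ∀ y, x < y → y < x + η → R x y)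
    (hl : ∀ x, ∃ η > 0, ∀ y, x - η < y → y < x → R y x) {p q : ℝ} (h : p < q) : R p q := by
  set S := {x | p < x ∧ x ≤ q ∧ R p x} with hS
  have hbdd : BddAbove S := ⟨q, fun x hx => hx.2.1⟩
  obtain ⟨η, hη, H⟩ := hr p
  have hmin : p < min q (p + η / 2) := lt_min h (by linarith)
  have h1 : min q (p + η / 2) ∈ S :=
    ⟨hmin, min_le_left _ _, H _ hmin ((min_le_right _ _).trans_lt (by linarith))⟩
  set c := sSup S with hc
  have hpc : p < c := hmin.trans_le (le_csSup hbdd h1)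
  have hcq : c ≤ q := csSup_le ⟨_, h1⟩ fun x hx => hx.2.1
  have hcR : R p c := by
    obtain ⟨η, hη, H⟩ := hl c
    obtain ⟨y, hy, hy2⟩ := exists_lt_of_lt_csSup ⟨_, h1⟩ (show c - η < c by linarith)
    rcases (le_csSup hbdd hy).lt_or_eq with h3 | h3
    · exact htrans p y c hy.1 h3 hy.2.2 (H y hy2 h3)
    · rw [hc, ← h3]
      exact hy.2.2
  rcases hcq.lt_or_eq with hlt | heq
  · exfalso
    obtain ⟨η, hη, H⟩ := hr c
    have hm : c < min q (c + η / 2) := lt_min hlt (by linarith)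
    have : min q (c + η / 2) ∈ S := ⟨hpc.trans hm, min_le_left _ _,
      htrans p c _ hpc hm hcR (H _ hm ((min_le_right _ _).trans_lt (by linarith)))⟩
    exact absurd (le_csSup hbdd this) (not_le.2 hm)
  · rwa [heq] at hcR

/-- The character `t ↦ e^{ikt}`. -/
def ekt (k : ℤ) (t : ℝ) : ℂ := Complex.exp (k * t * Complex.I)

lemma continuous_ekt (k : ℤ) : Continuous (ekt k) := by
  unfold ekt
  fun_prop

lemma norm_ekt (k : ℤ) (t : ℝ) : ‖ekt k t‖ = 1 := by
  have := Complex.norm_exp_ofReal_mul_I (k * t)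
  unfold ekt
  rw [← this]
  push_cast
  rfl

lemma hasDerivAt_ekt (k : ℤ) (t : ℝ) : HasDerivAt (ekt k) (k * Complex.I * ekt k t) t := by
  have h : HasDerivAt (fun t : ℝ => (k : ℂ) * t * Complex.I) (k * 1 * Complex.I) t :=
    ((Complex.ofRealCLM.hasDerivAt (x := t)).const_mul (k : ℂ)).mul_const _
  refine h.cexp.congr_deriv ?_
  unfold ekt
  ring

lemma ekt_add (j k : ℤ) (t : ℝ) : ekt (j + k) t = ekt j t * ekt k t := by
  unfold ekt
  rw [← Complex.exp_add]
  push_cast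
  ring_nf

/-- `L` is a bounded functional on continuous functions on `[p, q]` that behaves like
integration `f ↦ ∫ f(t) dE(t)` along the curve `E`. -/
structure IsContour (E : ℝ → ℂ) (L : (ℝ → ℂ) → ℂ) (p q : ℝ) : Prop where
  add : ∀ f g, ContinuousOn f (Icc p q) → ContinuousOn g (Icc p q) →
    L (fun t => f t + g t) = L f + L g
  smul : ∀ (c : ℂ) f, ContinuousOn f (Icc p q) → L (fun t => c * f t) = c * L f
  bound : ∃ K, 0 ≤ K ∧ ∀ f M, ContinuousOn f (Icc p q) → (∀ t ∈ Icc p q, ‖f t‖ ≤ M) →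
    ‖L f‖ ≤ K * M
  moment : ∀ k : ℤ, L (ekt k) = ekt k q * E q - ekt k p * E p -
    ∫ t in p..q, k * Complex.I * ekt k t * E t
  exp : ∀ z, (∀ t ∈ Icc p q, E t ≠ z) →
    Complex.exp (L fun t => (E t - z)⁻¹) = (E q - z) / (E p - z)

namespace IsContour

variable {E : ℝ → ℂ} {L L₁ L₂ : (ℝ → ℂ) → ℂ} {p q r : ℝ}

lemma congr (hL : IsContour E L p q) {f g : ℝ → ℂ} (hf : ContinuousOn f (Icc p q))
    (h : ∀ t ∈ Icc p q, f t = g t) : L f = L g := by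
  have hg : ContinuousOn g (Icc p q) := hf.congr fun t ht => (h t ht).symm
  obtain ⟨K, hK, hb⟩ := hL.bound
  have h1 := hb (fun t => f t + (-1) * g t) 0 (hf.add (continuousOn_const.mul hg)) fun t ht => by
    simp [h t ht]
  rw [hL.add f (fun t => (-1) * g t) hf (continuousOn_const.mul hg), hL.smul _ _ hg,
    mul_zero] at h1
  have := norm_le_zero_iff.1 h1
  linear_combination this

lemma sub (hL : IsContour E L p q) {f g : ℝ → ℂ} (hf : ContinuousOn f (Icc p q))
    (hg : ContinuousOn g (Icc p q)) : L (fun t => f t - g t) = L f - L g := by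
  have := hL.add f (fun t => (-1) * g t) hf (continuousOn_const.mul hg)
  rw [hL.smul _ _ hg] at this
  rw [← hL.congr (f := fun t => f t + (-1) * g t) (hf.add (continuousOn_const.mul hg))
    fun t _ => by ring, this]
  ring

lemma concat (hpq : p < q) (hqr : q < r) (hE : Continuous E) (h1 : IsContour E L₁ p q)
    (h2 : IsContour E L₂ q r) : IsContour E (fun f => L₁ f + L₂ f) p r where
  add f g hf hg := by
    have s1 : Icc p q ⊆ Icc p r := Icc_subset_Icc_right hqr.le
    have s2 : Icc q r ⊆ Icc p r := Icc_subset_Icc_left hpq.le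
    simp only [h1.add f g (hf.mono s1) (hg.mono s1), h2.add f g (hf.mono s2) (hg.mono s2)]
    ring
  smul c f hf := by
    have s1 : Icc p q ⊆ Icc p r := Icc_subset_Icc_right hqr.le
    have s2 : Icc q r ⊆ Icc p r := Icc_subset_Icc_left hpq.le
    simp only [h1.smul c f (hf.mono s1), h2.smul c f (hf.mono s2)]
    ring
  bound := by
    have s1 : Icc p q ⊆ Icc p r := Icc_subset_Icc_right hqr.le
    have s2 : Icc q r ⊆ Icc p r := Icc_subset_Icc_left hpq.le
    obtain ⟨K1, hK1, b1⟩ := h1.bound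
    obtain ⟨K2, hK2, b2⟩ := h2.bound
    refine ⟨K1 + K2, by positivity, fun f M hf hM => (norm_add_le _ _).trans ?_⟩
    rw [add_mul]
    exact add_le_add (b1 f M (hf.mono s1) fun t ht => hM t (s1 ht))
      (b2 f M (hf.mono s2) fun t ht => hM t (s2 ht))
  moment k := by
    have hc : Continuous fun t => (k : ℂ) * Complex.I * ekt k t * E t :=
      (continuous_const.mul (continuous_ekt k)).mul hE
    simp only [h1.moment, h2.moment]
    rw [← intervalIntegral.integral_add_adjacent_intervals (hc.intervalIntegrable p q)
      (hc.intervalIntegrable q r)]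
    ring
  exp z hz := by
    have s1 : Icc p q ⊆ Icc p r := Icc_subset_Icc_right hqr.le
    have s2 : Icc q r ⊆ Icc p r := Icc_subset_Icc_left hpq.le
    rw [Complex.exp_add, h1.exp z fun t ht => hz t (s1 ht), h2.exp z fun t ht => hz t (s2 ht)]
    have := sub_ne_zero.2 (hz q ⟨hpq.le, hqr.le⟩)
    have := sub_ne_zero.2 (hz p ⟨le_rfl, hpq.le.trans hqr.le⟩)
    field_simp

end IsContour

namespace Piece

variable {E : ℝ → ℂ} {p q : ℝ}

/-- Integration along a piece. -/
def contour (P : Piece E p q) (f : ℝ → ℂ) : ℂ := ∫ s in P.a..P.b, f (P.τ s) * P.vel s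

lemma cont_integrand (P : Piece E p q) {f : ℝ → ℂ} (hf : ContinuousOn f (Icc p q)) :
    ContinuousOn (fun s => f (P.τ s) * P.vel s) (Icc P.a P.b) :=
  (hf.comp P.cont P.mapsTo).mul P.cont_vel

lemma hasDerivWithinAt_primitive {f : ℝ → ℂ} {a b s : ℝ}
    (hf : ContinuousOn f (Icc a b)) (hs : s ∈ Icc a b) :
    HasDerivWithinAt (fun x => ∫ u in a..x, f u) (f s) (Icc a b) s := by
  have : Fact (s ∈ Icc a b) := ⟨hs⟩
  refine intervalIntegral.integral_hasDerivWithinAt_right ?_ ?_ (hf s hs)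
  · exact (hf.mono (Icc_subset_Icc_right hs.2)).intervalIntegrable_of_Icc hs.1
  · exact hf.stronglyMeasurableAtFilter_nhdsWithin measurableSet_Icc s

lemma const_of_hasDerivWithinAt_zero {f : ℝ → ℂ} {a b : ℝ} (hab : a < b)
    (hf : ∀ s ∈ Icc a b, HasDerivWithinAt f 0 (Icc a b) s) : f b = f a := by
  refine constant_of_has_deriv_right_zero (fun s hs => (hf s hs).continuousWithinAt)
    (fun s hs => ?_) b (right_mem_Icc.2 hab.le)
  exact (hf s (Ico_subset_Icc_self hs)).mono_of_mem_nhdsWithin (Icc_mem_nhdsGE_of_mem hs)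

lemma contour_exp (P : Piece E p q) {z : ℂ} (hz : ∀ t ∈ Icc p q, E t ≠ z) :
    Complex.exp (P.contour fun t => (E t - z)⁻¹) = (E q - z) / (E p - z) := by
  have hz' : ∀ s ∈ Icc P.a P.b, E (P.τ s) - z ≠ 0 := fun s hs =>
    sub_ne_zero.2 (hz _ (P.mapsTo hs))
  have hc : ContinuousOn (fun s => (E (P.τ s) - z)⁻¹ * P.vel s) (Icc P.a P.b) :=
    ((P.cont_curve.sub continuousOn_const).inv₀ hz').mul P.cont_vel
  have key := const_of_hasDerivWithinAt_zero P.lt (f := fun s =>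
    Complex.exp (-∫ u in P.a..s, (E (P.τ u) - z)⁻¹ * P.vel u) * (E (P.τ s) - z)) fun s hs => by
      have h1 := ((hasDerivWithinAt_primitive hc hs).neg.cexp).mul
        ((P.hasDeriv s hs).sub_const z)
      refine h1.congr_deriv ?_
      have := hz' s hs
      field_simp
      ring
  simp only [intervalIntegral.integral_same, neg_zero, Complex.exp_zero, one_mul, P.τ_a, P.τ_b]
    at key
  rw [Complex.exp_neg] at key
  have h1 := sub_ne_zero.2 (hz p ⟨le_rfl, P.param_lt.le⟩)
  have h2 := Complex.exp_ne_zero (∫ u in P.a..P.b, (E (P.τ u) - z)⁻¹ * P.vel u)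
  rw [contour, eq_div_iff h1, ← key]
  field_simp

lemma contour_moment (P : Piece E p q) (hE : Continuous E) {g g' : ℝ → ℂ}
    (hg : ∀ t, HasDerivAt g (g' t) t) (hg' : Continuous g') :
    P.contour g = g q * E q - g p * E p - ∫ t in p..q, g' t * E t := by
  have hgc : Continuous g := continuous_iff_continuousAt.2 fun t => (hg t).continuousAt
  have hc : ContinuousOn (fun s => g (P.τ s) * P.vel s) (Icc P.a P.b) :=
    P.cont_integrand hgc.continuousOn
  have key := const_of_hasDerivWithinAt_zero P.lt (f := fun s =>
    (∫ u in P.a..s, g (P.τ u) * P.vel u) - g (P.τ s) * E (P.τ s) +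
      ∫ t in p..(P.τ s), g' t * E t) fun s₀ h0 => by
    set t₀ := P.τ s₀ with ht₀
    -- the part of the derivative which does not see `τ`
    have h1 := (hasDerivWithinAt_primitive hc h0).sub
      ((P.hasDeriv s₀ h0).const_mul (g t₀))
    have h2 : HasDerivWithinAt (fun s => (∫ t in p..(P.τ s), g' t * E t) -
        (g (P.τ s) - g t₀) * E (P.τ s)) 0 (Icc P.a P.b) s₀ := by
      obtain ⟨C, hC⟩ := isCompact_Icc.exists_bound_of_continuousOn P.cont_vel
      obtain ⟨C', hC'⟩ := isCompact_Icc.exists_bound_of_continuousOn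
        (hg'.continuousOn (s := Icc p q))
      have hC0 : 0 ≤ C := (norm_nonneg _).trans (hC _ P.left_mem)
      have hC0' : 0 ≤ C' := (norm_nonneg _).trans (hC' _ (P.mapsTo P.left_mem))
      have hbound : ∀ s ∈ Icc P.a P.b, ‖((∫ t in p..(P.τ s), g' t * E t) -
          (g (P.τ s) - g t₀) * E (P.τ s)) - ∫ t in p..t₀, g' t * E t‖ ≤
          C' * (C * |s - s₀|) * |P.τ s - t₀| := fun s hs => by
        have hi : ∀ x y, IntervalIntegrable (fun t => g' t * E t) volume x y := fun x y =>
          (hg'.mul hE).intervalIntegrable x y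
        have e1 := intervalIntegral.integral_sub (hi t₀ (P.τ s))
          ((hg'.mul (continuous_const (y := E (P.τ s)))).intervalIntegrable t₀ (P.τ s))
        simp only [Pi.mul_apply] at e1
        rw [intervalIntegral.integral_mul_const, intervalIntegral.integral_eq_sub_of_hasDerivAt
          (fun t _ => hg t) (hg'.intervalIntegrable _ _),
          ← intervalIntegral.integral_interval_sub_left (hi p (P.τ s)) (hi p t₀)] at e1
        rw [sub_right_comm, ← e1]
        refine intervalIntegral.norm_integral_le_of_norm_le_const fun t ht => ?_
        obtain ⟨u, hu, rfl⟩ : ∃ u ∈ uIcc s₀ s, P.τ u = t := by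
          have := intermediate_value_uIcc (P.cont.mono (uIcc_subset_Icc h0 hs))
          exact this (uIoc_subset_uIcc ht)
        have hu' := uIcc_subset_Icc h0 hs hu
        have hE' := (convex_Icc P.a P.b).norm_image_sub_le_of_norm_hasDerivWithin_le
          P.hasDeriv hC hs hu'
        rw [← mul_sub, norm_mul]
        refine mul_le_mul (hC' _ (P.mapsTo hu')) (hE'.trans ?_) (norm_nonneg _) hC0'
        rw [Real.norm_eq_abs, abs_sub_comm]
        exact mul_le_mul_of_nonneg_left (abs_sub_right_of_mem_uIcc hu) hC0
      rw [hasDerivWithinAt_iff_isLittleO]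
      have hlim : Tendsto (fun s => C' * C * |P.τ s - t₀|) (𝓝[Icc P.a P.b] s₀) (𝓝 0) := by
        have h := (((P.cont s₀ h0).sub (continuousWithinAt_const (b := t₀))).abs).const_mul
          (C' * C)
        have := h.tendsto
        simpa [ht₀] using this
      refine Asymptotics.isLittleO_iff.2 fun ε hε => ?_
      filter_upwards [hlim.eventually_lt_const hε, self_mem_nhdsWithin] with s hs1 hs
      have := hbound s hs
      simp only [← ht₀, sub_self, zero_mul, sub_zero, smul_zero]
      refine this.trans ?_
      rw [Real.norm_eq_abs]
      calc _ = (C' * C * |P.τ s - t₀|) * |s - s₀| := by ring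
        _ ≤ _ := by gcongr
    have h3 := h1.add h2
    refine (h3.congr_deriv (by simp [ht₀])).congr (fun s hs => ?_) ?_
    · simp only [Pi.add_apply, Pi.sub_apply]
      ring
    · simp only [Pi.add_apply, Pi.sub_apply]
      ring
  simp only [intervalIntegral.integral_same, P.τ_a, P.τ_b] at key
  rw [contour]
  linear_combination key

lemma contour_isContour (P : Piece E p q) (hE : Continuous E) : IsContour E P.contour p q where
  add f g hf hg := by
    unfold contour
    rw [← intervalIntegral.integral_add
      ((P.cont_integrand hf).intervalIntegrable_of_Icc P.lt.le)
      ((P.cont_integrand hg).intervalIntegrable_of_Icc P.lt.le)]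
    simp only [add_mul]
  smul c f hf := by
    unfold contour
    rw [← intervalIntegral.integral_const_mul]
    simp only [mul_assoc]
  bound := by
    obtain ⟨C, hC⟩ := isCompact_Icc.exists_bound_of_continuousOn P.cont_vel
    have hC0 : 0 ≤ C := (norm_nonneg _).trans (hC _ P.left_mem)
    have hab : 0 ≤ P.b - P.a := sub_nonneg.2 P.lt.le
    refine ⟨C * (P.b - P.a), by positivity, fun f M hf hM => ?_⟩
    have := intervalIntegral.norm_integral_le_of_norm_le_const (a := P.a) (b := P.b)
      (f := fun s => f (P.τ s) * P.vel s) (C := M * C) fun s hs => by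
        rw [uIoc_of_le P.lt.le] at hs
        have hs' := Ioc_subset_Icc_self hs
        have hM' := hM _ (P.mapsTo hs')
        have hM0 : 0 ≤ M := (norm_nonneg _).trans hM'
        rw [norm_mul]
        exact mul_le_mul hM' (hC s hs') (norm_nonneg _) hM0
    rw [abs_of_nonneg hab] at this
    exact this.trans (le_of_eq (by ring))
  moment k := P.contour_moment hE (hasDerivAt_ekt k) (continuous_const.mul (continuous_ekt k))
  exp z hz := P.contour_exp hz

end Piece

lemma continuousOn_invFunOn {X Y : Type*} [TopologicalSpace X] [TopologicalSpace Y] [T2Space Y]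
    [Nonempty X] {f : X → Y} {K : Set X} (hK : IsCompact K) (hf : ContinuousOn f K)
    (hinj : InjOn f K) : ContinuousOn (Function.invFunOn f K) (f '' K) := by
  rw [continuousOn_iff_isClosed]
  intro C hC
  refine ⟨f '' (K ∩ C), ((hK.inter_right hC).image_of_continuousOn
    (hf.mono inter_subset_left)).isClosed, ?_⟩
  ext y
  constructor
  · rintro ⟨h1, x, hx, rfl⟩
    rw [mem_preimage, hinj.leftInvOn_invFunOn hx] at h1
    exact ⟨⟨x, ⟨hx, h1⟩, rfl⟩, x, hx, rfl⟩
  · rintro ⟨⟨x, ⟨hx, h1⟩, rfl⟩, h2⟩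
    refine ⟨?_, h2⟩
    rwa [mem_preimage, hinj.leftInvOn_invFunOn hx]

/-- A continuous parametrization of a Jordan curve. -/
structure IsLoop (E : ℝ → ℂ) : Prop where
  cont : Continuous E
  per : Function.Periodic E (2 * Real.pi)
  inj : ∀ s t, E s = E t → ∃ n : ℤ, t - s = n * (2 * Real.pi)

lemma IsLoop.neg {E : ℝ → ℂ} (hE : IsLoop E) : IsLoop fun t => E (-t) where
  cont := hE.cont.comp continuous_neg
  per t := by
    have := hE.per (-t - 2 * Real.pi)
    rw [sub_add_cancel] at this
    change E (-(t + 2 * Real.pi)) = E (-t)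
    rw [this]
    ring_nf
  inj s t h := by
    obtain ⟨n, hn⟩ := hE.inj _ _ h
    exact ⟨-n, by push_cast; linarith⟩

lemma IsLoop.injOn {E : ℝ → ℂ} (hE : IsLoop E) {p q : ℝ} (h : q < p + 2 * Real.pi) :
    InjOn E (Icc p q) := fun s hs t ht hst => by
  obtain ⟨n, hn⟩ := hE.inj s t hst
  have hpi := Real.pi_pos
  have h1 : (n : ℝ) < 1 := by
    by_contra! hc
    nlinarith [hs.1, hs.2, ht.1, ht.2]
  have h2 : (-1 : ℝ) < n := by
    by_contra! hc
    nlinarith [hs.1, hs.2, ht.1, ht.2]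
  have h3 : n = 0 := by
    have h1 : n < 1 := by exact_mod_cast h1
    have h2 : -1 < n := by exact_mod_cast h2
    omega
  rw [h3] at hn
  push_cast at hn
  linarith

/-- A smooth arc with Dini-continuous velocity. -/
structure DiniArc (γ γ' : ℝ → ℂ) (ω : ℝ → ℝ) (a b : ℝ) : Prop where
  lt : a < b
  inj : InjOn γ (Icc a b)
  deriv : ∀ s ∈ Icc a b, HasDerivWithinAt γ (γ' s) (Icc a b) s
  cont : ContinuousOn γ' (Icc a b)
  nonzero : ∀ s ∈ Icc a b, γ' s ≠ 0
  ω_mono : MonotoneOn ω (Ici 0)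
  ω_int : IntegrableOn (fun t => ω t / t) (Ioc (0 : ℝ) 1)
  ω_bound : ∀ s ∈ Icc a b, ∀ t ∈ Icc a b, ‖γ' s - γ' t‖ ≤ ω |s - t|

lemma IsDiniSmoothArc.diniArc {γ γ' : ℝ → ℂ} {a b : ℝ} (h : IsDiniSmoothArc γ γ' a b) :
    DiniArc γ γ' (modCont γ' a b) a b := by
  obtain ⟨C, hC⟩ := isCompact_Icc.exists_bound_of_continuousOn h.cont
  have hbdd : ∀ t, BddAbove {d : ℝ | ∃ s₁ ∈ Icc a b, ∃ s₂ ∈ Icc a b, |s₁ - s₂| ≤ t ∧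
      d = ‖γ' s₁ - γ' s₂‖} := fun t => by
    refine ⟨C + C, ?_⟩
    rintro _ ⟨s₁, h1, s₂, h2, -, rfl⟩
    exact (norm_sub_le _ _).trans (add_le_add (hC _ h1) (hC _ h2))
  refine ⟨h.lt, h.inj, h.deriv, h.cont, h.nonzero, fun t ht u _ htu => ?_, h.dini,
    fun s hs t ht => le_csSup (hbdd _) ⟨s, hs, t, ht, le_rfl, rfl⟩⟩
  refine csSup_le_csSup (hbdd u) ⟨_, a, left_mem_Icc.2 h.lt.le, a, left_mem_Icc.2 h.lt.le, ?_, rfl⟩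
    ?_
  · simpa using ht
  · rintro _ ⟨s₁, h1, s₂, h2, h3, rfl⟩
    exact ⟨s₁, h1, s₂, h2, h3.trans htu, rfl⟩

lemma hasDerivWithinAt_comp_neg {f : ℝ → ℂ} {f' : ℂ} {a b s : ℝ}
    (h : HasDerivWithinAt f f' (Icc a b) (-s)) :
    HasDerivWithinAt (fun s => f (-s)) (-f') (Icc (-b) (-a)) s := by
  have := HasDerivWithinAt.scomp (h := fun s : ℝ => -s) (h' := -1) (s := Icc (-b) (-a)) s
    (t' := Icc a b) h (hasDerivAt_neg s).hasDerivWithinAt fun x hx =>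
      ⟨by linarith [hx.2], by linarith [hx.1]⟩
  exact this.congr_deriv (by simp)

lemma neg_mem_Icc_of_neg {a b s : ℝ} (h : s ∈ Icc (-b) (-a)) : -s ∈ Icc a b :=
  ⟨by linarith [h.2], by linarith [h.1]⟩

lemma DiniArc.reverse {γ γ' : ℝ → ℂ} {ω : ℝ → ℝ} {a b : ℝ} (h : DiniArc γ γ' ω a b) :
    DiniArc (fun s => γ (-s)) (fun s => -γ' (-s)) ω (-b) (-a) where
  lt := neg_lt_neg h.lt
  inj s hs t ht hst := neg_injective (h.inj (neg_mem_Icc_of_neg hs) (neg_mem_Icc_of_neg ht) hst)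
  deriv s hs := hasDerivWithinAt_comp_neg (h.deriv _ (neg_mem_Icc_of_neg hs))
  cont := (h.cont.comp continuous_neg.continuousOn fun s hs => neg_mem_Icc_of_neg hs).neg
  nonzero s hs := neg_ne_zero.2 (h.nonzero _ (neg_mem_Icc_of_neg hs))
  ω_mono := h.ω_mono
  ω_int := h.ω_int
  ω_bound s hs t ht := by
    have := h.ω_bound _ (neg_mem_Icc_of_neg hs) _ (neg_mem_Icc_of_neg ht)
    rw [neg_sub_neg, norm_sub_rev]
    rwa [neg_sub_neg, abs_sub_comm] at this

/-- A Dini arc traversed in the direction of `E` is a piece of `E`. -/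
def DiniArc.piece {E γ γ' : ℝ → ℂ} {ω τ : ℝ → ℝ} {a b a' b' : ℝ} (h : DiniArc γ γ' ω a b)
    (ha : a ≤ a') (hab : a' < b') (hb : b' ≤ b) (hm : StrictMonoOn τ (Icc a' b'))
    (hc : ContinuousOn τ (Icc a' b')) (hE : ∀ s ∈ Icc a' b', E (τ s) = γ s) :
    Piece E (τ a') (τ b') where
  vel := γ'
  a := a'
  b := b'
  τ := τ
  ω := ω
  lt := hab
  mono := hm
  cont := hc
  τ_a := rfl
  τ_b := rfl
  hasDeriv s hs := ((h.deriv s (Icc_subset_Icc ha hb hs)).mono (Icc_subset_Icc ha hb)).congr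
    hE (hE s hs)
  cont_vel := h.cont.mono (Icc_subset_Icc ha hb)
  vel_ne s hs := h.nonzero s (Icc_subset_Icc ha hb hs)
  ω_mono := h.ω_mono
  ω_int := h.ω_int
  ω_bound s hs t ht := h.ω_bound s (Icc_subset_Icc ha hb hs) t (Icc_subset_Icc ha hb ht)

/-- The piece of `E` corresponding to a piece of the reversed curve. -/
def Piece.reflect {E : ℝ → ℂ} {p q : ℝ} (P : Piece (fun t => E (-t)) (-q) (-p)) :
    Piece E p q where
  vel s := -P.vel (-s)
  a := -P.b
  b := -P.a
  τ s := -P.τ (-s)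
  ω := P.ω
  lt := neg_lt_neg P.lt
  mono s hs t ht hst := neg_lt_neg
    (P.mono (neg_mem_Icc_of_neg ht) (neg_mem_Icc_of_neg hs) (neg_lt_neg hst))
  cont := (P.cont.comp continuous_neg.continuousOn fun s hs => neg_mem_Icc_of_neg hs).neg
  τ_a := by rw [neg_neg, P.τ_b, neg_neg]
  τ_b := by rw [neg_neg, P.τ_a, neg_neg]
  hasDeriv s hs := hasDerivWithinAt_comp_neg (P.hasDeriv _ (neg_mem_Icc_of_neg hs))
  cont_vel := (P.cont_vel.comp continuous_neg.continuousOn fun s hs => neg_mem_Icc_of_neg hs).neg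
  vel_ne s hs := neg_ne_zero.2 (P.vel_ne _ (neg_mem_Icc_of_neg hs))
  ω_mono := P.ω_mono
  ω_int := P.ω_int
  ω_bound s hs t ht := by
    have := P.ω_bound _ (neg_mem_Icc_of_neg hs) _ (neg_mem_Icc_of_neg ht)
    rw [neg_sub_neg, ← norm_neg, neg_sub]
    rwa [neg_sub_neg, abs_sub_comm] at this

/-- A piece seen as a piece with propositionally equal end points. -/
lemma Piece.nonempty_of_eq {E : ℝ → ℂ} {p q p' q' : ℝ} (P : Piece E p q) (hp : p = p')
    (hq : q = q') : Nonempty (Piece E p' q') := by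
  subst hp hq
  exact ⟨P⟩

lemma exists_piece_right_aux {E γ γ' : ℝ → ℂ} {ω : ℝ → ℝ} {a b x : ℝ} (hE : IsLoop E)
    (h : DiniArc γ γ' ω a b) (hsub : γ '' Icc a b ⊆ range E)
    (hfreq : ∃ᶠ y in 𝓝[>] x, E y ∈ γ '' Icc a b) : ∃ y, x < y ∧ Nonempty (Piece E x y) := by
  have hγc : ContinuousOn γ (Icc a b) := fun s hs => (h.deriv s hs).continuousWithinAt
  have hKc : IsCompact (γ '' Icc a b) := isCompact_Icc.image_of_continuousOn hγc
  have hEx : Tendsto E (𝓝[>] x) (𝓝 (E x)) := hE.cont.continuousAt.mono_left nhdsWithin_le_nhds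
  obtain ⟨s₀, h0, hs0⟩ : E x ∈ γ '' Icc a b :=
    hKc.isClosed.mem_of_frequently_of_tendsto hfreq hEx
  have hpi := Real.pi_gt_three
  -- the inverse of the arc
  have hγi := continuousOn_invFunOn isCompact_Icc hγc h.inj
  have hγl := h.inj.leftInvOn_invFunOn
  -- the inverse of the curve
  have hEinj : InjOn E (Icc (x - 1) (x + 1)) := hE.injOn (by linarith)
  have hEi := continuousOn_invFunOn isCompact_Icc hE.cont.continuousOn hEinj
  have hEl := hEinj.leftInvOn_invFunOn
  set G := Function.invFunOn E (Icc (x - 1) (x + 1)) with hG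
  have hfar : IsCompact (E '' Icc (x + 1) (x + 2 * Real.pi - 1)) :=
    isCompact_Icc.image hE.cont
  have hxfar : E x ∉ E '' Icc (x + 1) (x + 2 * Real.pi - 1) := by
    rintro ⟨t, ht, hEt⟩
    have := hE.injOn (p := x) (q := x + 2 * Real.pi - 1) (by linarith)
      ⟨by linarith [ht.1], ht.2⟩ ⟨le_rfl, by linarith⟩ hEt
    linarith [ht.1]
  have hnear : ∀ᶠ s in 𝓝[Icc a b] s₀, γ s ∈ E '' Icc (x - 1) (x + 1) := by
    have h1 : Tendsto γ (𝓝[Icc a b] s₀) (𝓝 (E x)) := hs0 ▸ hγc s₀ h0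
    filter_upwards [h1.eventually (hfar.isClosed.isOpen_compl.mem_nhds hxfar),
      self_mem_nhdsWithin] with s hs1 hs2
    obtain ⟨t, ht⟩ := hsub ⟨s, hs2, rfl⟩
    obtain ⟨t', ht', hE'⟩ := hE.per.exists_mem_Ico (by linarith : (0 : ℝ) < 2 * Real.pi) t (x - 1)
    rw [ht] at hE'
    have : t' < x + 1 := by
      by_contra! hc
      exact hs1 ⟨t', ⟨hc, by linarith [ht'.2]⟩, hE'.symm⟩
    exact ⟨t', ⟨ht'.1, this.le⟩, hE'.symm⟩
  obtain ⟨δ, hδ, hball⟩ := Metric.mem_nhdsWithin_iff.1 hnear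
  have hfreq' : ∃ᶠ y in 𝓝[>] x, E y ∈ γ '' Icc a b ∧
      |Function.invFunOn γ (Icc a b) (E y) - s₀| < δ ∧ y ∈ Ioc x (x + 1) := by
    have h1 : Tendsto (Function.invFunOn γ (Icc a b)) (𝓝[γ '' Icc a b] (E x)) (𝓝 s₀) := by
      have := hγi (E x) ⟨s₀, h0, hs0⟩
      rwa [ContinuousWithinAt, ← hs0, hγl h0, hs0] at this
    obtain ⟨U, hU, hU2⟩ := (eventually_nhdsWithin_iff.1 (Metric.tendsto_nhds.1 h1 δ hδ)).exists_mem
    have h2 := hEx hU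
    have h3 : Ioc x (x + 1) ∈ 𝓝[>] x := Ioc_mem_nhdsGT (by linarith)
    refine (hfreq.and_eventually (inter_mem h2 h3)).mono fun y hy => ⟨hy.1, ?_, hy.2.2⟩
    have := hU2 _ hy.2.1 hy.1
    rwa [Real.dist_eq] at this
  obtain ⟨y, ⟨s, hs, hsy⟩, hyδ, hxy, hyx⟩ := hfreq'.exists
  rw [← hsy, hγl hs] at hyδ
  -- the lift of the arc between `s₀` and `s`
  have hI : uIcc s₀ s ⊆ Icc a b := uIcc_subset_Icc h0 hs
  have hI2 : ∀ u ∈ uIcc s₀ s, γ u ∈ E '' Icc (x - 1) (x + 1) := fun u hu => by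
    refine hball ⟨?_, hI hu⟩
    rw [Metric.mem_ball, Real.dist_eq]
    exact (abs_sub_left_of_mem_uIcc hu).trans_lt hyδ
  have hτc : ContinuousOn (fun u => G (γ u)) (uIcc s₀ s) := hEi.comp (hγc.mono hI) hI2
  have hEτ : ∀ u ∈ uIcc s₀ s, E (G (γ u)) = γ u := fun u hu => by
    obtain ⟨t, ht, htu⟩ := hI2 u hu
    rw [← htu, hEl ht]
  have hτinj : InjOn (fun u => G (γ u)) (uIcc s₀ s) := fun u hu v hv huv => by
    refine h.inj (hI hu) (hI hv) ?_
    rw [← hEτ u hu, ← hEτ v hv]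
    exact congrArg E huv
  have hτ0 : G (γ s₀) = x := by rw [hs0, hEl ⟨by linarith, by linarith⟩]
  have hτs : G (γ s) = y := by rw [hsy, hEl ⟨by linarith, by linarith⟩]
  refine ⟨y, hxy, ?_⟩
  rcases lt_trichotomy s₀ s with hlt | heq | hgt
  · rw [uIcc_of_le hlt.le] at *
    have hm : StrictMonoOn (fun u => G (γ u)) (Icc s₀ s) :=
      hτc.strictMonoOn_of_injOn_Icc hlt.le (by simp only [hτ0, hτs]; exact hxy.le) hτinj
    exact (h.piece h0.1 hlt hs.2 hm hτc hEτ).nonempty_of_eq hτ0 hτs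
  · rw [heq, hτs] at hτ0
    exact absurd hτ0 hxy.ne'
  · rw [uIcc_of_ge hgt.le] at *
    have hm : StrictAntiOn (fun u => G (γ u)) (Icc s s₀) :=
      hτc.strictAntiOn_of_injOn_Icc hgt.le (by simp only [hτ0, hτs]; exact hxy.le) hτinj
    have hP := h.reverse.piece (E := E) (τ := fun u => G (γ (-u))) (a' := -s₀) (b' := -s)
      (neg_le_neg h0.2) (neg_lt_neg hgt) (neg_le_neg hs.1)
      (fun u hu v hv huv => hm (neg_mem_Icc_of_neg hv) (neg_mem_Icc_of_neg hu) (neg_lt_neg huv))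
      (hτc.comp continuous_neg.continuousOn fun u hu => neg_mem_Icc_of_neg hu)
      (fun u hu => hEτ _ (neg_mem_Icc_of_neg hu))
    exact hP.nonempty_of_eq (by simp only [neg_neg, hτ0]) (by simp only [neg_neg, hτs])

/-- `E` is a loop whose image is a finite union of Dini-smooth arcs. -/
def IsDiniLoop (E : ℝ → ℂ) : Prop := IsLoop E ∧
    ∃ (N : ℕ) (γ γ' : Fin N → ℝ → ℂ) (a b : Fin N → ℝ),
      (∀ i, IsDiniSmoothArc (γ i) (γ' i) (a i) (b i)) ∧
      range E = ⋃ i, γ i '' Icc (a i) (b i)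

lemma IsDiniLoop.neg {E : ℝ → ℂ} (hE : IsDiniLoop E) : IsDiniLoop fun t => E (-t) := by
  obtain ⟨h1, N, γ, γ', a, b, h2, h3⟩ := hE
  refine ⟨h1.neg, N, γ, γ', a, b, h2, ?_⟩
  rw [← h3]
  exact (Equiv.neg ℝ).surjective.range_comp E

lemma IsDiniLoop.exists_piece_right {E : ℝ → ℂ} (hE : IsDiniLoop E) (x : ℝ) :
    ∃ y, x < y ∧ Nonempty (Piece E x y) := by
  obtain ⟨h1, N, γ, γ', a, b, h2, h3⟩ := hE
  have : ∃ i, ∃ᶠ y in 𝓝[>] x, E y ∈ γ i '' Icc (a i) (b i) := by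
    by_contra! hc
    obtain ⟨y, hy⟩ := (eventually_all.2 hc).exists
    have hy2 : E y ∈ ⋃ i, γ i '' Icc (a i) (b i) := h3 ▸ mem_range_self y
    obtain ⟨i, hi⟩ := mem_iUnion.1 hy2
    exact hy i hi
  obtain ⟨i, hi⟩ := this
  refine exists_piece_right_aux h1 (h2 i).diniArc ?_ hi
  rw [h3]
  exact subset_iUnion (fun i => γ i '' Icc (a i) (b i)) i

namespace Piece

variable {E : ℝ → ℂ} {p q : ℝ}

lemma exists_initial_small (P : Piece E p q) {ε : ℝ} (hε : 0 < ε) :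
    ∃ η > 0, ∀ y, p < y → y < p + η → ∃ Q : Piece E p y, Q.Small ε := by
  obtain ⟨δ, hδ, H⟩ := P.exists_small hε
  set b₁ := min P.b (P.a + δ) with hb₁
  have hab : P.a < b₁ := lt_min P.lt (by linarith)
  have hb : b₁ ≤ P.b := min_le_left _ _
  have hτ : p < P.τ b₁ := by
    have := P.mono P.left_mem ⟨hab.le, hb⟩ hab
    rwa [P.τ_a] at this
  refine ⟨P.τ b₁ - p, sub_pos.2 hτ, fun y hpy hy => ?_⟩
  have hyb : y < P.τ b₁ := by linarith
  obtain ⟨s, hs, rfl⟩ := P.surjOn ⟨hpy.le, hyb.le.trans (P.mapsTo ⟨hab.le, hb⟩).2⟩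
  have has : P.a < s := by
    rcases hs.1.lt_or_eq with h | h
    · exact h
    · rw [← h, P.τ_a] at hpy
      exact absurd hpy (lt_irrefl _)
  have hsb : s < b₁ := (P.mono.lt_iff_lt hs ⟨hab.le, hb⟩).1 hyb
  have hsm := H P.a s le_rfl has hs.2 (by linarith [min_le_right P.b (P.a + δ)])
  have key : ∀ p', p' = p → ∀ Q : Piece E p' (P.τ s), Q.Small ε →
      ∃ Q : Piece E p (P.τ s), Q.Small ε := by
    rintro _ rfl Q hQ
    exact ⟨Q, hQ⟩
  exact key _ P.τ_a _ hsm

lemma Small.reflect {P : Piece (fun t => E (-t)) (-q) (-p)} {ε : ℝ} (hP : P.Small ε) :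
    P.reflect.Small ε := by
  intro z hz
  have hz' : ∀ s ∈ Icc P.a P.b, E (-P.τ s) ≠ z := fun s hs => by
    have := hz (-s) ⟨neg_le_neg hs.2, neg_le_neg hs.1⟩
    simpa [Piece.reflect] using this
  have hk : ∀ s, P.reflect.kernel z s = -P.kernel z (-s) := fun s => by
    simp [Piece.reflect, kernel, neg_div]
  obtain ⟨h1, h2⟩ := hP z hz'
  simp only [hk, abs_neg, intervalIntegral.integral_neg]
  have e1 : ∫ s in P.reflect.a..P.reflect.b, |P.kernel z (-s)| =
      ∫ s in P.a..P.b, |P.kernel z s| := by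
    rw [intervalIntegral.integral_comp_neg (fun s => |P.kernel z s|)]
    simp [Piece.reflect]
  have e2 : ∫ s in P.reflect.a..P.reflect.b, P.kernel z (-s) =
      ∫ s in P.a..P.b, P.kernel z s := by
    rw [intervalIntegral.integral_comp_neg (fun s => P.kernel z s)]
    simp [Piece.reflect]
  rw [e1, e2]
  exact ⟨h1, h2⟩

end Piece

lemma IsDiniLoop.exists_small_right {E : ℝ → ℂ} (hE : IsDiniLoop E) (x : ℝ) {ε : ℝ}
    (hε : 0 < ε) : ∃ η > 0, ∀ y, x < y → y < x + η → ∃ Q : Piece E x y, Q.Small ε := by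
  obtain ⟨y, -, ⟨P⟩⟩ := hE.exists_piece_right x
  exact P.exists_initial_small hε

lemma IsDiniLoop.exists_small_left {E : ℝ → ℂ} (hE : IsDiniLoop E) (x : ℝ) {ε : ℝ}
    (hε : 0 < ε) : ∃ η > 0, ∀ y, x - η < y → y < x → ∃ Q : Piece E y x, Q.Small ε := by
  obtain ⟨η, hη, H⟩ := hE.neg.exists_small_right (-x) hε
  refine ⟨η, hη, fun y h1 h2 => ?_⟩
  obtain ⟨Q, hQ⟩ := H (-y) (by linarith) (by linarith)
  exact ⟨Q.reflect, hQ.reflect⟩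

lemma IsDiniLoop.exists_contour {E : ℝ → ℂ} (hE : IsDiniLoop E) {p q : ℝ} (h : p < q) :
    ∃ L, IsContour E L p q := by
  refine rel_of_local (R := fun p q => ∃ L, IsContour E L p q) ?_ ?_ ?_ h
  · rintro p q r hpq hqr ⟨L₁, h1⟩ ⟨L₂, h2⟩
    exact ⟨_, h1.concat hpq hqr hE.1.cont h2⟩
  · intro x
    obtain ⟨η, hη, H⟩ := hE.exists_small_right x one_pos
    refine ⟨η, hη, fun y h1 h2 => ?_⟩
    obtain ⟨Q, -⟩ := H y h1 h2
    exact ⟨_, Q.contour_isContour hE.1.cont⟩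
  · intro x
    obtain ⟨η, hη, H⟩ := hE.exists_small_left x one_pos
    refine ⟨η, hη, fun y h1 h2 => ?_⟩
    obtain ⟨Q, -⟩ := H y h1 h2
    exact ⟨_, Q.contour_isContour hE.1.cont⟩

/-- The closed contour integrals of `e^{ikt}` along `E` vanish for `k ≤ -2`. -/
def NegMoments (E : ℝ → ℂ) : Prop :=
  ∀ p L, IsContour E L p (p + 2 * Real.pi) → ∀ k : ℤ, k ≤ -2 → L (ekt k) = 0

/-- The functional `L` satisfies the Riemann–Lebesgue lemma. -/
def IsRL (L : (ℝ → ℂ) → ℂ) (p q : ℝ) : Prop := ∀ f, ContinuousOn f (Icc p q) →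
  Tendsto (fun n : ℕ => L fun t => ekt n t * f t) atTop (𝓝 0) ∧
  Tendsto (fun n : ℕ => L fun t => ekt (-n) t * f t) atTop (𝓝 0)

lemma IsContour.zero {E : ℝ → ℂ} {L : (ℝ → ℂ) → ℂ} {p q : ℝ} (hL : IsContour E L p q)
    {f : ℝ → ℂ} (hf : ∀ t ∈ Icc p q, f t = 0) : L f = 0 := by
  obtain ⟨K, hK, hb⟩ := hL.bound
  have := hb f 0 (continuousOn_const.congr hf) fun t ht => by rw [hf t ht, norm_zero]
  rw [mul_zero] at this
  exact norm_le_zero_iff.1 this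

lemma exists_trig_approx {p : ℝ} {f : ℝ → ℂ} (hf : ContinuousOn f (Icc p (p + 2 * Real.pi)))
    (hper : f p = f (p + 2 * Real.pi)) {ε : ℝ} (hε : 0 < ε) :
    ∃ (T : Polynomial ℂ) (N : ℕ), ∀ t ∈ Icc p (p + 2 * Real.pi),
      ‖f t - ekt (-N) t * T.eval (ekt 1 t)‖ < ε := by
  have hfact : Fact (0 < 2 * Real.pi) := ⟨Real.two_pi_pos⟩
  set g : C(AddCircle (2 * Real.pi), ℂ) :=
    ⟨AddCircle.liftIco (2 * Real.pi) p f, AddCircle.liftIco_continuous hper hf⟩ with hg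
  have hgf : ∀ t ∈ Icc p (p + 2 * Real.pi), g (t : AddCircle (2 * Real.pi)) = f t := fun t ht => by
    rcases ht.2.lt_or_eq with h | h
    · exact AddCircle.liftIco_coe_apply ⟨ht.1, h⟩
    · rw [h, AddCircle.coe_add_period]
      rw [← hper]
      exact AddCircle.liftIco_coe_apply ⟨le_rfl, by linarith [Real.two_pi_pos]⟩
  have hmem : g ∈ (Submodule.span ℂ (range (@fourier (2 * Real.pi)))).topologicalClosure := by
    rw [span_fourier_closure_eq_top]
    trivial
  obtain ⟨h, hh, hgh⟩ := Metric.mem_closure_iff.1 hmem ε hε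
  have key : ∃ (T : Polynomial ℂ) (N : ℕ), ∀ t : ℝ,
      h (t : AddCircle (2 * Real.pi)) = ekt (-N) t * T.eval (ekt 1 t) := by
    refine Submodule.span_induction (p := fun (h : C(AddCircle (2 * Real.pi), ℂ)) _ =>
      ∃ (T : Polynomial ℂ) (N : ℕ), ∀ t : ℝ,
      h (t : AddCircle (2 * Real.pi)) = ekt (-N) t * T.eval (ekt 1 t)) ?_ ?_ ?_ ?_ hh
    · rintro _ ⟨k, rfl⟩
      refine ⟨Polynomial.X ^ (k + k.natAbs).toNat, k.natAbs, fun t => ?_⟩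
      rw [fourier_coe_apply]
      simp only [Polynomial.eval_pow, Polynomial.eval_X, ekt]
      rw [← Complex.exp_nat_mul, ← Complex.exp_add]
      congr 1
      have h1 : (((k + k.natAbs).toNat : ℤ) : ℂ) = ((k + k.natAbs : ℤ) : ℂ) := by
        rw [Int.toNat_of_nonneg (by omega)]
      rw [Int.cast_natCast] at h1
      rw [h1]
      have : (Real.pi : ℂ) ≠ 0 := Complex.ofReal_ne_zero.2 Real.pi_ne_zero
      push_cast
      field_simp
      ring
    · exact ⟨0, 0, fun t => by simp⟩
    · rintro h₁ h₂ - - ⟨T₁, N₁, e1⟩ ⟨T₂, N₂, e2⟩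
      refine ⟨Polynomial.X ^ N₂ * T₁ + Polynomial.X ^ N₁ * T₂, N₁ + N₂, fun t => ?_⟩
      have hp : ∀ n : ℕ, ekt (-n) t * ekt 1 t ^ n = 1 := fun n => by
        simp only [ekt]
        rw [← Complex.exp_nat_mul, ← Complex.exp_add, ← Complex.exp_zero]
        congr 1
        push_cast
        ring
      have ha : ekt (-((N₁ + N₂ : ℕ) : ℤ)) t = ekt (-N₁) t * ekt (-N₂) t := by
        rw [← ekt_add]
        congr 1
        push_cast
        ring
      rw [ContinuousMap.add_apply, e1, e2, ha]
      simp only [Polynomial.eval_add, Polynomial.eval_mul, Polynomial.eval_pow, Polynomial.eval_X]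
      linear_combination (-ekt (-N₁) t * T₁.eval (ekt 1 t)) * hp N₂ -
        ekt (-N₂) t * T₂.eval (ekt 1 t) * hp N₁
    · rintro c h₁ - ⟨T₁, N₁, e1⟩
      refine ⟨Polynomial.C c * T₁, N₁, fun t => ?_⟩
      rw [ContinuousMap.smul_apply, e1, Polynomial.eval_mul, Polynomial.eval_C, smul_eq_mul]
      ring
  obtain ⟨T, N, hT⟩ := key
  refine ⟨T, N, fun t ht => ?_⟩
  rw [← hT, ← hgf t ht, ← dist_eq_norm]
  exact (ContinuousMap.dist_apply_le_dist _).trans_lt hgh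

lemma ekt_one_pow (m : ℕ) (t : ℝ) : ekt 1 t ^ m = ekt m t := by
  simp only [ekt]
  rw [← Complex.exp_nat_mul]
  congr 1
  push_cast
  ring

/-- Contour functionals vanish on `e^{ikt} T(e^{it})` if they do so on monomials. -/
lemma IsContour.polynomial {E : ℝ → ℂ} {L : (ℝ → ℂ) → ℂ} {p q : ℝ} (hL : IsContour E L p q)
    (k : ℤ) (T : Polynomial ℂ) : L (fun t => ekt k t * T.eval (ekt 1 t)) =
      T.sum fun m c => c * L (ekt (k + m)) := by
  have hc : ∀ T : Polynomial ℂ, ContinuousOn (fun t => ekt k t * T.eval (ekt 1 t)) (Icc p q) :=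
    fun T => ((continuous_ekt k).mul (T.continuous.comp (continuous_ekt 1))).continuousOn
  induction T using Polynomial.induction_on' with
  | add S T hS hT =>
    rw [Polynomial.sum_add_index _ _ _ (fun i => by simp) (fun i a b => by ring), ← hS, ← hT,
      ← hL.add _ _ (hc S) (hc T)]
    simp only [Polynomial.eval_add, mul_add]
  | monomial m c =>
    rw [Polynomial.sum_monomial_index _ _ (by simp), ← hL.smul c _ (continuous_ekt _).continuousOn]
    congr 1
    funext t
    rw [Polynomial.eval_monomial, ekt_one_pow, ekt_add]
    ring

lemma IsContour.tendsto_neg {E : ℝ → ℂ} {L : (ℝ → ℂ) → ℂ} {p : ℝ} (hE : NegMoments E)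
    (hL : IsContour E L p (p + 2 * Real.pi)) {f : ℝ → ℂ}
    (hf : ContinuousOn f (Icc p (p + 2 * Real.pi))) (hper : f p = f (p + 2 * Real.pi)) :
    Tendsto (fun n : ℕ => L fun t => ekt (-n) t * f t) atTop (𝓝 0) := by
  rw [Metric.tendsto_atTop]
  intro ε hε
  obtain ⟨K, hK, hb⟩ := hL.bound
  obtain ⟨T, N, hT⟩ := exists_trig_approx hf hper (ε := ε / (K + 1)) (by positivity)
  refine ⟨T.natDegree + 2, fun n hn => ?_⟩
  rw [dist_zero_right]
  have h0 : L (fun t => ekt (-n - N) t * T.eval (ekt 1 t)) = 0 := by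
    rw [hL.polynomial, Polynomial.sum_def]
    refine Finset.sum_eq_zero fun m hm => ?_
    have := Polynomial.le_natDegree_of_mem_supp m hm
    rw [hE p L hL _ (by omega), mul_zero]
  have hc1 : ContinuousOn (fun t => ekt (-n) t * f t) (Icc p (p + 2 * Real.pi)) :=
    (continuous_ekt _).continuousOn.mul hf
  have hc2 : ContinuousOn (fun t => ekt (-n - N) t * T.eval (ekt 1 t))
      (Icc p (p + 2 * Real.pi)) :=
    ((continuous_ekt _).mul (T.continuous.comp (continuous_ekt 1))).continuousOn
  rw [← sub_zero (L _), ← h0, ← hL.sub hc1 hc2]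
  refine (hb _ (ε / (K + 1)) (hc1.sub hc2) fun t ht => ?_).trans_lt ?_
  · change ‖ekt (-n) t * f t - ekt (-n - N) t * T.eval (ekt 1 t)‖ ≤ _
    rw [sub_eq_add_neg (-(n : ℤ)), ekt_add, mul_assoc, ← mul_sub, norm_mul, norm_ekt, one_mul]
    exact (hT t ht).le
  · rw [← mul_div_assoc, div_lt_iff₀ (by positivity)]
    nlinarith

namespace Piece

variable {E : ℝ → ℂ} {p q : ℝ}

/-- A trapezoidal cut-off function. -/
def cutoff (p q : ℝ) (k : ℕ) (t : ℝ) : ℝ := max 0 (min 1 (min (k * (t - p)) (k * (q - t))))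

lemma continuous_cutoff (p q : ℝ) (k : ℕ) : Continuous (cutoff p q k) := by
  unfold cutoff
  fun_prop

lemma cutoff_nonneg (p q : ℝ) (k : ℕ) (t : ℝ) : 0 ≤ cutoff p q k t := le_max_left _ _

lemma cutoff_le_one (p q : ℝ) (k : ℕ) (t : ℝ) : cutoff p q k t ≤ 1 :=
  max_le zero_le_one (min_le_left _ _)

lemma cutoff_eq_zero {p q : ℝ} {k : ℕ} {t : ℝ} (h : t ≤ p ∨ q ≤ t) : cutoff p q k t = 0 := by
  refine max_eq_left ((min_le_right _ _).trans ?_)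
  have hk : (0 : ℝ) ≤ k := k.cast_nonneg
  rcases h with h | h
  · exact (min_le_left _ _).trans (mul_nonpos_of_nonneg_of_nonpos hk (by linarith))
  · exact (min_le_right _ _).trans (mul_nonpos_of_nonneg_of_nonpos hk (by linarith))

lemma tendsto_cutoff {p q t : ℝ} (h1 : p < t) (h2 : t < q) :
    Tendsto (fun k => cutoff p q k t) atTop (𝓝 1) := by
  refine tendsto_const_nhds.congr' ?_
  have e1 := tendsto_natCast_atTop_atTop.atTop_mul_const (r := t - p) (by linarith)
    |>.eventually_ge_atTop (1 : ℝ)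
  have e2 := tendsto_natCast_atTop_atTop.atTop_mul_const (r := q - t) (by linarith)
    |>.eventually_ge_atTop (1 : ℝ)
  filter_upwards [e1, e2] with k h1 h2
  rw [cutoff, min_eq_left (le_min h1 h2), max_eq_right zero_le_one]

lemma tendsto_contour_neg (P : Piece E p q) (hD : IsDiniLoop E) (hE : NegMoments E)
    (hq : q < p + 2 * Real.pi) {f : ℝ → ℂ} (hf : ContinuousOn f (Icc p q)) :
    Tendsto (fun n : ℕ => P.contour fun t => ekt (-n) t * f t) atTop (𝓝 0) := by
  obtain ⟨L', hL'⟩ := hD.exists_contour hq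
  have hL := P.contour_isContour hD.1.cont
  have hT := hL.concat P.param_lt hq hD.1.cont hL'
  obtain ⟨C, hC⟩ := isCompact_Icc.exists_bound_of_continuousOn (P.cont_integrand hf)
  have hC0 : 0 ≤ C := (norm_nonneg _).trans (hC _ P.left_mem)
  -- the cut-off error
  have hcut : Tendsto (fun k => ∫ s in P.a..P.b, (1 - cutoff p q k (P.τ s)) * C) atTop (𝓝 0) := by
    have := intervalIntegral.tendsto_integral_filter_of_dominated_convergence (μ := volume)
      (a := P.a) (b := P.b) (F := fun k s => (1 - cutoff p q k (P.τ s)) * C) (f := fun _ => 0)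
      (l := atTop) (fun _ => C) ?_ ?_ (intervalIntegrable_const) ?_
    · simpa using this
    · refine Eventually.of_forall fun k => ?_
      rw [uIoc_of_le P.lt.le]
      exact (((continuousOn_const.sub ((continuous_cutoff p q k).comp_continuousOn P.cont)).mul
        continuousOn_const).mono Ioc_subset_Icc_self).aestronglyMeasurable measurableSet_Ioc
    · refine Eventually.of_forall fun k => Eventually.of_forall fun s _ => ?_
      rw [Real.norm_eq_abs, abs_mul, abs_of_nonneg hC0, abs_of_nonneg (by
        linarith [cutoff_le_one p q k (P.τ s)])]
      exact mul_le_of_le_one_left hC0 (by linarith [cutoff_nonneg p q k (P.τ s)])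
    · have hne : ∀ᵐ s : ℝ, s ≠ P.b := by simp [ae_iff]
      filter_upwards [hne] with s hs1 hs
      rw [uIoc_of_le P.lt.le] at hs
      have hs' := Ioc_subset_Icc_self hs
      have h1 := P.mono P.left_mem hs' hs.1
      have h2 := P.mono hs' P.right_mem (lt_of_le_of_ne hs.2 hs1)
      rw [P.τ_a] at h1
      rw [P.τ_b] at h2
      simpa using ((tendsto_cutoff h1 h2).const_sub 1).mul_const C
  rw [Metric.tendsto_atTop]
  intro ε hε
  obtain ⟨k, hk⟩ := (hcut.eventually_lt_const (half_pos hε)).exists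
  have hpq := P.param_lt.le
  set f₀ : ℝ → ℂ := IccExtend hpq (Icc p q |>.domRestrict f) with hf₀
  have hf₀c : Continuous f₀ := (continuousOn_iff_continuous_domRestrict.1 hf).Icc_extend'
  have hf₀e : ∀ t ∈ Icc p q, f₀ t = f t := fun t ht => by
    rw [hf₀, IccExtend_of_mem hpq _ ht, domRestrict_apply]
  set fk : ℝ → ℂ := fun t => cutoff p q k t * f₀ t with hfk
  have hfkc : Continuous fk := by
    have := continuous_cutoff p q k
    fun_prop
  have htot := hT.tendsto_neg hE hfkc.continuousOn (by
    simp only [hfk]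
    rw [cutoff_eq_zero (Or.inl le_rfl), cutoff_eq_zero (Or.inr hq.le)]
    simp)
  obtain ⟨N, hN⟩ := Metric.tendsto_atTop.1 htot (ε / 2) (half_pos hε)
  refine ⟨N, fun n hn => ?_⟩
  have h1 := hN n hn
  rw [dist_zero_right] at h1 ⊢
  rw [hL'.zero (f := fun t => ekt (-n) t * fk t) fun t ht => by
    simp only [hfk]
    rw [cutoff_eq_zero (Or.inr ht.1)]
    simp, add_zero] at h1
  have hc1 : ContinuousOn (fun t => ekt (-n) t * f t) (Icc p q) :=
    (continuous_ekt _).continuousOn.mul hf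
  have hc2 : ContinuousOn (fun t => ekt (-n) t * fk t) (Icc p q) :=
    ((continuous_ekt _).mul hfkc).continuousOn
  have h2 : ‖P.contour (fun t => ekt (-n) t * f t) - P.contour (fun t => ekt (-n) t * fk t)‖ <
      ε / 2 := by
    rw [← hL.sub hc1 hc2]
    refine (intervalIntegral.norm_integral_le_integral_norm P.lt.le).trans_lt
      (lt_of_le_of_lt ?_ hk)
    refine intervalIntegral.integral_mono_on P.lt.le
      ((P.cont_integrand (hc1.sub hc2)).norm.intervalIntegrable_of_Icc P.lt.le)
      (((continuousOn_const.sub ((continuous_cutoff p q k).comp_continuousOn P.cont)).mul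
        continuousOn_const).intervalIntegrable_of_Icc P.lt.le) fun s hs => ?_
    have e1 : (ekt (-n) (P.τ s) * f (P.τ s) - ekt (-n) (P.τ s) * fk (P.τ s)) * P.vel s =
        ekt (-n) (P.τ s) * ((1 - cutoff p q k (P.τ s) : ℝ) * (f (P.τ s) * P.vel s)) := by
      simp only [hfk, hf₀e _ (P.mapsTo hs)]
      push_cast
      ring
    rw [e1, norm_mul, norm_ekt, one_mul, norm_mul, Complex.norm_real, Real.norm_eq_abs,
      abs_of_nonneg (by linarith [cutoff_le_one p q k (P.τ s)])]
    exact mul_le_mul_of_nonneg_left (hC s hs) (by linarith [cutoff_le_one p q k (P.τ s)])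
  calc _ = ‖(P.contour (fun t => ekt (-n) t * f t) - P.contour (fun t => ekt (-n) t * fk t)) +
        P.contour (fun t => ekt (-n) t * fk t)‖ := by rw [sub_add_cancel]
    _ < ε / 2 + ε / 2 := (norm_add_le _ _).trans_lt (add_lt_add h2 h1)
    _ = ε := add_halves ε

lemma exists_inverse (P : Piece E p q) : ∃ σ : ℝ → ℝ, ContinuousOn σ (Icc p q) ∧
    MapsTo σ (Icc p q) (Icc P.a P.b) ∧ ∀ s ∈ Icc P.a P.b, σ (P.τ s) = s := by
  have h := continuousOn_invFunOn isCompact_Icc P.cont P.mono.injOn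
  have hsub : Icc p q ⊆ P.τ '' Icc P.a P.b := P.surjOn
  exact ⟨_, h.mono hsub, fun t ht => Function.invFunOn_mem (hsub ht),
    P.mono.injOn.leftInvOn_invFunOn⟩

lemma ekt_neg_eq_conj (k : ℤ) (t : ℝ) : (starRingEnd ℂ) (ekt k t) = ekt (-k) t := by
  simp only [ekt]
  rw [← Complex.exp_conj]
  congr 1
  simp

lemma isRL_contour (P : Piece E p q) (hD : IsDiniLoop E) (hE : NegMoments E)
    (hq : q < p + 2 * Real.pi) : IsRL P.contour p q := by
  intro f hf
  refine ⟨?_, P.tendsto_contour_neg hD hE hq hf⟩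
  obtain ⟨σ, hσc, hσm, hσ⟩ := P.exists_inverse
  set g : ℝ → ℂ := fun t =>
    (starRingEnd ℂ) (f t) * ((starRingEnd ℂ) (P.vel (σ t)) / P.vel (σ t)) with hg
  have hvc : ContinuousOn (fun t => P.vel (σ t)) (Icc p q) := P.cont_vel.comp hσc hσm
  have hgc : ContinuousOn g (Icc p q) :=
    (Complex.continuous_conj.comp_continuousOn hf).mul
      ((Complex.continuous_conj.comp_continuousOn hvc).div hvc fun t ht =>
        P.vel_ne _ (hσm ht))
  have h := P.tendsto_contour_neg hD hE hq hgc
  have h2 := (Complex.continuous_conj.tendsto 0).comp h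
  rw [map_zero] at h2
  refine h2.congr fun n => ?_
  rw [Function.comp_apply, contour, contour, ← intervalIntegral.intervalIntegral_conj]
  refine intervalIntegral.integral_congr fun s hs => ?_
  rw [uIcc_of_le P.lt.le] at hs
  have := P.vel_ne s hs
  simp only [hg, hσ s hs]
  rw [mul_assoc, mul_assoc, div_mul_cancel₀ _ this, map_mul, map_mul, Complex.conj_conj,
    Complex.conj_conj, ekt_neg_eq_conj, neg_neg]
  ring

end Piece

lemma IsDiniLoop.exists_contour_isRL {E : ℝ → ℂ} (hE : IsDiniLoop E) (hneg : NegMoments E)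
    {p q : ℝ} (h : p < q) : ∃ L, IsContour E L p q ∧ IsRL L p q := by
  have hpi := Real.pi_pos
  refine rel_of_local (R := fun p q => ∃ L, IsContour E L p q ∧ IsRL L p q) ?_ ?_ ?_ h
  · rintro p q r hpq hqr ⟨L₁, h1, h1'⟩ ⟨L₂, h2, h2'⟩
    refine ⟨_, h1.concat hpq hqr hE.1.cont h2, fun f hf => ?_⟩
    obtain ⟨a1, b1⟩ := h1' f (hf.mono (Icc_subset_Icc_right hqr.le))
    obtain ⟨a2, b2⟩ := h2' f (hf.mono (Icc_subset_Icc_left hpq.le))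
    exact ⟨by simpa using a1.add a2, by simpa using b1.add b2⟩
  · intro x
    obtain ⟨η, hη, H⟩ := hE.exists_small_right x one_pos
    refine ⟨min η Real.pi, lt_min hη hpi, fun y h1 h2 => ?_⟩
    obtain ⟨Q, -⟩ := H y h1 (by linarith [min_le_left η Real.pi])
    exact ⟨_, Q.contour_isContour hE.1.cont,
      Q.isRL_contour hE hneg (by linarith [min_le_right η Real.pi])⟩
  · intro x
    obtain ⟨η, hη, H⟩ := hE.exists_small_left x one_pos
    refine ⟨min η Real.pi, lt_min hη hpi, fun y h1 h2 => ?_⟩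
    obtain ⟨Q, -⟩ := H y (by linarith [min_le_left η Real.pi]) h2
    exact ⟨_, Q.contour_isContour hE.1.cont,
      Q.isRL_contour hE hneg (by linarith [min_le_right η Real.pi])⟩

lemma IsJordanCurve.isCompact {Γ : Set ℂ} (h : IsJordanCurve Γ) : IsCompact Γ := by
  obtain ⟨f, hf, hper, -, rfl⟩ := h
  rw [← hper.image_Icc Real.two_pi_pos 0]
  exact isCompact_Icc.image hf

lemma isOpen_exteriorDomain {Γ : Set ℂ} (h : IsClosed Γ) : IsOpen (exteriorDomain Γ) := by
  rw [isOpen_iff_mem_nhds]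
  rintro z ⟨hz, hb⟩
  filter_upwards [(h.isOpen_compl.connectedComponentIn (x := z)).mem_nhds
    (mem_connectedComponentIn hz)] with y hy
  refine ⟨connectedComponentIn_subset _ _ hy, ?_⟩
  rwa [← connectedComponentIn_eq hy]

lemma isPreconnected_compl_closedBall {R : ℝ} (hR : 0 ≤ R) :
    IsPreconnected (Metric.closedBall (0 : ℂ) R)ᶜ := by
  have h : (Metric.closedBall (0 : ℂ) R)ᶜ = Complex.exp '' {z | Real.log R < z.re} ∨ R = 0 := by
    rcases hR.eq_or_lt with h | h
    · exact Or.inr h.symm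
    · left
      ext w
      simp only [mem_compl_iff, Metric.mem_closedBall, dist_zero_right, not_le, mem_image,
        mem_ofPred_eq]
      constructor
      · intro hw
        have hw0 : w ≠ 0 := norm_pos_iff.1 (h.trans hw)
        refine ⟨Complex.log w, ?_, Complex.exp_log hw0⟩
        rw [Complex.log_re]
        exact Real.log_lt_log h hw
      · rintro ⟨z, hz, rfl⟩
        rw [Complex.norm_exp]
        exact (Real.log_lt_iff_lt_exp h).1 hz
  rcases h with h | h
  · rw [h]
    exact ((convex_halfSpace_re_gt _).isPreconnected).image _ Complex.continuous_exp.continuousOn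
  · rw [h, Metric.closedBall_zero]
    exact (isConnected_compl_singleton_of_one_lt_rank (by simp) 0).isPreconnected

lemma compl_closedBall_subset_exteriorDomain {Γ : Set ℂ} {R : ℝ} (hR : 0 ≤ R)
    (h : Γ ⊆ Metric.closedBall 0 R) : (Metric.closedBall 0 R)ᶜ ⊆ exteriorDomain Γ := by
  intro z hz
  have hsub : (Metric.closedBall (0 : ℂ) R)ᶜ ⊆ Γᶜ := compl_subset_compl.2 h
  refine ⟨hsub hz, fun hb => ?_⟩
  have h1 := hb.subset ((isPreconnected_compl_closedBall hR).subset_connectedComponentIn hz hsub)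
  have h2 : Bornology.IsBounded (univ : Set ℂ) := by
    rw [← compl_union_self (Metric.closedBall (0 : ℂ) R)]
    exact h1.union Metric.isBounded_closedBall
  exact NormedSpace.unbounded_univ ℝ ℂ h2

lemma exteriorDomain_mem_cobounded {Γ : Set ℂ} (h : IsCompact Γ) :
    exteriorDomain Γ ∈ Bornology.cobounded ℂ := by
  obtain ⟨R, hR⟩ := h.isBounded.subset_closedBall 0
  refine mem_of_superset ?_ (compl_closedBall_subset_exteriorDomain (le_max_right R 0)
    (hR.trans (Metric.closedBall_subset_closedBall (le_max_left _ _))))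
  exact Bornology.isBounded_def.1 Metric.isBounded_closedBall

section

variable {Γ : Set ℂ} {φ ψ : ℂ → ℂ} {c : ℝ}

lemma IsExteriorParam.image_eq (hφ : IsExteriorMap Γ φ c) (hψ : IsExteriorParam Γ φ ψ)
    {z : ℂ} (hz : z ∈ exteriorDomain Γ) : 1 < ‖φ z‖ ∧ ψ (φ z) = z := by
  have h1 : 1 < ‖φ z‖ := hφ.bij.mapsTo hz
  obtain ⟨h2, h3⟩ := hψ.inv _ h1
  exact ⟨h1, hφ.bij.injOn h2 hz h3⟩

lemma isOpen_one_lt_norm : IsOpen {w : ℂ | 1 < ‖w‖} := isOpen_lt continuous_const continuous_norm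

lemma IsExteriorParam.differentiableOn (hΓ : IsClosed Γ) (hφ : IsExteriorMap Γ φ c)
    (hψ : IsExteriorParam Γ φ ψ) : DifferentiableOn ℂ ψ {w : ℂ | 1 < ‖w‖} := by
  have hΩ := isOpen_exteriorDomain hΓ
  have hψc : ∀ w : ℂ, 1 < ‖w‖ → ContinuousAt ψ w := fun w hw =>
    hψ.cont.continuousAt (mem_of_superset (isOpen_one_lt_norm.mem_nhds hw)
      fun y (hy : 1 < ‖y‖) => (le_of_lt hy : 1 ≤ ‖y‖))
  have hreg : ∀ w : ℂ, 1 < ‖w‖ → deriv φ (ψ w) ≠ 0 → DifferentiableAt ℂ ψ w := fun w hw hd => by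
    have h1 : HasDerivAt φ (deriv φ (ψ w)) (ψ w) :=
      (hφ.diff.differentiableAt (hΩ.mem_nhds (hψ.inv w hw).1)).hasDerivAt
    exact (h1.of_local_left_inverse (hψc w hw) hd (by
      filter_upwards [isOpen_one_lt_norm.mem_nhds hw] with y hy
      exact (hψ.inv y hy).2)).differentiableAt
  intro w hw
  refine DifferentiableAt.differentiableWithinAt ?_
  have hz := (hψ.inv w hw).1
  have han : AnalyticAt ℂ (deriv φ) (ψ w) := (hφ.diff.analyticAt (hΩ.mem_nhds hz)).deriv
  rcases han.eventually_eq_zero_or_eventually_ne_zero with h0 | h1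
  · exfalso
    obtain ⟨r, hr, hball⟩ := Metric.eventually_nhds_iff_ball.1
      (h0.and (hΩ.mem_nhds hz))
    have hconst : ∀ y ∈ Metric.ball (ψ w) r, φ y = φ (ψ w) := fun y hy =>
      (convex_ball (ψ w) r).is_const_of_fderivWithin_eq_zero (𝕜 := ℂ)
        (hφ.diff.mono fun x hx => (hball x hx).2)
        (fun x hx => by
          rw [fderivWithin_of_isOpen Metric.isOpen_ball hx]
          ext
          simp [(hball x hx).1]) hy (Metric.mem_ball_self hr)
    have hy : ψ w + (r / 2 : ℝ) ∈ Metric.ball (ψ w) r := by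
      rw [Metric.mem_ball, dist_eq_norm, add_sub_cancel_left, Complex.norm_real, Real.norm_eq_abs,
        abs_of_pos (half_pos hr)]
      linarith
    have := hφ.bij.injOn (hball _ hy).2 hz (hconst _ hy)
    rw [add_eq_left, Complex.ofReal_eq_zero] at this
    linarith
  · refine (Complex.analyticAt_of_differentiable_on_punctured_nhds_of_continuousAt ?_
      (hψc w hw)).differentiableAt
    have hinj : Tendsto ψ (𝓝[≠] w) (𝓝[≠] (ψ w)) := by
      refine tendsto_nhdsWithin_iff.2 ⟨(hψc w hw).mono_left nhdsWithin_le_nhds, ?_⟩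
      filter_upwards [self_mem_nhdsWithin, nhdsWithin_le_nhds (isOpen_one_lt_norm.mem_nhds hw)]
        with y hy1 hy2 hy3
      exact hy1 (hψ.inj (le_of_lt (show 1 < ‖y‖ from hy2) : 1 ≤ ‖y‖)
        (le_of_lt (show 1 < ‖w‖ from hw) : 1 ≤ ‖w‖) hy3)
    filter_upwards [hinj.eventually h1, nhdsWithin_le_nhds (isOpen_one_lt_norm.mem_nhds hw)]
      with y hy1 hy2
    exact hreg y hy2 hy1

lemma IsExteriorMap.tendsto' (hΓ : IsCompact Γ) (hφ : IsExteriorMap Γ φ c) :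
    Tendsto (fun z => φ z / z) (Bornology.cobounded ℂ) (𝓝 (c : ℂ)⁻¹) := by
  have := hφ.tendsto
  rwa [inf_eq_left.2 (le_principal_iff.2 (exteriorDomain_mem_cobounded hΓ))] at this

lemma IsExteriorParam.tendsto_cobounded (hΓ : IsCompact Γ) (hφ : IsExteriorMap Γ φ c)
    (hψ : IsExteriorParam Γ φ ψ) :
    Tendsto ψ (Bornology.cobounded ℂ) (Bornology.cobounded ℂ) := by
  have hΩ := isOpen_exteriorDomain hΓ.isClosed
  have hΩc := exteriorDomain_mem_cobounded hΓ
  have hc : (c : ℂ)⁻¹ ≠ 0 := inv_ne_zero (Complex.ofReal_ne_zero.2 hφ.cpos.ne')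
  set a : ℂ → ℂ := Function.update (fun v => (φ v⁻¹)⁻¹) 0 0 with ha
  have ha0 : a 0 = 0 := Function.update_self ..
  have hane : ∀ v, v ≠ 0 → a v = (φ v⁻¹)⁻¹ := fun v hv => Function.update_of_ne hv ..
  have hinv : Tendsto (fun v : ℂ => v⁻¹) (𝓝[≠] 0) (Bornology.cobounded ℂ) :=
    tendsto_inv₀_nhdsNE_zero
  have hΩv : ∀ᶠ v in 𝓝[≠] (0 : ℂ), v⁻¹ ∈ exteriorDomain Γ := hinv hΩc
  have hcont : Tendsto a (𝓝[≠] 0) (𝓝 0) := by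
    have h1 := ((hφ.tendsto' hΓ).comp hinv).inv₀ hc
    have h2 : Tendsto (fun v : ℂ => v) (𝓝[≠] 0) (𝓝 0) := tendsto_id.mono_left nhdsWithin_le_nhds
    have h3 := h2.mul h1
    rw [zero_mul] at h3
    refine h3.congr' ?_
    filter_upwards [self_mem_nhdsWithin] with v hv
    have hv : v ≠ 0 := hv
    simp only [hane v hv, Function.comp_apply, div_inv_eq_mul, mul_inv]
    field_simp
  have hca : ContinuousAt a 0 := by
    rw [continuousAt_iff_punctured_nhds, ha0]
    exact hcont
  have han : AnalyticAt ℂ a 0 := by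
    refine Complex.analyticAt_of_differentiable_on_punctured_nhds_of_continuousAt ?_ hca
    filter_upwards [hΩv, self_mem_nhdsWithin] with v hv1 hv2
    have hv2 : v ≠ 0 := hv2
    have hne : φ v⁻¹ ≠ 0 := norm_pos_iff.1 (zero_lt_one.trans (hφ.bij.mapsTo hv1))
    have hd : DifferentiableAt ℂ (fun v => (φ v⁻¹)⁻¹) v :=
      ((hφ.diff.differentiableAt (hΩ.mem_nhds hv1)).comp v (differentiableAt_inv hv2)).inv hne
    refine hd.congr_of_eventuallyEq ?_
    filter_upwards [isOpen_ne.mem_nhds hv2] with u hu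
    exact hane u hu
  have hopen : 𝓝 (a 0) ≤ map a (𝓝 0) := by
    refine han.eventually_constant_or_nhds_le_map_nhds.resolve_left fun h => ?_
    obtain ⟨v, hv1, hv2, hv3⟩ := ((h.filter_mono nhdsWithin_le_nhds).and
      (hΩv.and self_mem_nhdsWithin)).exists
    have hne : φ v⁻¹ ≠ 0 := norm_pos_iff.1 (zero_lt_one.trans (hφ.bij.mapsTo hv2))
    rw [ha0, hane v hv3] at hv1
    exact inv_ne_zero hne hv1
  intro S hS
  have h1 : ∀ᶠ v in 𝓝 (0 : ℂ), v ≠ 0 → v⁻¹ ∈ S ∩ exteriorDomain Γ :=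
    eventually_nhdsWithin_iff.1 (hinv (inter_mem hS hΩc))
  have h2 : a '' {v | v ≠ 0 → v⁻¹ ∈ S ∩ exteriorDomain Γ} ∈ 𝓝 (0 : ℂ) := by
    rw [ha0] at hopen
    exact hopen (image_mem_map h1)
  have hinv' : Tendsto (fun v : ℂ => v⁻¹) (Bornology.cobounded ℂ) (𝓝 0) :=
    tendsto_inv₀_cobounded
  have hne : ∀ᶠ w in Bornology.cobounded ℂ, w ≠ 0 := Bornology.eventually_ne_cobounded 0
  rw [mem_map]
  filter_upwards [hinv' h2, hne] with w hw hw0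
  obtain ⟨v, hv1, hv2⟩ := hw
  have hv0 : v ≠ 0 := by
    rintro rfl
    rw [ha0] at hv2
    exact inv_ne_zero hw0 hv2.symm
  rw [hane v hv0] at hv2
  have h3 := hv1 hv0
  have h4 : φ v⁻¹ = w := inv_injective hv2
  rw [mem_preimage, ← h4, (hψ.image_eq hφ h3.2).2]
  exact h3.1

/-- Analytic data of an exterior parametrization. -/
structure IsExtMap (ψ : ℂ → ℂ) (c : ℝ) : Prop where
  cpos : 0 < c
  cont : ContinuousOn ψ {w : ℂ | 1 ≤ ‖w‖}
  diff : DifferentiableOn ℂ ψ {w : ℂ | 1 < ‖w‖}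
  tendsto : Tendsto (fun w => ψ w / w) (Bornology.cobounded ℂ) (𝓝 c)

lemma IsExteriorParam.isExtMap (hΓ : IsCompact Γ) (hφ : IsExteriorMap Γ φ c)
    (hψ : IsExteriorParam Γ φ ψ) : IsExtMap ψ c where
  cpos := hφ.cpos
  cont := hψ.cont
  diff := hψ.differentiableOn hΓ.isClosed hφ
  tendsto := by
    have hc : (c : ℂ)⁻¹ ≠ 0 := inv_ne_zero (Complex.ofReal_ne_zero.2 hφ.cpos.ne')
    have h := ((hφ.tendsto' hΓ).comp (hψ.tendsto_cobounded hΓ hφ)).inv₀ hc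
    rw [inv_inv] at h
    refine h.congr' ?_
    have h1 : ∀ᶠ w : ℂ in Bornology.cobounded ℂ, 1 < ‖w‖ :=
      tendsto_norm_cobounded_atTop.eventually_gt_atTop 1
    filter_upwards [h1] with w hw
    simp only [Function.comp_apply, (hψ.inv w hw).2, inv_div]

lemma IsExtMap.tendsto_deriv (hψ : IsExtMap ψ c) :
    Tendsto (deriv ψ) (Bornology.cobounded ℂ) (𝓝 c) := by
  rw [Metric.tendsto_nhds]
  intro ε hε
  have h1 := Metric.tendsto_nhds.1 hψ.tendsto (ε / 4) (by positivity)
  obtain ⟨R, -, hR⟩ := (Metric.hasBasis_cobounded_compl_closedBall (0 : ℂ)).eventually_iff.1 h1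
  have hRb : ∀ w : ℂ, max R 1 < ‖w‖ → ‖ψ w - c * w‖ ≤ ε / 4 * ‖w‖ := fun w hw => by
    have h0 : w ≠ 0 := norm_pos_iff.1 (zero_lt_one.trans ((le_max_right R 1).trans_lt hw))
    have hd : dist (ψ w / w) (c : ℂ) < ε / 4 :=
      hR (by simpa using (le_max_left R 1).trans_lt hw)
    rw [dist_eq_norm, div_sub' h0, norm_div, div_lt_iff₀ (norm_pos_iff.2 h0)] at hd
    rw [mul_comm (c : ℂ)]
    exact hd.le
  have h2 : ∀ᶠ w : ℂ in Bornology.cobounded ℂ, 2 * (max R 1) < ‖w‖ :=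
    tendsto_norm_cobounded_atTop.eventually_gt_atTop _
  filter_upwards [h2] with w hw
  have hw1 : 2 < ‖w‖ := by linarith [le_max_right R 1]
  have hw0 : 0 < ‖w‖ / 2 := by linarith
  have hball : ∀ u ∈ Metric.closedBall w (‖w‖ / 2), ‖w‖ / 2 ≤ ‖u‖ ∧ ‖u‖ ≤ 3 / 2 * ‖w‖ :=
    fun u hu => by
      rw [Metric.mem_closedBall, dist_eq_norm] at hu
      have h1 := norm_sub_norm_le w u
      have h2 := norm_sub_norm_le u w
      rw [norm_sub_rev] at h1
      constructor <;> linarith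
  have hd : DifferentiableOn ℂ (fun w => ψ w - c * w) {w : ℂ | 1 < ‖w‖} :=
    hψ.diff.sub ((differentiable_id.const_mul _).differentiableOn)
  have hsub : Metric.closedBall w (‖w‖ / 2) ⊆ {w : ℂ | 1 < ‖w‖} := fun u hu => by
    have := (hball u hu).1
    change 1 < ‖u‖
    linarith
  have key := Complex.norm_deriv_le_of_forall_mem_sphere_norm_le (f := fun w => ψ w - c * w)
    (c := w) (C := ε / 4 * (3 / 2 * ‖w‖)) hw0
    (hd.diffContOnCl_ball hsub) fun u hu => by
      have hu' := hball u (Metric.sphere_subset_closedBall hu)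
      refine (hRb u ?_).trans ?_
      · linarith
      · have := hu'.2
        gcongr
  have hdw : DifferentiableAt ℂ ψ w := hψ.diff.differentiableAt
    (isOpen_one_lt_norm.mem_nhds (by change 1 < ‖w‖; linarith))
  have hder : HasDerivAt (fun w => ψ w - c * w) (deriv ψ w - c) w := by
    exact (hdw.hasDerivAt.sub ((hasDerivAt_id w).const_mul (c : ℂ))).congr_deriv (by simp)
  rw [hder.deriv] at key
  rw [dist_eq_norm]
  refine key.trans_lt ?_
  rw [div_lt_iff₀ hw0]
  nlinarith

end

lemma circleIntegral_eq_of_tendsto {f : ℂ → ℂ} {ℓ : ℂ}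
    (hf : DifferentiableOn ℂ f {w : ℂ | 1 < ‖w‖})
    (hlim : Tendsto (fun w => w * f w) (Bornology.cobounded ℂ) (𝓝 ℓ)) :
    ∮ w in C(0, 2), f w = 2 * Real.pi * Complex.I * ℓ := by
  have hpi := Real.pi_pos
  have hle : ∀ ε > 0, ‖(∮ w in C(0, 2), f w) - 2 * Real.pi * Complex.I * ℓ‖ ≤
      2 * Real.pi * ε := fun ε hε => by
    obtain ⟨R₀, -, hR₀⟩ := (Metric.hasBasis_cobounded_compl_closedBall (0 : ℂ)).eventually_iff.1
      (Metric.tendsto_nhds.1 hlim ε hε)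
    set R := max R₀ 2 + 1 with hR
    have hR2 : 2 ≤ R := by linarith [le_max_right R₀ 2]
    have hRp : 0 < R := by linarith
    have hsph : ∀ w ∈ Metric.sphere (0 : ℂ) R, ‖w‖ = R := fun w hw => by simpa using hw
    have hsub : Metric.sphere (0 : ℂ) R ⊆ {w : ℂ | 1 < ‖w‖} := fun w hw => by
      change 1 < ‖w‖
      rw [hsph w hw]
      linarith
    have h1 : ∮ w in C(0, R), f w = ∮ w in C(0, 2), f w := by
      refine Complex.circleIntegral_eq_of_differentiable_on_annulus_off_countable two_pos hR2
        countable_empty (hf.continuousOn.mono fun w hw => ?_) fun w hw =>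
          hf.differentiableAt (isOpen_one_lt_norm.mem_nhds ?_)
      · have : 2 ≤ ‖w‖ := by simpa using hw.2
        change 1 < ‖w‖
        linarith
      · have : 2 < ‖w‖ := by simpa using hw.1.2
        change 1 < ‖w‖
        linarith
    have hinv : ContinuousOn (fun w : ℂ => ℓ * (w - 0)⁻¹) (Metric.sphere 0 R) :=
      continuousOn_const.mul ((continuousOn_id.sub continuousOn_const).inv₀ fun w hw h0 => by
        have := hsph w hw
        have h0' : w = 0 := by simpa using h0
        rw [h0', norm_zero] at this
        linarith)
    have h2 : ∮ w in C(0, R), (f w - ℓ * (w - 0)⁻¹) =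
        (∮ w in C(0, 2), f w) - 2 * Real.pi * Complex.I * ℓ := by
      rw [circleIntegral.integral_sub ((hf.continuousOn.mono hsub).circleIntegrable hRp.le)
        (hinv.circleIntegrable hRp.le), h1, circleIntegral.integral_const_mul,
        circleIntegral.integral_sub_inv_of_mem_ball (Metric.mem_ball_self hRp)]
      ring
    rw [← h2]
    refine (circleIntegral.norm_integral_le_of_norm_le_const (C := ε / R) hRp.le
      fun w hw => ?_).trans (le_of_eq ?_)
    · have hwR := hsph w hw
      have hw0 : w ≠ 0 := norm_pos_iff.1 (hwR ▸ hRp)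
      have hd : dist (w * f w) ℓ < ε := hR₀ (by
        have : R₀ < ‖w‖ := by rw [hwR]; linarith [le_max_left R₀ 2]
        simpa using this)
      rw [dist_eq_norm] at hd
      rw [sub_zero, le_div_iff₀ hRp, ← hwR, ← norm_mul]
      refine le_of_eq_of_le ?_ hd.le
      congr 1
      field_simp
    · field_simp
  rw [← sub_eq_zero, ← norm_le_zero_iff]
  refine le_of_forall_pos_le_add fun ε hε => ?_
  have := hle (ε / (2 * Real.pi)) (by positivity)
  rwa [mul_div_cancel₀ _ (by positivity), ← zero_add ε] at this

/-- The boundary curve `t ↦ ψ(e^{it})`. -/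
def bdry (ψ : ℂ → ℂ) (t : ℝ) : ℂ := ψ (ekt 1 t)

lemma ekt_eq_zpow (k : ℤ) (t : ℝ) : ekt k t = ekt 1 t ^ k := by
  unfold ekt
  rw [← Complex.exp_int_mul]
  push_cast
  ring_nf

lemma ekt_periodic (k : ℤ) : Function.Periodic (ekt k) (2 * Real.pi) := fun t => by
  unfold ekt
  rw [← Complex.exp_periodic.int_mul k (k * t * Complex.I)]
  push_cast
  ring_nf

lemma circleMap_zero_one (t : ℝ) : circleMap 0 1 t = ekt 1 t := by
  simp [circleMap, ekt]

namespace IsExtMap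

variable {ψ : ℂ → ℂ} {c : ℝ}

lemma continuous_bdry (hψ : IsExtMap ψ c) : Continuous (bdry ψ) :=
  hψ.cont.comp_continuous (continuous_ekt 1) fun t => (norm_ekt 1 t).ge

lemma periodic_bdry (ψ : ℂ → ℂ) : Function.Periodic (bdry ψ) (2 * Real.pi) := fun t => by
  unfold bdry
  rw [ekt_periodic]

lemma hasDerivAt (hψ : IsExtMap ψ c) {w : ℂ} (hw : 1 < ‖w‖) : HasDerivAt ψ (deriv ψ w) w :=
  (hψ.diff.differentiableAt (isOpen_one_lt_norm.mem_nhds hw)).hasDerivAt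

lemma diff_deriv (hψ : IsExtMap ψ c) : DifferentiableOn ℂ (deriv ψ) {w : ℂ | 1 < ‖w‖} :=
  hψ.diff.deriv isOpen_one_lt_norm

lemma ne_zero_of_one_le {w : ℂ} (hw : 1 ≤ ‖w‖) : w ≠ 0 :=
  norm_pos_iff.1 (zero_lt_one.trans_le hw)

lemma diff_zpow (k : ℤ) : DifferentiableOn ℂ (fun w : ℂ => w ^ k) {w : ℂ | 1 < ‖w‖} :=
  fun w hw => (differentiableAt_zpow.2 (Or.inl (ne_zero_of_one_le (le_of_lt
    (show 1 < ‖w‖ from hw))))).differentiableWithinAt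

lemma sphere_two_subset : Metric.sphere (0 : ℂ) 2 ⊆ {w : ℂ | 1 < ‖w‖} := fun w hw => by
  have : ‖w‖ = 2 := by simpa using hw
  change 1 < ‖w‖
  linarith

lemma moment (hψ : IsExtMap ψ c) {L : (ℝ → ℂ) → ℂ} {p : ℝ}
    (hL : IsContour (bdry ψ) L p (p + 2 * Real.pi)) (k : ℤ) :
    L (ekt k) = ∮ w in C(0, 2), w ^ k * deriv ψ w := by
  set g : ℂ → ℂ := fun w => k * w ^ (k - 1) * ψ w with hg
  have h1 : L (ekt k) = -∮ w in C(0, 1), g w := by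
    rw [hL.moment, ekt_periodic, periodic_bdry, sub_self, zero_sub, circleIntegral]
    have hper : Function.Periodic (fun t => (k : ℂ) * Complex.I * ekt k t * bdry ψ t)
        (2 * Real.pi) := fun t => by
      simp only [ekt_periodic k t, periodic_bdry ψ t]
    rw [hper.intervalIntegral_add_eq p 0, zero_add]
    congr 1
    refine intervalIntegral.integral_congr fun t _ => ?_
    simp only [hg, deriv_circleMap, circleMap_zero_one, smul_eq_mul, bdry]
    have h0 : ekt 1 t ≠ 0 := Complex.exp_ne_zero _
    rw [ekt_eq_zpow k, zpow_sub_one₀ h0]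
    field_simp
  have h2 : ∮ w in C(0, 2), g w = ∮ w in C(0, 1), g w := by
    refine Complex.circleIntegral_eq_of_differentiable_on_annulus_off_countable one_pos
      one_le_two countable_empty ?_ fun w hw => ?_
    · have hz : ContinuousOn (fun w : ℂ => w ^ (k - 1)) {w : ℂ | 1 ≤ ‖w‖} := fun w hw =>
        (continuousAt_zpow₀ w _ (Or.inl (ne_zero_of_one_le hw))).continuousWithinAt
      exact ((continuousOn_const.mul hz).mul hψ.cont).mono fun w hw => by simpa using hw.2
    · have hw1 : 1 < ‖w‖ := by simpa using hw.1.2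
      exact ((((diff_zpow (k - 1)).const_mul (k : ℂ)).mul hψ.diff).differentiableAt
        (isOpen_one_lt_norm.mem_nhds hw1))
  have h3 : ∮ w in C(0, 2), (g w + w ^ k * deriv ψ w) = 0 :=
    circleIntegral.integral_eq_zero_of_hasDerivWithinAt (f := fun w => w ^ k * ψ w) two_pos.le
      fun w hw => by
        have hw1 := sphere_two_subset hw
        exact ((hasDerivAt_zpow k w (Or.inl (ne_zero_of_one_le hw1.le))).mul
          (hψ.hasDerivAt hw1)).hasDerivWithinAt
  rw [circleIntegral.integral_add] at h3
  · rw [h1, ← h2]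
    linear_combination -h3
  · exact (((((diff_zpow (k - 1)).const_mul (k : ℂ)).mul hψ.diff).continuousOn).mono
      sphere_two_subset).circleIntegrable two_pos.le
  · exact ((((diff_zpow k).mul hψ.diff_deriv).continuousOn).mono
      sphere_two_subset).circleIntegrable two_pos.le

lemma tendsto_zpow_neg {k : ℤ} (hk : k < 0) :
    Tendsto (fun w : ℂ => w ^ k) (Bornology.cobounded ℂ) (𝓝 0) := by
  obtain ⟨n, rfl⟩ : ∃ n : ℕ, k = -((n + 1 : ℕ) : ℤ) := ⟨(-k - 1).toNat, by omega⟩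
  have h : Tendsto (fun w : ℂ => (w⁻¹) ^ (n + 1)) (Bornology.cobounded ℂ) (𝓝 (0 ^ (n + 1))) :=
    tendsto_inv₀_cobounded.pow _
  rw [zero_pow n.succ_ne_zero] at h
  exact h.congr fun w => by rw [zpow_neg, zpow_natCast, inv_pow]

lemma eventually_one_lt_norm : ∀ᶠ w : ℂ in Bornology.cobounded ℂ, 1 < ‖w‖ :=
  tendsto_norm_cobounded_atTop.eventually_gt_atTop 1

lemma negMoments (hψ : IsExtMap ψ c) : NegMoments (bdry ψ) := fun p L hL k hk => by
  rw [hψ.moment hL, circleIntegral_eq_of_tendsto (f := fun w => w ^ k * deriv ψ w) (ℓ := 0)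
    ((diff_zpow k).mul hψ.diff_deriv), mul_zero]
  have h := (tendsto_zpow_neg (k := k + 1) (by omega)).mul hψ.tendsto_deriv
  rw [zero_mul] at h
  refine h.congr' ?_
  filter_upwards [eventually_one_lt_norm] with w hw
  rw [zpow_add_one₀ (ne_zero_of_one_le hw.le)]
  ring

end IsExtMap

lemma exists_polynomial_approx_closedBall {G : ℂ → ℂ}
    (hc : ContinuousOn G (Metric.closedBall 0 1)) (hd : DifferentiableOn ℂ G (Metric.ball 0 1))
    {ε : ℝ} (hε : 0 < ε) :
    ∃ T : Polynomial ℂ, ∀ u ∈ Metric.closedBall (0 : ℂ) 1, ‖G u - T.eval u‖ ≤ ε := by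
  have huc := (isCompact_closedBall (0 : ℂ) 1).uniformContinuousOn_of_continuous hc
  obtain ⟨δ, hδ, hG⟩ := Metric.uniformContinuousOn_iff.1 huc (ε / 2) (half_pos hε)
  obtain ⟨r, hr0, hr1, hrδ⟩ : ∃ r : NNReal, 0 < r ∧ r < 1 ∧ 1 - (r : ℝ) < δ := by
    refine ⟨⟨max (1 / 2) (1 - δ / 2), le_max_of_le_left (by norm_num)⟩, ?_, ?_, ?_⟩
    · exact lt_max_of_lt_left (by norm_num : (0 : ℝ) < 1 / 2)
    · exact max_lt (by norm_num : (1 / 2 : ℝ) < 1) (by linarith : 1 - δ / 2 < 1)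
    · have := le_max_right (1 / 2) (1 - δ / 2)
      change 1 - max (1 / 2) (1 - δ / 2) < δ
      linarith
  obtain ⟨r', hr', hr'1⟩ := exists_between hr1
  obtain ⟨r'', hr'', hr''1⟩ := exists_between hr'1
  have hps := (hd.mono (Metric.closedBall_subset_ball (by exact_mod_cast hr''1))
    ).hasFPowerSeriesOnBall (R := r'') ((hr0.trans hr').trans hr'')
  have hun := Metric.tendstoUniformlyOn_iff.1
    (hps.tendstoUniformlyOn (r' := r') (by exact_mod_cast hr'')) (ε / 2) (half_pos hε)
  obtain ⟨n, hn⟩ := hun.exists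
  refine ⟨∑ k ∈ Finset.range n, Polynomial.C ((cauchyPowerSeries G 0 r'').coeff k *
    (r : ℂ) ^ k) * Polynomial.X ^ k, fun u hu => ?_⟩
  have hu' : ‖u‖ ≤ 1 := by simpa using hu
  have hru : ‖(r : ℂ) * u‖ ≤ r := by
    rw [norm_mul]
    have : ‖(r : ℂ)‖ = r := by simp
    rw [this]
    exact mul_le_of_le_one_right r.2 hu'
  have h1 := hn ((r : ℂ) * u) (by
    rw [Metric.mem_ball, dist_zero_right]
    exact hru.trans_lt (by exact_mod_cast hr'))
  have h2 := hG u hu ((r : ℂ) * u) (by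
    rw [Metric.mem_closedBall, dist_zero_right]
    exact hru.trans (by exact_mod_cast hr1.le)) (by
      rw [dist_eq_norm]
      have : u - (r : ℂ) * u = ((1 - (r : ℝ) : ℝ) : ℂ) * u := by push_cast; ring
      rw [this, norm_mul, Complex.norm_real, Real.norm_eq_abs, abs_of_nonneg (by
        have : (r : ℝ) < 1 := by exact_mod_cast hr1
        linarith)]
      have : (r : ℝ) < 1 := by exact_mod_cast hr1
      nlinarith)
  rw [zero_add, dist_eq_norm, FormalMultilinearSeries.partialSum] at h1
  rw [dist_eq_norm] at h2
  have h3 : (∑ k ∈ Finset.range n, Polynomial.C ((cauchyPowerSeries G 0 r'').coeff k *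
      (r : ℂ) ^ k) * Polynomial.X ^ k).eval u = ∑ k ∈ Finset.range n,
      (cauchyPowerSeries G 0 r'' k fun _ => (r : ℂ) * u) := by
    rw [Polynomial.eval_finsetSum]
    refine Finset.sum_congr rfl fun k _ => ?_
    rw [FormalMultilinearSeries.apply_eq_pow_smul_coeff]
    simp only [Polynomial.eval_mul, Polynomial.eval_C, Polynomial.eval_pow, Polynomial.eval_X,
      smul_eq_mul]
    ring
  rw [h3]
  calc _ ≤ ‖G u - G ((r : ℂ) * u)‖ + ‖G ((r : ℂ) * u) - ∑ k ∈ Finset.range n,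
      (cauchyPowerSeries G 0 r'' k fun _ => (r : ℂ) * u)‖ := norm_sub_le_norm_sub_add_norm_sub ..
    _ ≤ ε := by linarith

namespace IsExtMap

variable {ψ : ℂ → ℂ} {c : ℝ}

lemma contour_polynomial (hψ : IsExtMap ψ c) {L : (ℝ → ℂ) → ℂ} {p : ℝ}
    (hL : IsContour (bdry ψ) L p (p + 2 * Real.pi)) (k : ℤ) (T : Polynomial ℂ) :
    L (fun t => ekt k t * T.eval (ekt 1 t)⁻¹) =
      ∮ w in C(0, 2), w ^ k * T.eval w⁻¹ * deriv ψ w := by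
  have hinv : Continuous fun t => (ekt 1 t)⁻¹ :=
    (continuous_ekt 1).inv₀ fun t => Complex.exp_ne_zero _
  have hinv' : DifferentiableOn ℂ (fun w : ℂ => w⁻¹) {w : ℂ | 1 < ‖w‖} := fun w hw =>
    (differentiableAt_inv (ne_zero_of_one_le (le_of_lt
      (show 1 < ‖w‖ from hw)))).differentiableWithinAt
  have hc : ∀ T : Polynomial ℂ, ContinuousOn (fun t => ekt k t * T.eval (ekt 1 t)⁻¹)
      (Icc p (p + 2 * Real.pi)) := fun T =>
    ((continuous_ekt k).mul (T.continuous.comp hinv)).continuousOn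
  have hi : ∀ T : Polynomial ℂ, CircleIntegrable (fun w => w ^ k * T.eval w⁻¹ * deriv ψ w) 0 2 :=
    fun T => ((((diff_zpow k).mul (T.differentiable.comp_differentiableOn hinv')).mul
      hψ.diff_deriv).continuousOn.mono sphere_two_subset).circleIntegrable two_pos.le
  induction T using Polynomial.induction_on' with
  | add S T hS hT =>
    simp only [Polynomial.eval_add, mul_add, add_mul]
    rw [hL.add _ _ (hc S) (hc T), hS, hT, circleIntegral.integral_add (hi S) (hi T)]
  | monomial m a =>
    have h1 : ∀ t, ekt k t * (Polynomial.monomial m a).eval (ekt 1 t)⁻¹ =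
        a * ekt (k - m) t := fun t => by
      have h0 : ekt 1 t ≠ 0 := Complex.exp_ne_zero _
      rw [Polynomial.eval_monomial, ekt_eq_zpow, ekt_eq_zpow (k - m), zpow_sub₀ h0, zpow_natCast,
        inv_pow]
      ring
    rw [hL.congr (hc _) fun t _ => h1 t, hL.smul _ _ (continuous_ekt _).continuousOn,
      hψ.moment hL, ← circleIntegral.integral_const_mul]
    refine circleIntegral.integral_congr two_pos.le fun w hw => ?_
    have h0 : w ≠ 0 := ne_zero_of_one_le (le_of_lt (sphere_two_subset hw : 1 < ‖w‖))
    simp only [Polynomial.eval_monomial, zpow_sub₀ h0, zpow_natCast, inv_pow]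
    ring

lemma contour_eq_circleIntegral (hψ : IsExtMap ψ c) {L : (ℝ → ℂ) → ℂ} {p : ℝ}
    (hL : IsContour (bdry ψ) L p (p + 2 * Real.pi)) (k : ℤ) {H : ℂ → ℂ}
    (hH : ContinuousOn H {w : ℂ | 1 ≤ ‖w‖}) (hd : DifferentiableOn ℂ H {w : ℂ | 1 < ‖w‖})
    (hlim : Tendsto H (Bornology.cobounded ℂ) (𝓝 0)) :
    L (fun t => ekt k t * H (ekt 1 t)) = ∮ w in C(0, 2), w ^ k * H w * deriv ψ w := by
  have hpi := Real.pi_pos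
  set G : ℂ → ℂ := Function.update (fun u => H u⁻¹) 0 0 with hG
  have hG0 : G 0 = 0 := Function.update_self ..
  have hGne : ∀ u, u ≠ 0 → G u = H u⁻¹ := fun u hu => Function.update_of_ne hu ..
  have hG0c : ContinuousAt G 0 := by
    rw [continuousAt_iff_punctured_nhds, hG0]
    refine (hlim.comp tendsto_inv₀_nhdsNE_zero).congr' ?_
    filter_upwards [self_mem_nhdsWithin] with u hu
    exact (hGne u hu).symm
  have hGd : ∀ u, u ≠ 0 → ‖u‖ < 1 → DifferentiableAt ℂ G u := fun u hu hu1 => by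
    have h1 : 1 < ‖u⁻¹‖ := by
      rw [norm_inv]
      exact (one_lt_inv₀ (norm_pos_iff.2 hu)).2 hu1
    have hdd : DifferentiableAt ℂ (fun u => H u⁻¹) u :=
      (hd.differentiableAt (isOpen_one_lt_norm.mem_nhds h1)).comp u (differentiableAt_inv hu)
    refine hdd.congr_of_eventuallyEq ?_
    filter_upwards [isOpen_ne.mem_nhds hu] with v hv
    exact hGne v hv
  have hGd0 : DifferentiableAt ℂ G 0 := by
    refine (Complex.analyticAt_of_differentiable_on_punctured_nhds_of_continuousAt ?_
      hG0c).differentiableAt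
    filter_upwards [self_mem_nhdsWithin, nhdsWithin_le_nhds (Metric.ball_mem_nhds 0 one_pos)]
      with u hu1 hu2
    exact hGd u hu1 (by simpa using hu2)
  have hGdd : DifferentiableOn ℂ G (Metric.ball 0 1) := fun u hu => by
    rcases eq_or_ne u 0 with rfl | h0
    · exact hGd0.differentiableWithinAt
    · exact (hGd u h0 (by simpa using hu)).differentiableWithinAt
  have hGc : ContinuousOn G (Metric.closedBall 0 1) := fun u hu => by
    rcases eq_or_ne u 0 with rfl | h0
    · exact hG0c.continuousWithinAt
    have h1 : ContinuousOn (fun u => H u⁻¹) (Metric.closedBall 0 1 \ {0}) := by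
      refine hH.comp (continuousOn_id.inv₀ fun v hv => hv.2) fun v hv => ?_
      have h2 : ‖v‖ ≤ 1 := by simpa using hv.1
      change 1 ≤ ‖v⁻¹‖
      rw [norm_inv]
      exact (one_le_inv₀ (norm_pos_iff.2 hv.2)).2 h2
    have h2 : ContinuousWithinAt G (Metric.closedBall 0 1 \ {0}) u :=
      (h1 u ⟨hu, h0⟩).congr (fun v hv => hGne v hv.2) (hGne u h0)
    exact h2.mono_of_mem_nhdsWithin (inter_mem self_mem_nhdsWithin
      (nhdsWithin_le_nhds (isOpen_ne.mem_nhds h0)))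
  obtain ⟨K, hK, hb⟩ := hL.bound
  obtain ⟨C, hC⟩ := (isCompact_sphere (0 : ℂ) 2).exists_bound_of_continuousOn
    (((diff_zpow k).mul hψ.diff_deriv).continuousOn.mono sphere_two_subset)
  have hC0 : 0 ≤ C := (norm_nonneg _).trans (hC 2 (by simp))
  have hinv : Continuous fun t => (ekt 1 t)⁻¹ :=
    (continuous_ekt 1).inv₀ fun t => Complex.exp_ne_zero _
  have hinv' : DifferentiableOn ℂ (fun w : ℂ => w⁻¹) {w : ℂ | 1 < ‖w‖} := fun w hw =>
    (differentiableAt_inv (ne_zero_of_one_le (le_of_lt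
      (show 1 < ‖w‖ from hw)))).differentiableWithinAt
  have hHc : Continuous fun t => ekt k t * H (ekt 1 t) := (continuous_ekt k).mul
    (hH.comp_continuous (continuous_ekt 1) fun t => (norm_ekt 1 t).ge)
  have key : ∀ ε > 0, ‖L (fun t => ekt k t * H (ekt 1 t)) -
      ∮ w in C(0, 2), w ^ k * H w * deriv ψ w‖ ≤ (K + 2 * Real.pi * 2 * C) * ε := fun ε hε => by
    obtain ⟨T, hT⟩ := exists_polynomial_approx_closedBall hGc hGdd hε
    have hT' : ∀ w : ℂ, 1 ≤ ‖w‖ → ‖H w - T.eval w⁻¹‖ ≤ ε := fun w hw => by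
      have h0 := ne_zero_of_one_le hw
      have := hT w⁻¹ (by
        rw [Metric.mem_closedBall, dist_zero_right, norm_inv]
        exact inv_le_one_of_one_le₀ hw)
      rwa [hGne _ (inv_ne_zero h0), inv_inv] at this
    have hTc : Continuous fun t => ekt k t * T.eval (ekt 1 t)⁻¹ :=
      (continuous_ekt k).mul (T.continuous.comp hinv)
    have e1 : ‖L (fun t => ekt k t * H (ekt 1 t)) - L (fun t => ekt k t * T.eval (ekt 1 t)⁻¹)‖ ≤
        K * ε := by
      rw [← hL.sub hHc.continuousOn hTc.continuousOn]
      refine hb _ _ (hHc.sub hTc).continuousOn fun t _ => ?_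
      rw [← mul_sub, norm_mul, norm_ekt, one_mul]
      exact hT' _ (norm_ekt 1 t).ge
    have e2 : ‖(∮ w in C(0, 2), w ^ k * T.eval w⁻¹ * deriv ψ w) -
        ∮ w in C(0, 2), w ^ k * H w * deriv ψ w‖ ≤ 2 * Real.pi * 2 * (C * ε) := by
      rw [← circleIntegral.integral_sub]
      · refine circleIntegral.norm_integral_le_of_norm_le_const two_pos.le fun w hw => ?_
        have h1 := hC w hw
        have h2 := hT' w (le_of_lt (sphere_two_subset hw : 1 < ‖w‖))
        have h3 : w ^ k * T.eval w⁻¹ * deriv ψ w - w ^ k * H w * deriv ψ w =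
            -(w ^ k * deriv ψ w * (H w - T.eval w⁻¹)) := by ring
        rw [h3, norm_neg, norm_mul]
        exact mul_le_mul h1 h2 (norm_nonneg _) hC0
      · exact ((((diff_zpow k).mul (T.differentiable.comp_differentiableOn hinv')).mul
          hψ.diff_deriv).continuousOn.mono sphere_two_subset).circleIntegrable two_pos.le
      · exact ((((diff_zpow k).mul hd).mul
          hψ.diff_deriv).continuousOn.mono sphere_two_subset).circleIntegrable two_pos.le
    rw [← hψ.contour_polynomial hL] at e2
    refine (norm_sub_le_norm_sub_add_norm_sub _ (L fun t => ekt k t * T.eval (ekt 1 t)⁻¹) _).trans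
      ?_
    linarith
  set D := K + 2 * Real.pi * 2 * C with hD
  have hD0 : 0 ≤ D := by positivity
  rw [← sub_eq_zero, ← norm_le_zero_iff]
  refine le_of_forall_pos_le_add fun ε hε => ?_
  refine (key (ε / (D + 1)) (by positivity)).trans ?_
  rw [zero_add, ← mul_div_assoc, div_le_iff₀ (by positivity)]
  nlinarith

/-- The complement of the closure of the image of `ψ`. -/
def Inside (ψ : ℂ → ℂ) : Set ℂ := {z | ∀ w : ℂ, 1 ≤ ‖w‖ → ψ w ≠ z}

lemma tendsto_cobounded (hψ : IsExtMap ψ c) :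
    Tendsto ψ (Bornology.cobounded ℂ) (Bornology.cobounded ℂ) := by
  have hc : 0 < ‖(c : ℂ)‖ := norm_pos_iff.2 (Complex.ofReal_ne_zero.2 hψ.cpos.ne')
  rw [← tendsto_norm_atTop_iff_cobounded]
  refine (hψ.tendsto.norm.pos_mul_atTop hc tendsto_norm_cobounded_atTop).congr' ?_
  filter_upwards [eventually_one_lt_norm] with w hw
  rw [norm_div, div_mul_cancel₀]
  exact norm_ne_zero_iff.2 (ne_zero_of_one_le hw.le)

lemma tendsto_inv_sub (hψ : IsExtMap ψ c) (z : ℂ) :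
    Tendsto (fun w => (ψ w - z)⁻¹) (Bornology.cobounded ℂ) (𝓝 0) :=
  tendsto_inv₀_cobounded.comp ((tendsto_sub_const_cobounded z).comp hψ.tendsto_cobounded)

lemma tendsto_log_deriv (hψ : IsExtMap ψ c) (z : ℂ) :
    Tendsto (fun w => w * (ψ w - z)⁻¹ * deriv ψ w) (Bornology.cobounded ℂ) (𝓝 1) := by
  have hc : (c : ℂ) ≠ 0 := Complex.ofReal_ne_zero.2 hψ.cpos.ne'
  have h1 : Tendsto (fun w => ψ w / w - z * w⁻¹) (Bornology.cobounded ℂ) (𝓝 c) := by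
    simpa using hψ.tendsto.sub (tendsto_inv₀_cobounded.const_mul z)
  have h2 := (h1.inv₀ hc).mul hψ.tendsto_deriv
  rw [inv_mul_cancel₀ hc] at h2
  refine h2.congr' ?_
  filter_upwards [eventually_one_lt_norm] with w hw
  have h0 := ne_zero_of_one_le hw.le
  rw [← div_eq_mul_inv, ← sub_div, inv_div, div_eq_mul_inv]

lemma diff_inv_sub (hψ : IsExtMap ψ c) {z : ℂ} (hz : z ∈ Inside ψ) :
    DifferentiableOn ℂ (fun w => (ψ w - z)⁻¹) {w : ℂ | 1 < ‖w‖} :=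
  (hψ.diff.sub_const z).inv fun w hw => sub_ne_zero.2 (hz w (le_of_lt (show 1 < ‖w‖ from hw)))

lemma contour_inside (hψ : IsExtMap ψ c) {L : (ℝ → ℂ) → ℂ} {p : ℝ}
    (hL : IsContour (bdry ψ) L p (p + 2 * Real.pi)) {z : ℂ} (hz : z ∈ Inside ψ) (k : ℤ) :
    L (fun t => ekt k t * (bdry ψ t - z)⁻¹) =
      ∮ w in C(0, 2), w ^ k * (ψ w - z)⁻¹ * deriv ψ w :=
  hψ.contour_eq_circleIntegral hL k (H := fun w => (ψ w - z)⁻¹)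
    ((hψ.cont.sub continuousOn_const).inv₀ fun w hw => sub_ne_zero.2 (hz w hw))
    (hψ.diff_inv_sub hz) (hψ.tendsto_inv_sub z)

lemma contour_inside_zero (hψ : IsExtMap ψ c) {L : (ℝ → ℂ) → ℂ} {p : ℝ}
    (hL : IsContour (bdry ψ) L p (p + 2 * Real.pi)) {z : ℂ} (hz : z ∈ Inside ψ) :
    L (fun t => (bdry ψ t - z)⁻¹) = 2 * Real.pi * Complex.I := by
  have h := hψ.contour_inside hL hz 0
  have h0 : ∀ t, ekt 0 t = 1 := fun t => by simp [ekt]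
  simp only [h0, one_mul, zpow_zero] at h
  rw [h, circleIntegral_eq_of_tendsto (f := fun w => (ψ w - z)⁻¹ * deriv ψ w)
    ((hψ.diff_inv_sub hz).mul hψ.diff_deriv)
    ((hψ.tendsto_log_deriv z).congr fun w => by ring), mul_one]

lemma contour_inside_neg (hψ : IsExtMap ψ c) {L : (ℝ → ℂ) → ℂ} {p : ℝ}
    (hL : IsContour (bdry ψ) L p (p + 2 * Real.pi)) {z : ℂ} (hz : z ∈ Inside ψ) {k : ℤ}
    (hk : k < 0) : L (fun t => ekt k t * (bdry ψ t - z)⁻¹) = 0 := by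
  have h := (tendsto_zpow_neg hk).mul (hψ.tendsto_log_deriv z)
  rw [hψ.contour_inside hL hz, circleIntegral_eq_of_tendsto (ℓ := 0)
    (f := fun w => w ^ k * (ψ w - z)⁻¹ * deriv ψ w)
    (((diff_zpow k).mul (hψ.diff_inv_sub hz)).mul hψ.diff_deriv), mul_zero]
  rw [zero_mul] at h
  exact h.congr fun w => by ring

lemma circleIntegral_polynomial_comp (hψ : IsExtMap ψ c) (Q : Polynomial ℂ) :
    ∮ w in C(0, 2), Q.eval (ψ w) * deriv ψ w = 0 := by
  have hi : ∀ Q : Polynomial ℂ, CircleIntegrable (fun w => Q.eval (ψ w) * deriv ψ w) 0 2 :=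
    fun Q => (((Q.differentiable.comp_differentiableOn hψ.diff).mul
      hψ.diff_deriv).continuousOn.mono sphere_two_subset).circleIntegrable two_pos.le
  induction Q using Polynomial.induction_on' with
  | add S T hS hT =>
    simp only [Polynomial.eval_add, add_mul]
    rw [circleIntegral.integral_add (hi S) (hi T), hS, hT, add_zero]
  | monomial m a =>
    refine circleIntegral.integral_eq_zero_of_hasDerivWithinAt
      (f := fun w => a / (m + 1 : ℕ) * ψ w ^ (m + 1)) two_pos.le fun w hw => ?_
    refine (((hψ.hasDerivAt (sphere_two_subset hw)).pow (m + 1)).const_mul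
      (a / (m + 1 : ℕ))).hasDerivWithinAt.congr_deriv ?_
    have : ((m + 1 : ℕ) : ℂ) ≠ 0 := Nat.cast_ne_zero.2 m.succ_ne_zero
    rw [Polynomial.eval_monomial, Nat.add_sub_cancel]
    field_simp

lemma contour_inside_faber (hψ : IsExtMap ψ c) {L : (ℝ → ℂ) → ℂ} {p : ℝ}
    (hL : IsContour (bdry ψ) L p (p + 2 * Real.pi)) {z : ℂ} (hz : z ∈ Inside ψ) {n : ℕ}
    {F : Polynomial ℂ}
    (hF : Tendsto (fun w => w ^ n - F.eval (ψ w)) (Bornology.cobounded ℂ) (𝓝 0)) :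
    L (fun t => ekt n t * (bdry ψ t - z)⁻¹) = 2 * Real.pi * Complex.I * F.eval z := by
  rw [hψ.contour_inside hL hz]
  have hdF : DifferentiableOn ℂ (fun w => F.eval (ψ w)) {w : ℂ | 1 < ‖w‖} :=
    F.differentiable.comp_differentiableOn hψ.diff
  have hdH := hψ.diff_inv_sub hz
  have hde : DifferentiableOn ℂ (fun w : ℂ => w ^ n - F.eval (ψ w)) {w : ℂ | 1 < ‖w‖} :=
    (differentiable_pow n).differentiableOn.sub hdF
  have hci : ∀ {f : ℂ → ℂ}, DifferentiableOn ℂ f {w : ℂ | 1 < ‖w‖} → CircleIntegrable f 0 2 :=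
    fun hf => (hf.continuousOn.mono sphere_two_subset).circleIntegrable two_pos.le
  have h1 : ∮ w in C(0, 2), (w ^ n - F.eval (ψ w)) * (ψ w - z)⁻¹ * deriv ψ w = 0 := by
    have h := hF.mul (hψ.tendsto_log_deriv z)
    rw [zero_mul] at h
    rw [circleIntegral_eq_of_tendsto (ℓ := 0)
      (f := fun w => (w ^ n - F.eval (ψ w)) * (ψ w - z)⁻¹ * deriv ψ w)
      ((hde.mul hdH).mul hψ.diff_deriv) (h.congr fun w => by ring), mul_zero]
  obtain ⟨Q, hQ⟩ : ∃ Q : Polynomial ℂ, F = Polynomial.C (F.eval z) +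
      (Polynomial.X - Polynomial.C z) * Q := by
    obtain ⟨Q, hQ⟩ := Polynomial.X_sub_C_dvd_sub_C_eval (p := F) (a := z)
    exact ⟨Q, by rw [← hQ]; ring⟩
  have hdQ : DifferentiableOn ℂ (fun w => Q.eval (ψ w)) {w : ℂ | 1 < ‖w‖} :=
    Q.differentiable.comp_differentiableOn hψ.diff
  have h2 : ∮ w in C(0, 2), (ψ w - z)⁻¹ * deriv ψ w = 2 * Real.pi * Complex.I := by
    rw [circleIntegral_eq_of_tendsto (f := fun w => (ψ w - z)⁻¹ * deriv ψ w)
      (hdH.mul hψ.diff_deriv) ((hψ.tendsto_log_deriv z).congr fun w => by ring), mul_one]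
  have h3 : ∮ w in C(0, 2), w ^ (n : ℤ) * (ψ w - z)⁻¹ * deriv ψ w =
      ∮ w in C(0, 2), ((w ^ n - F.eval (ψ w)) * (ψ w - z)⁻¹ * deriv ψ w +
        (F.eval z * ((ψ w - z)⁻¹ * deriv ψ w) + Q.eval (ψ w) * deriv ψ w)) := by
    refine circleIntegral.integral_congr two_pos.le fun w hw => ?_
    have h0 : ψ w - z ≠ 0 := sub_ne_zero.2 (hz w (le_of_lt (sphere_two_subset hw : 1 < ‖w‖)))
    have h4 : F.eval (ψ w) = F.eval z + (ψ w - z) * Q.eval (ψ w) := by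
      conv_lhs => rw [hQ]
      simp
    simp only [zpow_natCast]
    rw [h4]
    field_simp
    ring
  have i1 : CircleIntegrable (fun w => (w ^ n - F.eval (ψ w)) * (ψ w - z)⁻¹ * deriv ψ w) 0 2 :=
    hci ((hde.mul hdH).mul hψ.diff_deriv)
  have i2 : CircleIntegrable (fun w => F.eval z * ((ψ w - z)⁻¹ * deriv ψ w)) 0 2 :=
    hci ((hdH.mul hψ.diff_deriv).const_mul _)
  have i3 : CircleIntegrable (fun w => Q.eval (ψ w) * deriv ψ w) 0 2 :=
    hci (hdQ.mul hψ.diff_deriv)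
  have i4 : CircleIntegrable (fun w => F.eval z * ((ψ w - z)⁻¹ * deriv ψ w) +
      Q.eval (ψ w) * deriv ψ w) 0 2 := i2.add i3
  rw [h3, circleIntegral.integral_add i1 i4, h1, circleIntegral.integral_add i2 i3,
    circleIntegral.integral_const_mul, h2, hψ.circleIntegral_polynomial_comp]
  ring

end IsExtMap

lemma IsContour.eventually_cauchy {E : ℝ → ℂ} {L : (ℝ → ℂ) → ℂ} {p q : ℝ}
    (hL : IsContour E L p q) (hE : Continuous E) {z₀ : ℂ} (hz₀ : ∀ t ∈ Icc p q, E t ≠ z₀)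
    {ε : ℝ} (hε : 0 < ε) :
    ∀ᶠ z in 𝓝 z₀, (∀ t ∈ Icc p q, E t ≠ z) ∧ ∀ g, ContinuousOn g (Icc p q) →
      (∀ t ∈ Icc p q, ‖g t‖ ≤ 1) →
      ‖L (fun t => g t * (E t - z)⁻¹) - L (fun t => g t * (E t - z₀)⁻¹)‖ ≤ ε := by
  obtain ⟨K, hK, hb⟩ := hL.bound
  have hclosed : IsClosed (E '' Icc p q) := (isCompact_Icc.image hE).isClosed
  obtain ⟨d, hd, hball⟩ := Metric.isOpen_iff.1 hclosed.isOpen_compl z₀ (by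
    rintro ⟨t, ht, h⟩
    exact hz₀ t ht h)
  have hdist : ∀ t ∈ Icc p q, d ≤ ‖E t - z₀‖ := fun t ht => by
    by_contra! hc
    exact hball (by rwa [Metric.mem_ball, dist_eq_norm]) ⟨t, ht, rfl⟩
  have hev : ∀ᶠ z in 𝓝 z₀, ‖z - z₀‖ < min (d / 2) (ε * d ^ 2 / (2 * (K + 1))) := by
    have : Tendsto (fun z => ‖z - z₀‖) (𝓝 z₀) (𝓝 0) := tendsto_norm_sub_self z₀
    exact this.eventually_lt_const (by positivity)
  filter_upwards [hev] with z hz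
  obtain ⟨hz1, hz2⟩ := lt_min_iff.1 hz
  have hdist' : ∀ t ∈ Icc p q, d / 2 ≤ ‖E t - z‖ := fun t ht => by
    have h1 := hdist t ht
    have h2 := norm_sub_le_norm_sub_add_norm_sub (E t) z z₀
    linarith
  have hne : ∀ t ∈ Icc p q, E t ≠ z := fun t ht h => by
    have := hdist' t ht
    rw [h, sub_self, norm_zero] at this
    linarith
  refine ⟨hne, fun g hg hg1 => ?_⟩
  have c1 : ContinuousOn (fun t => g t * (E t - z)⁻¹) (Icc p q) :=
    hg.mul ((hE.continuousOn.sub continuousOn_const).inv₀ fun t ht => sub_ne_zero.2 (hne t ht))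
  have c2 : ContinuousOn (fun t => g t * (E t - z₀)⁻¹) (Icc p q) :=
    hg.mul ((hE.continuousOn.sub continuousOn_const).inv₀ fun t ht => sub_ne_zero.2 (hz₀ t ht))
  rw [← hL.sub c1 c2]
  refine (hb _ (ε / (K + 1)) (c1.sub c2) fun t ht => ?_).trans ?_
  · have h1 := hdist t ht
    have h2 := hdist' t ht
    change ‖g t * (E t - z)⁻¹ - g t * (E t - z₀)⁻¹‖ ≤ ε / (K + 1)
    rw [← mul_sub, norm_mul, inv_sub_inv (sub_ne_zero.2 (hne t ht)) (sub_ne_zero.2 (hz₀ t ht)),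
      sub_sub_sub_cancel_left, norm_div, norm_mul]
    have h3 : ‖z - z₀‖ / (‖E t - z‖ * ‖E t - z₀‖) ≤ ε / (K + 1) := by
      rw [div_le_div_iff₀ (by nlinarith) (by positivity)]
      rw [lt_div_iff₀ (by positivity)] at hz2
      have h4 : d / 2 * d ≤ ‖E t - z‖ * ‖E t - z₀‖ := mul_le_mul h2 h1 hd.le (by linarith)
      nlinarith [mul_le_mul_of_nonneg_left h4 hε.le]
    have := mul_le_mul (hg1 t ht) h3 (by positivity) zero_le_one
    rwa [one_mul] at this
  · rw [mul_div_assoc', div_le_iff₀ (by positivity)]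
    nlinarith

lemma Piece.im_contour {E : ℝ → ℂ} {p q : ℝ} (P : Piece E p q) {z : ℂ}
    (hz : ∀ t ∈ Icc p q, E t ≠ z) :
    (P.contour fun t => (E t - z)⁻¹).im = ∫ s in P.a..P.b, P.kernel z s := by
  have hc : ContinuousOn (fun s => (E (P.τ s) - z)⁻¹ * P.vel s) (Icc P.a P.b) :=
    ((P.cont_curve.sub continuousOn_const).inv₀ fun s hs =>
      sub_ne_zero.2 (hz _ (P.mapsTo hs))).mul P.cont_vel
  have h := intervalIntegral.intervalIntegral_im (hc.intervalIntegrable_of_Icc (μ := volume)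
    P.lt.le)
  rw [contour]
  refine h.symm.trans (intervalIntegral.integral_congr fun s _ => ?_)
  simp [kernel, div_eq_inv_mul]

/-- The standing data: a Dini-smooth loop with its exterior conformal map. -/
structure IsDiniExterior (Γ : Set ℂ) (ψ : ℂ → ℂ) (c : ℝ) : Prop where
  map : IsExtMap ψ c
  loop : IsDiniLoop (bdry ψ)
  range_eq : range (bdry ψ) = Γ
  compact : IsCompact Γ
  ext : ∀ w : ℂ, 1 < ‖w‖ → ψ w ∈ exteriorDomain Γ

lemma exists_ekt_eq {w : ℂ} (hw : ‖w‖ = 1) : ∃ t, ekt 1 t = w :=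
  ⟨w.arg, by
    have := Complex.norm_mul_exp_arg_mul_I w
    rw [hw, Complex.ofReal_one, one_mul] at this
    simpa [ekt] using this⟩

lemma IsPiecewiseDiniSmoothJordanCurve.isDiniExterior {Γ : Set ℂ} {φ ψ : ℂ → ℂ} {c : ℝ}
    (hΓ : IsPiecewiseDiniSmoothJordanCurve Γ) (hφ : IsExteriorMap Γ φ c)
    (hψ : IsExteriorParam Γ φ ψ) : IsDiniExterior Γ ψ c := by
  have hmap := hψ.isExtMap hΓ.1.isCompact hφ
  have hrange : range (bdry ψ) = Γ := by
    ext z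
    constructor
    · rintro ⟨t, rfl⟩
      exact hψ.boundary _ (norm_ekt 1 t)
    · intro hz
      obtain ⟨w, hw, rfl⟩ := hψ.boundary_surj z hz
      obtain ⟨t, rfl⟩ := exists_ekt_eq hw
      exact ⟨t, rfl⟩
  refine ⟨hmap, ⟨⟨hmap.continuous_bdry, IsExtMap.periodic_bdry ψ, fun s t hst => ?_⟩, ?_⟩, hrange,
    hΓ.1.isCompact, fun w hw => (hψ.inv w hw).1⟩
  · have h1 := hψ.inj (norm_ekt 1 s).ge (norm_ekt 1 t).ge hst
    obtain ⟨n, hn⟩ := Complex.exp_eq_exp_iff_exists_int.1 h1.symm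
    refine ⟨n, ?_⟩
    have h2 := congrArg Complex.im hn
    simp at h2
    linarith
  · obtain ⟨-, N, γ, γ', a, b, h1, h2⟩ := hΓ
    exact ⟨N, γ, γ', a, b, h1, hrange.trans h2⟩

namespace IsDiniExterior

variable {Γ : Set ℂ} {ψ : ℂ → ℂ} {c : ℝ}

lemma mem_cases (h : IsDiniExterior Γ ψ c) (z : ℂ) :
    z ∈ Γ ∨ z ∈ exteriorDomain Γ ∨ z ∈ IsExtMap.Inside ψ := by
  by_contra! hc
  obtain ⟨h1, h2, h3⟩ := hc
  refine h3 fun w hw hwz => ?_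
  rcases hw.eq_or_lt with hw | hw
  · obtain ⟨t, rfl⟩ := exists_ekt_eq hw.symm
    exact h1 (h.range_eq ▸ ⟨t, hwz⟩)
  · exact h2 (hwz ▸ h.ext w hw)

lemma ne_of_notMem (h : IsDiniExterior Γ ψ c) {z : ℂ} (hz : z ∉ Γ) (t : ℝ) : bdry ψ t ≠ z :=
  fun he => hz (h.range_eq ▸ ⟨t, he⟩)

lemma contour_outside (h : IsDiniExterior Γ ψ c) {L : (ℝ → ℂ) → ℂ} {p : ℝ}
    (hL : IsContour (bdry ψ) L p (p + 2 * Real.pi)) {z : ℂ} (hz : z ∈ exteriorDomain Γ) :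
    L (fun t => (bdry ψ t - z)⁻¹) = 0 := by
  have hpi := Real.pi_gt_three
  set f : ℂ → ℂ := fun z => L fun t => (bdry ψ t - z)⁻¹ with hf
  have hE := h.map.continuous_bdry
  have hint : ∀ z ∈ Γᶜ, ∃ n : ℤ, f z = n * (2 * Real.pi * Complex.I) := fun z hz => by
    have h1 := hL.exp z fun t _ => h.ne_of_notMem hz t
    rw [IsExtMap.periodic_bdry, div_self (sub_ne_zero.2 (h.ne_of_notMem hz p))] at h1
    exact Complex.exp_eq_one_iff.1 h1
  have hnorm : ∀ n : ℤ, ‖(n : ℂ) * (2 * Real.pi * Complex.I)‖ < 6 → n = 0 := fun n hn => by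
    rw [norm_mul, norm_mul, Complex.norm_I, mul_one, norm_mul, Complex.norm_real,
      Complex.norm_intCast, Complex.norm_ofNat, Real.norm_of_nonneg Real.pi_pos.le] at hn
    by_contra h0
    have : (1 : ℝ) ≤ |(n : ℝ)| := by exact_mod_cast Int.one_le_abs h0
    nlinarith
  have hcomp : ∀ x ∈ connectedComponentIn Γᶜ z, ∀ y ∈ connectedComponentIn Γᶜ z, f x = f y := by
    intro x hx y hy
    refine isPreconnected_connectedComponentIn.induction₂ (fun x y => f x = f y) ?_
      (fun _ _ _ _ _ _ => Eq.trans) (fun _ _ _ _ => Eq.symm) hx hy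
    intro x hx
    have hxΓ := connectedComponentIn_subset _ _ hx
    have hev := hL.eventually_cauchy hE (fun t _ => h.ne_of_notMem hxΓ t) one_pos
    filter_upwards [nhdsWithin_le_nhds hev, self_mem_nhdsWithin] with y hy1 hy2
    have h1 := hy1.2 (fun _ => 1) continuousOn_const fun t _ => by simp
    simp only [one_mul] at h1
    obtain ⟨m, hm⟩ := hint x hxΓ
    obtain ⟨n, hn⟩ := hint y (connectedComponentIn_subset _ _ hy2)
    change ‖f y - f x‖ ≤ 1 at h1
    rw [hm, hn]
    rw [hm, hn, ← sub_mul, ← Int.cast_sub] at h1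
    rw [sub_eq_zero.1 (hnorm _ (h1.trans_lt (by norm_num)))]
  obtain ⟨K, hK, hb⟩ := hL.bound
  obtain ⟨B, hB⟩ := h.compact.isBounded.subset_closedBall 0
  obtain ⟨y, hy, hyB⟩ : ∃ y ∈ connectedComponentIn Γᶜ z, B + (K + 1) < ‖y‖ := by
    by_contra! hc
    exact hz.2 ((Metric.isBounded_closedBall (x := (0 : ℂ)) (r := B + (K + 1))).subset
      fun y hy => by simpa using hc y hy)
  have hyΓ := connectedComponentIn_subset _ _ hy
  have h1 : ‖f y‖ ≤ K * (1 / (K + 1)) := by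
    refine hb _ _ ((hE.sub continuous_const).continuousOn.inv₀ fun t _ =>
      sub_ne_zero.2 (h.ne_of_notMem hyΓ t)) fun t _ => ?_
    have h2 : ‖bdry ψ t‖ ≤ B := by
      have := hB (h.range_eq ▸ mem_range_self t : bdry ψ t ∈ Γ)
      simpa using this
    have h3 : K + 1 ≤ ‖bdry ψ t - y‖ := by
      have := norm_sub_norm_le y (bdry ψ t)
      rw [norm_sub_rev] at this
      linarith
    rw [norm_inv, ← one_div]
    gcongr
  have h2 : K * (1 / (K + 1)) < 6 := by
    rw [mul_one_div, div_lt_iff₀ (by positivity)]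
    linarith
  obtain ⟨n, hn⟩ := hint y hyΓ
  have h3 := hnorm n (hn ▸ h1.trans_lt h2)
  change f z = 0
  rw [hcomp z (mem_connectedComponentIn hz.1) y hy, hn, h3, Int.cast_zero, zero_mul]

lemma subset_closure_inside (h : IsDiniExterior Γ ψ c) : Γ ⊆ closure (IsExtMap.Inside ψ) := by
  have hpi := Real.pi_pos
  have hE := h.map.continuous_bdry
  intro z₀ hz₀
  rw [← h.range_eq] at hz₀
  obtain ⟨x, rfl⟩ := hz₀
  rw [Metric.mem_closure_iff]
  intro r hr
  by_contra! hr'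
  obtain ⟨y, -, ⟨P⟩⟩ := h.loop.exists_piece_right x
  obtain ⟨κ, δ, hδ, hs⟩ := P.exists_straight (η := 1 / 2) (by norm_num) le_rfl
    (show 0 < Real.pi / 32 by positivity)
  have hnear : ∀ᶠ s in 𝓝[Icc P.a P.b] P.a, P.τ s < x + 2 * Real.pi ∧
      bdry ψ (P.τ s) ∈ Metric.ball (bdry ψ x) r := by
    have h1 := (P.cont P.a P.left_mem).tendsto
    rw [P.τ_a] at h1
    exact (h1.eventually_lt_const (by linarith)).and
      ((hE.tendsto x).comp h1 (Metric.ball_mem_nhds _ hr))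
  obtain ⟨δ', hδ', hnear'⟩ := Metric.mem_nhdsWithin_iff.1 hnear
  set b := min P.b (P.a + min δ (δ' / 2)) with hb
  have hab : P.a < b := lt_min P.lt (by linarith [lt_min hδ (half_pos hδ')])
  have hbP : b ≤ P.b := min_le_left _ _
  have hbδ : b - P.a ≤ min δ (δ' / 2) := by
    have := min_le_right P.b (P.a + min δ (δ' / 2))
    rw [← hb] at this
    linarith
  have hst := hs P.a b le_rfl hab hbP (hbδ.trans (min_le_left _ _))
  set Q := P.sub P.a b le_rfl hab hbP with hQ
  have hQn : ∀ s ∈ Icc P.a b, P.τ s < x + 2 * Real.pi ∧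
      bdry ψ (P.τ s) ∈ Metric.ball (bdry ψ x) r := fun s hs => by
    refine hnear' ⟨?_, hs.1, hs.2.trans hbP⟩
    rw [Metric.mem_ball, Real.dist_eq, abs_of_nonneg (by linarith [hs.1])]
    linarith [hs.2, hbδ.trans (min_le_right _ _)]
  set s₀ := (P.a + b) / 2 with hs₀
  have hs1 : P.a < s₀ := by linarith
  have hs2 : s₀ < b := by linarith
  have h0 : s₀ ∈ Icc Q.a Q.b := ⟨hs1.le, hs2.le⟩
  have hτ1 : P.τ P.a < P.τ s₀ := P.mono P.left_mem ⟨hs1.le, hs2.le.trans hbP⟩ hs1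
  have hτ2 : P.τ s₀ < P.τ b := P.mono ⟨hs1.le, hs2.le.trans hbP⟩ ⟨hab.le, hbP⟩ hs2
  have hτb : P.τ b < P.τ P.a + 2 * Real.pi := by
    rw [P.τ_a]
    exact (hQn b ⟨hab.le, le_rfl⟩).1
  obtain ⟨L, hL⟩ := h.loop.exists_contour hτb
  have htot := (Q.contour_isContour hE).concat Q.param_lt hτb hE hL
  set ζ := bdry ψ (P.τ s₀) with hζ
  have hfar : ∀ t ∈ Icc (P.τ b) (P.τ P.a + 2 * Real.pi), bdry ψ t ≠ ζ := fun t ht he => by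
    obtain ⟨n, hn⟩ := h.loop.1.inj _ _ he.symm
    have h1 : (0 : ℝ) < n := by
      by_contra! hc
      nlinarith [ht.1]
    have h2 : (n : ℝ) < 1 := by
      by_contra! hc
      nlinarith [ht.2]
    have h1' : (0 : ℤ) < n := by exact_mod_cast h1
    have h2' : n < 1 := by exact_mod_cast h2
    omega
  have hcau := hL.eventually_cauchy hE hfar (show 0 < Real.pi / 64 by positivity)
  have hball : ∀ᶠ z in 𝓝 ζ, z ∈ Metric.ball (bdry ψ x) r :=
    Metric.isOpen_ball.mem_nhds (hQn s₀ ⟨hs1.le, hs2.le⟩).2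
  have hlim : ∀ σ : ℝ, Tendsto (fun h : ℝ => ζ - σ * h * Complex.I * Q.vel s₀) (𝓝[>] 0) (𝓝 ζ) := by
    intro σ
    have : Continuous fun h : ℝ => ζ - σ * h * Complex.I * Q.vel s₀ := by fun_prop
    have := this.tendsto 0
    simp only [Complex.ofReal_zero, mul_zero, zero_mul, sub_zero] at this
    exact this.mono_left nhdsWithin_le_nhds
  have hsmall : ∀ᶠ h : ℝ in 𝓝[>] 0, h < s₀ - P.a :=
    nhdsWithin_le_nhds (eventually_lt_nhds (by linarith))
  have hkey : ∀ σ : ℝ, σ ^ 2 = 1 → ∀ᶠ h : ℝ in 𝓝[>] 0,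
      -(σ * (L fun t => (bdry ψ t - ζ)⁻¹).im) ≤ -(Real.pi / 32) + Real.pi / 64 := by
    intro σ hσ
    have hσ0 : σ ≠ 0 := by rintro rfl; norm_num at hσ
    filter_upwards [(hlim σ).eventually hcau, (hlim σ).eventually hball, hsmall,
      self_mem_nhdsWithin] with k hk1 hk2 hk3 hk4
    set z := ζ - σ * k * Complex.I * Q.vel s₀ with hz
    have hQz : ∀ s ∈ Icc Q.a Q.b, bdry ψ (Q.τ s) ≠ z := hst.curve_ne h0 hk4 hσ0
    have hQz' : ∀ t ∈ Icc (P.τ P.a) (P.τ b), bdry ψ t ≠ z := fun t ht => by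
      obtain ⟨s, hs, rfl⟩ := Q.surjOn ht
      exact hQz s hs
    have hzΓ : z ∉ Γ := fun hm => by
      rw [← h.range_eq, ← h.loop.1.per.image_Icc Real.two_pi_pos (P.τ P.a)] at hm
      obtain ⟨t, ht, he⟩ := hm
      rcases le_total t (P.τ b) with h1 | h1
      · exact hQz' t ⟨ht.1, h1⟩ he
      · exact hk1.1 t ⟨h1, ht.2⟩ he
    have hzΩ : z ∈ exteriorDomain Γ := by
      rcases h.mem_cases z with h1 | h1 | h1
      · exact (hzΓ h1).elim
      · exact h1
      · exact absurd (Metric.mem_ball'.1 hk2) (not_lt.2 (hr' z h1))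
    have h1 := h.contour_outside htot hzΩ
    have h2 := congrArg Complex.im h1
    rw [Complex.add_im, Q.im_contour hQz', Complex.zero_im] at h2
    have h3 := hst.side h0 hk4 hσ hk3.le (show k ≤ b - s₀ by linarith)
    have h4 := hk1.2 (fun _ => 1) continuousOn_const fun t _ => by simp
    simp only [one_mul] at h4
    have h5 := (Complex.abs_im_le_norm _).trans h4
    rw [Complex.sub_im] at h5
    have h6 : |σ * ((L fun t => (bdry ψ t - z)⁻¹).im - (L fun t => (bdry ψ t - ζ)⁻¹).im)| ≤
        Real.pi / 64 := by
      rw [abs_mul]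
      have : |σ| = 1 := by
        rw [← sq_abs] at hσ
        exact (pow_eq_one_iff_of_nonneg (abs_nonneg σ) two_ne_zero).1 hσ
      rwa [this, one_mul]
    have h7 := abs_le.1 h6
    have h8 : σ * (∫ s in Q.a..Q.b, Q.kernel z s) =
        -(σ * (L fun t => (bdry ψ t - z)⁻¹).im) := by
      rw [eq_neg_of_add_eq_zero_left h2]
      ring
    change σ * (∫ s in Q.a..Q.b, Q.kernel z s) ≤ _ at h3
    rw [h8] at h3
    linarith [h7.1, h7.2]
  have e1 := (hkey 1 (by norm_num)).exists
  have e2 := (hkey (-1) (by norm_num)).exists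
  obtain ⟨-, e1⟩ := e1
  obtain ⟨-, e2⟩ := e2
  linarith

end IsDiniExterior

lemma ekt_one_eq (t : ℝ) : Complex.exp (Complex.I * (t : ℂ)) = ekt 1 t := by
  simp [ekt, mul_comm]

/-- Across a boundary point of exterior angle `lam * π` the directions of short secants turn by
approximately `lam * π`. -/
lemma HasExteriorAngleAt.exists_secant {ψ : ℂ → ℂ} {θ lam : ℝ} (h : HasExteriorAngleAt ψ θ lam)
    {δ : ℝ} (hδ : 0 < δ) : ∃ η > 0, ∀ s, 0 < s → s < η → ∃ x : ℝ, |x - lam * Real.pi| ≤ δ ∧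
      (bdry ψ (θ + s) - bdry ψ θ) / (‖bdry ψ (θ + s) - bdry ψ θ‖ : ℂ) =
        Complex.exp (x * Complex.I) *
          ((bdry ψ (θ - s) - bdry ψ θ) / (‖bdry ψ (θ - s) - bdry ψ θ‖ : ℂ)) := by
  obtain ⟨α, v, hv, hlim⟩ := h
  have hα := hv.hα
  have hθ := hv.hθ
  obtain ⟨η₁, hη₁, h1⟩ := Metric.mem_nhdsWithin_iff.1
    (hv.rightCont.eventually (Metric.ball_mem_nhds (v θ) (half_pos hδ)))
  obtain ⟨η₂, hη₂, h2⟩ := Metric.mem_nhdsWithin_iff.1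
    (hlim.eventually (Metric.ball_mem_nhds _ (half_pos hδ)))
  refine ⟨min (min η₁ η₂) (min (θ - α) (α + 2 * Real.pi - θ)), lt_min (lt_min hη₁ hη₂)
    (lt_min (by linarith) (by linarith)), fun s hs hs' => ?_⟩
  simp only [lt_min_iff] at hs'
  obtain ⟨⟨s1, s2⟩, s3, s4⟩ := hs'
  have a1 : |v (θ + s) - v θ| < δ / 2 := h1 ⟨by
    rw [Metric.mem_ball, Real.dist_eq, add_sub_cancel_left, abs_of_pos hs]; exact s1, by
    change θ ≤ θ + s; linarith⟩
  have a2 : |v (θ - s) - (v θ - lam * Real.pi)| < δ / 2 := h2 ⟨by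
    rw [Metric.mem_ball, Real.dist_eq, sub_sub_cancel_left, abs_neg, abs_of_pos hs]; exact s2, by
    change θ - s < θ; linarith⟩
  refine ⟨v (θ + s) - v (θ - s), ?_, ?_⟩
  · rw [abs_lt] at a1 a2
    rw [abs_le]
    constructor <;> linarith
  · have b1 := hv.branch (θ + s) ⟨by linarith, by linarith⟩ (by linarith)
    have b2 := hv.branch (θ - s) ⟨by linarith, by linarith⟩ (by linarith)
    simp only [ekt_one_eq] at b1 b2
    unfold bdry
    rw [← b1, ← b2]
    unfold ekt
    rw [← Complex.exp_add]
    congr 1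
    push_cast
    ring

lemma exp_im_mul_I {A a b : ℂ} (hb : b ≠ 0) (ha : a ≠ 0) (h : Complex.exp A = a / b) :
    Complex.exp (A.im * Complex.I) * (b / (‖b‖ : ℂ)) = a / (‖a‖ : ℂ) := by
  have hn : Real.exp A.re = ‖a‖ / ‖b‖ := by rw [← Complex.norm_exp, h, norm_div]
  have h1 : Complex.exp A = (Real.exp A.re : ℂ) * Complex.exp (A.im * Complex.I) := by
    rw [Complex.ofReal_exp, ← Complex.exp_add, Complex.re_add_im]
  have ha' : (‖a‖ : ℂ) ≠ 0 := Complex.ofReal_ne_zero.2 (norm_ne_zero_iff.2 ha)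
  have hb' : (‖b‖ : ℂ) ≠ 0 := Complex.ofReal_ne_zero.2 (norm_ne_zero_iff.2 hb)
  rw [h, hn] at h1
  push_cast at h1
  field_simp at h1 ⊢
  rw [h1]

lemma abs_sub_pi_le {Θ x y ε δ : ℝ} {m : ℤ} (hm : Θ = x + m * (2 * Real.pi)) (hε : 0 ≤ ε)
    (h1 : -ε ≤ Θ) (h2 : Θ ≤ 2 * Real.pi + ε) (hx : |x - y| ≤ δ) :
    |Θ - Real.pi| ≤ |y - Real.pi| + 2 * ε + δ := by
  have hpi := Real.pi_pos
  rw [abs_le] at hx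
  rcases lt_trichotomy m 0 with h | rfl | h
  · have : (m : ℝ) ≤ -1 := by exact_mod_cast (by omega : m ≤ -1)
    have h3 : 2 * Real.pi - ε ≤ x := by nlinarith
    have := le_abs_self (y - Real.pi)
    rw [abs_le]
    constructor <;> linarith
  · rw [hm]
    have e1 := le_abs_self (y - Real.pi)
    have e2 := neg_abs_le (y - Real.pi)
    rw [abs_le]
    push_cast
    constructor <;> linarith
  · have : (1 : ℝ) ≤ m := by exact_mod_cast h
    have h3 : x ≤ ε := by nlinarith
    have := neg_abs_le (y - Real.pi)
    rw [abs_le]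
    constructor <;> linarith

lemma abs_add_abs_le_pi {a b Θ ε : ℝ} (ha : |a| ≤ Real.pi + ε) (hb : |b| ≤ Real.pi + ε)
    (hΘ : |a + b - Θ| ≤ ε) : |a| + |b| ≤ Real.pi + |Θ - Real.pi| + 3 * ε := by
  have hpi := Real.pi_pos
  have e1 := le_abs_self (Θ - Real.pi)
  have e2 := neg_abs_le (Θ - Real.pi)
  rw [abs_le] at ha hb hΘ
  rcases abs_cases a with ⟨h1, -⟩ | ⟨h1, -⟩ <;> rcases abs_cases b with ⟨h2, -⟩ | ⟨h2, -⟩ <;>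
    rw [h1, h2] <;> linarith

lemma Piece.norm_contour_sub_conj_le {E : ℝ → ℂ} {p q : ℝ} (P : Piece E p q) (hE : Continuous E)
    {z : ℂ} (hz : ∀ t ∈ Icc p q, E t ≠ z) (n : ℤ) :
    ‖(P.contour fun t => ekt n t * (E t - z)⁻¹) -
      (starRingEnd ℂ) (P.contour fun t => ekt (-n) t * (E t - z)⁻¹)‖ ≤
      2 * ∫ s in P.a..P.b, |P.kernel z s| := by
  have hc : ∀ k : ℤ, ContinuousOn (fun t => ekt k t * (E t - z)⁻¹) (Icc p q) := fun k =>
    (continuous_ekt k).continuousOn.mul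
      ((hE.continuousOn.sub continuousOn_const).inv₀ fun t ht => sub_ne_zero.2 (hz t ht))
  have hi : ∀ k : ℤ, IntervalIntegrable
      (fun s => ekt k (P.τ s) * (E (P.τ s) - z)⁻¹ * P.vel s) volume P.a P.b := fun k =>
    (P.cont_integrand (hc k)).intervalIntegrable_of_Icc P.lt.le
  have hk := P.cont_kernel fun s hs => hz _ (P.mapsTo hs)
  have hconj : ContinuousOn (fun s => (starRingEnd ℂ)
      (ekt (-n) (P.τ s) * (E (P.τ s) - z)⁻¹ * P.vel s)) (Icc P.a P.b) :=
    Complex.continuous_conj.comp_continuousOn (P.cont_integrand (hc (-n)))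
  simp only [contour]
  rw [← intervalIntegral.intervalIntegral_conj, ← intervalIntegral.integral_sub (hi n)
    (hconj.intervalIntegrable_of_Icc P.lt.le), ← intervalIntegral.integral_const_mul]
  refine intervalIntegral.norm_integral_le_of_norm_le P.lt.le
    (ae_of_all _ fun s _ => le_of_eq ?_)
    ((continuousOn_const.mul hk.abs).intervalIntegrable_of_Icc P.lt.le)
  rw [mul_assoc, mul_assoc, map_mul, ekt_neg_eq_conj, neg_neg, ← mul_sub, norm_mul, norm_ekt,
    one_mul, Complex.sub_conj, kernel, norm_mul, Complex.norm_I, mul_one, div_eq_inv_mul,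
    Complex.norm_real, Real.norm_eq_abs, abs_mul, abs_two]

/-- `F` is the `n`-th Faber polynomial, expressed through the exterior parametrization `ψ`. -/
def IsFaber (ψ : ℂ → ℂ) (n : ℕ) (F : Polynomial ℂ) : Prop :=
  Tendsto (fun w => w ^ n - F.eval (ψ w)) (Bornology.cobounded ℂ) (𝓝 0)

lemma IsFaberPoly.isFaber {Γ : Set ℂ} {φ ψ : ℂ → ℂ} {c : ℝ} {n : ℕ} {F : Polynomial ℂ}
    (hF : IsFaberPoly Γ φ n F) (hΓ : IsCompact Γ) (hφ : IsExteriorMap Γ φ c)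
    (hψ : IsExteriorParam Γ φ ψ) : IsFaber ψ n F := by
  unfold IsFaberPoly at hF
  rw [inf_eq_left.2 (le_principal_iff.2 (exteriorDomain_mem_cobounded hΓ))] at hF
  refine (hF.comp (hψ.tendsto_cobounded hΓ hφ)).congr' ?_
  filter_upwards [IsExtMap.eventually_one_lt_norm] with w hw
  simp only [Function.comp_apply]
  rw [(hψ.inv w hw).2]

namespace IsDiniExterior

variable {Γ : Set ℂ} {ψ : ℂ → ℂ} {c : ℝ}

/-- A decomposition of the boundary curve into two short pieces adjacent to the point of parameter
`θ`, and the remaining part, equipped with a contour functional `L`. -/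
structure LocalSplit (ψ : ℂ → ℂ) (θ e₁ e₂ ε : ℝ) where
  P₀ : Piece (bdry ψ) θ e₁
  P₁ : Piece (bdry ψ) e₂ (θ + 2 * Real.pi)
  small₀ : P₀.Small ε
  small₁ : P₁.Small ε
  L : (ℝ → ℂ) → ℂ
  contour : IsContour (bdry ψ) L e₁ e₂
  isRL : IsRL L e₁ e₂
  lt : e₁ < e₂
  near : ∀ᶠ z in 𝓝 (bdry ψ θ), (∀ t ∈ Icc e₁ e₂, bdry ψ t ≠ z) ∧
    ∀ g, ContinuousOn g (Icc e₁ e₂) → (∀ t ∈ Icc e₁ e₂, ‖g t‖ ≤ 1) →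
    ‖L (fun t => g t * (bdry ψ t - z)⁻¹) - L (fun t => g t * (bdry ψ t - bdry ψ θ)⁻¹)‖ ≤ ε

namespace LocalSplit

variable {θ e₁ e₂ ε : ℝ}

lemma full (S : LocalSplit ψ θ e₁ e₂ ε) (hE : Continuous (bdry ψ)) :
    IsContour (bdry ψ) (fun f => S.P₀.contour f + S.L f + S.P₁.contour f) θ
      (θ + 2 * Real.pi) :=
  ((S.P₀.contour_isContour hE).concat S.P₀.param_lt S.lt hE S.contour).concat
    (S.P₀.param_lt.trans S.lt) S.P₁.param_lt hE (S.P₁.contour_isContour hE)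

/-- The angle at the boundary point of parameter `θ`, up to multiples of `2 * π`. -/
def angle (S : LocalSplit ψ θ e₁ e₂ ε) : ℝ :=
  2 * Real.pi - (S.L fun t => (bdry ψ t - bdry ψ θ)⁻¹).im

/-- The angle under which the piece adjacent on the right is seen from `z`. -/
def K₀ (S : LocalSplit ψ θ e₁ e₂ ε) (z : ℂ) : ℝ := ∫ s in S.P₀.a..S.P₀.b, S.P₀.kernel z s

/-- The angle under which the piece adjacent on the left is seen from `z`. -/
def K₁ (S : LocalSplit ψ θ e₁ e₂ ε) (z : ℂ) : ℝ := ∫ s in S.P₁.a..S.P₁.b, S.P₁.kernel z s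

lemma abs_K₀_le (S : LocalSplit ψ θ e₁ e₂ ε) {z : ℂ} (hz : ∀ t, bdry ψ t ≠ z) :
    |S.K₀ z| ≤ Real.pi + ε :=
  (intervalIntegral.abs_integral_le_integral_abs S.P₀.lt.le).trans
    (S.small₀ z fun _ _ => hz _).2

lemma abs_K₁_le (S : LocalSplit ψ θ e₁ e₂ ε) {z : ℂ} (hz : ∀ t, bdry ψ t ≠ z) :
    |S.K₁ z| ≤ Real.pi + ε :=
  (intervalIntegral.abs_integral_le_integral_abs S.P₁.lt.le).trans
    (S.small₁ z fun _ _ => hz _).2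

lemma eventually_add (S : LocalSplit ψ θ e₁ e₂ ε) : ∀ᶠ z in 𝓝 (bdry ψ θ),
    (∀ t, bdry ψ t ≠ z) → |S.K₀ z + S.K₁ z - (S.angle - 2 * Real.pi) -
      (S.P₀.contour (fun t => (bdry ψ t - z)⁻¹) + S.L (fun t => (bdry ψ t - z)⁻¹) +
        S.P₁.contour (fun t => (bdry ψ t - z)⁻¹)).im| ≤ ε := by
  filter_upwards [S.near] with z hz hne
  have h := hz.2 (fun _ => 1) continuousOn_const fun _ _ => by simp
  simp only [one_mul] at h
  have h' := (Complex.abs_im_le_norm _).trans h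
  rw [Complex.add_im, Complex.add_im, S.P₀.im_contour fun t _ => hne t,
    S.P₁.im_contour fun t _ => hne t, angle, K₀, K₁]
  rw [Complex.sub_im, abs_sub_comm] at h'
  refine le_trans (le_of_eq ?_) h'
  congr 1
  ring

lemma angle_le (S : LocalSplit ψ θ e₁ e₂ ε) (h : IsDiniExterior Γ ψ c) :
    S.angle ≤ 2 * Real.pi + 3 * ε := by
  have hmem : bdry ψ θ ∈ closure (IsExtMap.Inside ψ) :=
    h.subset_closure_inside (h.range_eq ▸ mem_range_self θ)
  obtain ⟨z, hz, hin⟩ := mem_closure_iff_nhds.1 hmem _ S.eventually_add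
  have hne : ∀ t, bdry ψ t ≠ z := fun t => hin _ (norm_ekt 1 t).ge
  have h1 := hz hne
  rw [h.map.contour_inside_zero (S.full h.map.continuous_bdry) hin] at h1
  have h2 := abs_le.1 (S.abs_K₀_le hne)
  have h3 := abs_le.1 (S.abs_K₁_le hne)
  have h4 : (2 * Real.pi * Complex.I : ℂ).im = 2 * Real.pi := by simp
  rw [h4, abs_le] at h1
  linarith

lemma le_angle (S : LocalSplit ψ θ e₁ e₂ ε) (h : IsDiniExterior Γ ψ c) :
    -(3 * ε) ≤ S.angle := by
  have hmem : bdry ψ θ ∈ closure (ψ '' {w : ℂ | 1 < ‖w‖}) := by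
    have h1 : ekt 1 θ ∈ closure {w : ℂ | 1 < ‖w‖} := by
      rw [Metric.mem_closure_iff]
      intro δ hδ
      refine ⟨(1 + δ / 2 : ℝ) * ekt 1 θ, ?_, ?_⟩
      · change 1 < ‖_‖
        rw [norm_mul, norm_ekt, mul_one, Complex.norm_real, Real.norm_eq_abs,
          abs_of_pos (by positivity)]
        linarith
      · rw [dist_comm, dist_eq_norm, ← sub_one_mul, norm_mul, norm_ekt, mul_one,
          ← Complex.ofReal_one, ← Complex.ofReal_sub, Complex.norm_real, Real.norm_eq_abs,
          add_sub_cancel_left, abs_of_pos (by positivity)]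
        linarith
    exact ((h.map.cont _ (norm_ekt 1 θ).ge).mono
      fun w (hw : 1 < ‖w‖) => hw.le).mem_closure_image h1
  obtain ⟨z, hz, w, hw, rfl⟩ := mem_closure_iff_nhds.1 hmem _ S.eventually_add
  have hext := h.ext w hw
  have hne : ∀ t, bdry ψ t ≠ ψ w := h.ne_of_notMem hext.1
  have h1 := hz hne
  rw [h.contour_outside (S.full h.map.continuous_bdry) hext, Complex.zero_im, abs_le] at h1
  have h2 := abs_le.1 (S.abs_K₀_le hne)
  have h3 := abs_le.1 (S.abs_K₁_le hne)
  linarith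

/-- The Faber polynomials are bounded near the boundary point of parameter `θ` in terms of
the angle. -/
lemma eventually_norm_faber_le (S : LocalSplit ψ θ e₁ e₂ ε) (h : IsDiniExterior Γ ψ c)
    (hε : 0 < ε) : ∃ N : ℕ, ∀ᶠ z in 𝓝 (bdry ψ θ), z ∈ IsExtMap.Inside ψ →
      ∀ n, N ≤ n → ∀ F, IsFaber ψ n F →
        Real.pi * ‖F.eval z‖ ≤ Real.pi + |S.angle - Real.pi| + 7 * ε := by
  have hE := h.map.continuous_bdry
  have hz' := S.near.self_of_nhds.1
  obtain ⟨r1, r2⟩ := S.isRL (fun t => (bdry ψ t - bdry ψ θ)⁻¹)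
    ((hE.continuousOn.sub continuousOn_const).inv₀ fun t ht => sub_ne_zero.2 (hz' t ht))
  obtain ⟨N, hN⟩ := eventually_atTop.1 ((r1.norm.eventually_le_const (by simpa using hε)).and
    (r2.norm.eventually_le_const (by simpa using hε)))
  refine ⟨N + 1, ?_⟩
  filter_upwards [S.eventually_add, S.near] with z hadd hnear hin n hn F hF
  have hne : ∀ t, bdry ψ t ≠ z := fun t => hin _ (norm_ekt 1 t).ge
  have hk : |S.K₀ z + S.K₁ z - S.angle| ≤ ε := by
    have h1 := hadd hne
    rw [h.map.contour_inside_zero (S.full hE) hin] at h1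
    have h4 : (2 * Real.pi * Complex.I : ℂ).im = 2 * Real.pi := by simp
    rw [h4] at h1
    refine le_trans (le_of_eq ?_) h1
    congr 1
    ring
  have hsum := abs_add_abs_le_pi (S.abs_K₀_le hne) (S.abs_K₁_le hne) hk
  have hs0 := (S.small₀ z fun _ _ => hne _).1
  have hs1 := (S.small₁ z fun _ _ => hne _).1
  have c0 := S.P₀.norm_contour_sub_conj_le hE (fun t _ => hne t) n
  have c1 := S.P₁.norm_contour_sub_conj_le hE (fun t _ => hne t) n
  have hfar : ∀ k : ℤ, ‖S.L (fun t => ekt k t * (bdry ψ t - bdry ψ θ)⁻¹)‖ ≤ ε →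
      ‖S.L (fun t => ekt k t * (bdry ψ t - z)⁻¹)‖ ≤ 2 * ε := fun k hk' => by
    have h1 := hnear.2 (ekt k) (continuous_ekt k).continuousOn fun t _ => (norm_ekt k t).le
    have h2 := norm_le_norm_add_norm_sub' (S.L (fun t => ekt k t * (bdry ψ t - z)⁻¹))
      (S.L (fun t => ekt k t * (bdry ψ t - bdry ψ θ)⁻¹))
    linarith
  have f0 := hfar n (hN n (by omega)).1
  have f1 := hfar (-n) (hN n (by omega)).2
  have j0 := h.map.contour_inside_faber (S.full hE) hin hF
  have j1 := h.map.contour_inside_neg (S.full hE) hin (k := -(n : ℤ)) (by omega)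
  have key : ‖2 * Real.pi * Complex.I * F.eval z‖ ≤
      2 * (∫ s in S.P₀.a..S.P₀.b, |S.P₀.kernel z s|) +
        2 * (∫ s in S.P₁.a..S.P₁.b, |S.P₁.kernel z s|) + 4 * ε := by
    rw [← j0]
    have j2 := congrArg (starRingEnd ℂ) j1
    simp only [map_add, map_zero] at j2
    have e : ∀ a b d a' b' d' : ℂ, a' + b' + d' = 0 →
        a + b + d = (a - a') + (d - d') + (b - b') := fun a b d a' b' d' h0 => by
      linear_combination h0
    rw [e _ _ _ _ _ _ j2]
    have f2 := norm_sub_le (S.L (fun t => ekt n t * (bdry ψ t - z)⁻¹))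
      ((starRingEnd ℂ) (S.L (fun t => ekt (-n) t * (bdry ψ t - z)⁻¹)))
    rw [RCLike.norm_conj] at f2
    refine (norm_add₃_le).trans ?_
    linarith
  have hpi : ‖2 * Real.pi * Complex.I * F.eval z‖ = 2 * (Real.pi * ‖F.eval z‖) := by
    simp [abs_of_pos Real.pi_pos, mul_assoc]
  rw [hpi] at key
  simp only [K₀, K₁] at hsum
  linarith

end LocalSplit

lemma exists_localSplit (h : IsDiniExterior Γ ψ c) {θ lam ε : ℝ}
    (hang : HasExteriorAngleAt ψ θ lam) (hε : 0 < ε) :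
    ∃ e₁ e₂, ∃ S : LocalSplit ψ θ e₁ e₂ ε, ∃ x : ℝ, ∃ m : ℤ,
      |x - lam * Real.pi| ≤ ε ∧ S.angle = x + m * (2 * Real.pi) := by
  have hE := h.map.continuous_bdry
  have hpi := Real.pi_pos
  obtain ⟨η₀, hη₀, H0⟩ := h.loop.exists_small_right θ hε
  obtain ⟨η₁, hη₁, H1⟩ := h.loop.exists_small_left (θ + 2 * Real.pi) hε
  obtain ⟨η₂, hη₂, H2⟩ := hang.exists_secant hε
  obtain ⟨s, hs, hs'⟩ := exists_between (lt_min (lt_min hη₀ hη₁) (lt_min hη₂ hpi))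
  simp only [lt_min_iff] at hs'
  obtain ⟨⟨s0, s1⟩, s2, s3⟩ := hs'
  obtain ⟨P₀, hP₀⟩ := H0 (θ + s) (by linarith) (by linarith)
  obtain ⟨P₁, hP₁⟩ := H1 (θ - s + 2 * Real.pi) (by linarith) (by linarith)
  have hlt : θ + s < θ - s + 2 * Real.pi := by linarith
  obtain ⟨x, hx, hsec⟩ := H2 s hs s2
  obtain ⟨L, hL, hRL⟩ := h.loop.exists_contour_isRL h.map.negMoments hlt
  have hne : ∀ t ∈ Icc (θ + s) (θ - s + 2 * Real.pi), bdry ψ t ≠ bdry ψ θ := fun t ht he => by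
    have := h.loop.1.injOn (p := θ) (q := θ - s + 2 * Real.pi) (by linarith)
      ⟨by linarith [ht.1], ht.2⟩ ⟨le_rfl, by linarith⟩ he
    linarith [ht.1]
  refine ⟨_, _, ⟨P₀, P₁, hP₀, hP₁, L, hL, hRL, hlt, hL.eventually_cauchy hE hne hε⟩, x, ?_⟩
  have hexp := hL.exp _ hne
  rw [IsExtMap.periodic_bdry] at hexp
  have na : bdry ψ (θ - s) - bdry ψ θ ≠ 0 := by
    rw [← IsExtMap.periodic_bdry ψ (θ - s)]
    exact sub_ne_zero.2 (hne _ ⟨hlt.le, le_rfl⟩)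
  have nb : bdry ψ (θ + s) - bdry ψ θ ≠ 0 := sub_ne_zero.2 (hne _ ⟨le_rfl, hlt.le⟩)
  have hdir := exp_im_mul_I nb na hexp
  set A := (L fun t => (bdry ψ t - bdry ψ θ)⁻¹).im with hA
  rw [hsec, ← mul_assoc, ← Complex.exp_add] at hdir
  have hna : (bdry ψ (θ - s) - bdry ψ θ) / (‖bdry ψ (θ - s) - bdry ψ θ‖ : ℂ) ≠ 0 :=
    div_ne_zero na (Complex.ofReal_ne_zero.2 (norm_ne_zero_iff.2 na))
  rw [mul_eq_right₀ hna, Complex.exp_eq_one_iff] at hdir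
  obtain ⟨m, hm⟩ := hdir
  refine ⟨1 - m, hx, ?_⟩
  have hm' : A + x = m * (2 * Real.pi) := by
    have : ((A + x : ℝ) : ℂ) * Complex.I = ((m * (2 * Real.pi) : ℝ) : ℂ) * Complex.I := by
      push_cast
      rw [add_mul, hm]
      ring
    exact_mod_cast mul_right_cancel₀ Complex.I_ne_zero this
  change 2 * Real.pi - A = _
  push_cast
  linarith

/-- Local uniform asymptotic bound for the Faber polynomials on the curve. -/
lemma exists_local_bound (h : IsDiniExterior Γ ψ c) {θ lam M ε : ℝ}
    (hang : HasExteriorAngleAt ψ θ lam) (hlam : max lam (2 - lam) ≤ M) (hε : 0 < ε) :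
    ∃ N : ℕ, ∀ᶠ z in 𝓝 (bdry ψ θ), z ∈ Γ → ∀ n, N ≤ n → ∀ F, IsFaber ψ n F →
      ‖F.eval z‖ ≤ M + ε := by
  have hpi := Real.pi_gt_three
  have hδ : 0 < ε / 7 := by positivity
  obtain ⟨e₁, e₂, S, x, m, hx, hm⟩ := h.exists_localSplit hang hδ
  obtain ⟨N, hN⟩ := S.eventually_norm_faber_le h hδ
  have hang := abs_sub_pi_le hm (by positivity) (S.le_angle h) (S.angle_le h) hx
  have hM : |lam * Real.pi - Real.pi| ≤ (M - 1) * Real.pi := by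
    have := max_le_iff.1 hlam
    rw [abs_le]
    constructor <;> nlinarith
  refine ⟨N, ?_⟩
  filter_upwards [eventually_eventually_nhds.2 hN] with z hz hzΓ n hn F hF
  have hfr := mem_closure_iff_frequently.1 (h.subset_closure_inside hzΓ)
  have hclosed : IsClosed {z | ‖F.eval z‖ ≤ M + ε} :=
    isClosed_le F.continuous.norm continuous_const
  refine hclosed.closure_subset (mem_closure_iff_frequently.2 ((hfr.and_eventually hz).mono ?_))
  rintro y ⟨hy, hy'⟩
  have h1 := hy' hy n hn F hF
  change ‖F.eval y‖ ≤ M + ε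
  nlinarith

end IsDiniExterior

lemma supNorm_nonneg (Γ : Set ℂ) (f : ℂ → ℂ) : 0 ≤ supNorm Γ f :=
  Real.sSup_nonneg (by
    rintro _ ⟨z, -, rfl⟩
    exact norm_nonneg _)

lemma supNorm_le {Γ : Set ℂ} {f : ℂ → ℂ} {C : ℝ} (hC : 0 ≤ C) (h : ∀ z ∈ Γ, ‖f z‖ ≤ C) :
    supNorm Γ f ≤ C :=
  Real.sSup_le (by
    rintro _ ⟨z, hz, rfl⟩
    exact h z hz) hC

/-- Local bounds for the Faber polynomials on the curve yield a global one. -/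
lemma IsDiniExterior.eventually_supNorm_le {Γ : Set ℂ} {ψ : ℂ → ℂ} {c M ε : ℝ}
    (h : IsDiniExterior Γ ψ c)
    (hang : ∀ z ∈ Γ, ∃ θ lam, bdry ψ θ = z ∧ HasExteriorAngleAt ψ θ lam ∧ max lam (2 - lam) ≤ M)
    (hε : 0 < ε)
    {F : ℕ → Polynomial ℂ} (hF : ∀ n, IsFaber ψ n (F n)) :
    ∀ᶠ n in atTop, supNorm Γ (fun z => (F n).eval z) ≤ M + ε := by
  have hM : 0 ≤ M + ε := by
    obtain ⟨-, lam, -, -, h1⟩ := hang _ (h.range_eq ▸ mem_range_self (0 : ℝ))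
    have := max_le_iff.1 h1
    linarith
  obtain ⟨N, hN⟩ : ∃ N, ∀ z ∈ Γ, ∀ n, N ≤ n → ‖(F n).eval z‖ ≤ M + ε := by
    refine h.compact.induction_on (p := fun s => ∃ N, ∀ z ∈ s, ∀ n, N ≤ n →
      ‖(F n).eval z‖ ≤ M + ε) ⟨0, by simp⟩ ?_ ?_ ?_
    · rintro s t hst ⟨N, hN⟩
      exact ⟨N, fun z hz => hN z (hst hz)⟩
    · rintro s t ⟨N, hN⟩ ⟨N', hN'⟩
      refine ⟨max N N', ?_⟩
      rintro z (hz | hz) n hn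
      · exact hN z hz n ((le_max_left _ _).trans hn)
      · exact hN' z hz n ((le_max_right _ _).trans hn)
    · intro z₀ hz₀
      obtain ⟨θ, lam, rfl, hlam, hle⟩ := hang z₀ hz₀
      obtain ⟨N, hN⟩ := h.exists_local_bound hlam hle hε
      exact ⟨_, eventually_nhdsWithin_iff.2 hN, N, fun z hz n hn => hz n hn _ (hF n)⟩
  filter_upwards [eventually_ge_atTop N] with n hn
  exact supNorm_le hM fun z hz => hN z hz n hn

/-- If `Γ` is a piecewise Dini-smooth Jordan curve with `l ≥ 1` corners
`z_k = ψ(e^{iθ_k})` of exterior angles `λ_k π` (and exterior angle `π` at every other point),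
and `Λ_k = max {λ_k, 2 − λ_k}`, then `limsup_{n→∞} ‖F_n‖_Γ ≤ max_k Λ_k`, where `F_n` is the
`n`-th Faber polynomial of `Γ`. -/
theorem faber_limsup_le_maxAngle
    (Γ : Set ℂ) (φ ψ : ℂ → ℂ) (c : ℝ) (l : ℕ) (hl : 0 < l)
    (θk : Fin l → ℝ) (zk : Fin l → ℂ) (lam : Fin l → ℝ) (F : ℕ → Polynomial ℂ)
    (hΓ : IsPiecewiseDiniSmoothJordanCurve Γ)
    (hφ : IsExteriorMap Γ φ c)
    (hψ : IsExteriorParam Γ φ ψ)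
    (hθ : ∀ k, θk k ∈ Set.Ico (0 : ℝ) (2 * Real.pi))
    (hθinj : Function.Injective θk)
    (hzk : ∀ k, zk k = ψ (Complex.exp (Complex.I * (θk k : ℂ))))
    (hlam : ∀ k, lam k ∈ Set.Icc (0 : ℝ) 2)
    (hangle : ∀ k, HasExteriorAngleAt ψ (θk k) (lam k))
    (hflat : ∀ θ : ℝ, θ ∉ cornerSet θk → HasExteriorAngleAt ψ θ 1)
    (hF : ∀ n : ℕ, IsFaberPoly Γ φ n (F n)) :
    Filter.limsup (fun n : ℕ => supNorm Γ (fun z => (F n).eval z)) Filter.atTop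
      ≤ ⨆ k : Fin l, max (lam k) (2 - lam k) := by
  have h := hΓ.isDiniExterior hφ hψ
  refine le_of_forall_pos_le_add fun ε hε => ?_
  refine limsup_le_of_le (isCoboundedUnder_le_of_le atTop fun n => supNorm_nonneg _ _)
    (h.eventually_supNorm_le (fun z hz => ?_) hε fun n => (hF n).isFaber h.compact hφ hψ)
  have hle : ∀ k, max (lam k) (2 - lam k) ≤ ⨆ k : Fin l, max (lam k) (2 - lam k) :=
    le_ciSup (finite_range _).bddAbove
  rw [← h.range_eq] at hz
  obtain ⟨θ, rfl⟩ := hz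
  by_cases hmem : θ ∈ cornerSet θk
  · obtain ⟨k, j, rfl⟩ := hmem
    exact ⟨θk k, lam k, ((IsExtMap.periodic_bdry ψ).int_mul j (θk k)).symm, hangle k, hle k⟩
  · refine ⟨θ, 1, rfl, hflat θ hmem, le_trans ?_ (hle ⟨0, hl⟩)⟩
    rcases le_total (lam ⟨0, hl⟩) 1 with h1 | h1
    · exact le_max_of_le_right (max_le (by linarith) (by linarith))
    · exact le_max_of_le_left (max_le h1 (by linarith))

end
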